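/- Boundary quantitative strong maximum principle in half-balls. For every integer n ≥ 2, reals 0 < λ ≤ Λ, exponents q > n and p with n ≤ p ≤ q, d₀ ∈ (0,1/4], and K > 0, there exist constants ε > 0, c > 0, C > 0 such that the following holds. Let b, f : B₂⁺ → ℝ be continuous with b ≥ 0 and ‖b‖_{L^q(B₂⁺)} ≤ K, and let u be a C² function on B₂⁺ with u ≥ 0 and L⁻[u] ≤ f in B₂⁺. Then c·(∫_{B_{3/2}⁺} (f⁻(x))^ε dx)^{1/ε} ≤ inf_{x ∈ B₁⁺} u(x)/x_n + C·‖f⁺‖_{L^{p,q}(B₂⁺)}, the integral being a Lebesgue integral with values in [0,+∞]. -/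

import Mathlib

open MeasureTheory
open scoped ENNReal

/-- The Pucci minimal extremal operator `𝓜⁻(M)` with ellipticity constants `lam ≤ Lam`:
the infimum of `tr(A*M)` over symmetric matrices `A` with `lam•I ≤ A ≤ Lam•I`. -/
noncomputable def pucciMinus (n : ℕ) (lam Lam : ℝ) (M : Matrix (Fin n) (Fin n) ℝ) : ℝ :=
  sInf { t : ℝ | ∃ A : Matrix (Fin n) (Fin n) ℝ, A.IsSymm ∧
    (A - lam • (1 : Matrix (Fin n) (Fin n) ℝ)).PosSemidef ∧
    (Lam • (1 : Matrix (Fin n) (Fin n) ℝ) - A).PosSemidef ∧ t = (A * M).trace }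

/-- The Pucci maximal extremal operator `𝓜⁺(M)`. -/
noncomputable def pucciPlus (n : ℕ) (lam Lam : ℝ) (M : Matrix (Fin n) (Fin n) ℝ) : ℝ :=
  sSup { t : ℝ | ∃ A : Matrix (Fin n) (Fin n) ℝ, A.IsSymm ∧
    (A - lam • (1 : Matrix (Fin n) (Fin n) ℝ)).PosSemidef ∧
    (Lam • (1 : Matrix (Fin n) (Fin n) ℝ) - A).PosSemidef ∧ t = (A * M).trace }

/-- The Hessian matrix `D²u(x)` of `u` at `x`. -/
noncomputable def hess (n : ℕ) (u : EuclideanSpace ℝ (Fin n) → ℝ)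
    (x : EuclideanSpace ℝ (Fin n)) : Matrix (Fin n) (Fin n) ℝ :=
  fun i j => fderiv ℝ (fun y => fderiv ℝ u y (EuclideanSpace.single j (1 : ℝ))) x
    (EuclideanSpace.single i (1 : ℝ))

/-- The euclidean norm `|Du(x)|` of the gradient of `u` at `x`. -/
noncomputable def gradNorm (n : ℕ) (u : EuclideanSpace ℝ (Fin n) → ℝ)
    (x : EuclideanSpace ℝ (Fin n)) : ℝ := ‖fderiv ℝ u x‖

/-- The `L^p` norm `(∫_E |g|^p)^(1/p)`, as a Lebesgue integral valued in `[0,∞]`. -/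
noncomputable def LpNormE (n : ℕ) (p : ℝ) (g : EuclideanSpace ℝ (Fin n) → ℝ)
    (E : Set (EuclideanSpace ℝ (Fin n))) : ℝ≥0∞ :=
  (∫⁻ x in E, ENNReal.ofReal (|g x| ^ p)) ^ (1 / p)

/-- The last (`n`-th) coordinate `x_n` of a point of `ℝⁿ`. -/
def lastC (n : ℕ) (hn : 1 ≤ n) (x : EuclideanSpace ℝ (Fin n)) : ℝ := x ⟨n - 1, by omega⟩

/-- The open half-ball `B_R⁺ = {|x| < R, x_n > 0}`. -/
def halfBall (n : ℕ) (hn : 1 ≤ n) (R : ℝ) : Set (EuclideanSpace ℝ (Fin n)) :=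
  {x | ‖x‖ < R ∧ 0 < lastC n hn x}

/-- The flat boundary part `B_R⁰ = {|x| ≤ R, x_n = 0}`. -/
def flatB (n : ℕ) (hn : 1 ≤ n) (R : ℝ) : Set (EuclideanSpace ℝ (Fin n)) :=
  {x | ‖x‖ ≤ R ∧ lastC n hn x = 0}

/-- The norm `‖g‖_{L^{p,q}(B_R⁺)} = ‖g‖_{L^p(B_R⁺)} + ‖g‖_{L^q(B_R⁺ ∩ {x_n < d0})}`. -/
noncomputable def LpqNormHB (n : ℕ) (hn : 1 ≤ n) (p q d0 R : ℝ)
    (g : EuclideanSpace ℝ (Fin n) → ℝ) : ℝ≥0∞ :=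
  LpNormE n p g (halfBall n hn R) +
    LpNormE n q g {x ∈ halfBall n hn R | lastC n hn x < d0}

/-- The open cube `Q_ρ` of side `ρ` centered at `(0,…,0,ρ/2)`. -/
def cubeQ (n : ℕ) (hn : 1 ≤ n) (ρ : ℝ) : Set (EuclideanSpace ℝ (Fin n)) :=
  {x | (∀ i : Fin n, i.1 ≠ n - 1 → |x i| < ρ / 2) ∧ 0 < lastC n hn x ∧ lastC n hn x < ρ}

/-- The norm `‖g‖_{L^{p,q}(Q₂)} = ‖g‖_{L^p(Q₂)} + ‖g‖_{L^q(Q₂ ∩ {x_n < d0})}`. -/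
noncomputable def LpqNormQ (n : ℕ) (hn : 1 ≤ n) (p q d0 : ℝ)
    (g : EuclideanSpace ℝ (Fin n) → ℝ) : ℝ≥0∞ :=
  LpNormE n p g (cubeQ n hn 2) +
    LpNormE n q g {x ∈ cubeQ n hn 2 | lastC n hn x < d0}

/-!
Suppose `u x < I * x_n` at some point of `B₁⁺`, and let `N` measure `f⁺`.

Where the graph of `u` can be touched from below by a paraboloid of opening `a`, the Hessian of `u`
is at least `-2a`, so the equation bounds `-f` by a multiple of `a` as long as the drift and the
slope are under control. If `u ≤ T` somewhere in a ball of radius `ρ`, some point there is touched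
with opening of order `T / ρ²`. Lifting a touching paraboloid by a multiple of a radial barrier, the
area formula for `x ↦ Du(x)` on contact sets (the idea behind the Aleksandrov–Bakelman–Pucci
estimate) shows that points touched with a larger opening fill a fixed fraction of every ball near a
touched point. A covering argument turns this into geometric decay in `a` of the measure of the
points that are not touched, hence into a bound for `∫ (f⁻)^ε` on the ball, proportional to
`T^ε * ρ^(n - 2ε)`.

The same comparison with barriers propagates lower bounds of `u` from a small ball to the unit scale
through a chain of balls, and a Hopf-type iteration carries them to the flat boundary: if `u ≥ T` on
a ball of radius `ρ` then `u ≥ (c * ρ^M * T - C * N) * x_n` on `B₁⁺`. Consequently `u` is at most a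
multiple of `(I + N) / ρ^M` somewhere in every ball of radius `ρ` comparable to the distance from
the flat boundary. With `T` of this size the local bounds carry negative powers of `ρ`
proportional to `ε`, which for small `ε` are dominated by the integrable weight `x_n^(-1/2)`, so
that a Vitali covering sums them over `B_{3/2}⁺`.
-/

open Filter Topology

namespace Pucci

/-! ### Elliptic coefficients -/

theorem trace_mul_nonneg {ι : Type*} [Fintype ι] {A M : Matrix ι ι ℝ}
    (hA : A.PosSemidef) (hM : M.PosSemidef) : 0 ≤ (A * M).trace := by
  classical
  open scoped MatrixOrder in
  obtain ⟨B, rfl⟩ := CStarAlgebra.nonneg_iff_eq_star_mul_self.mp hA.nonneg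
  rw [Matrix.star_eq_conjTranspose, Matrix.mul_assoc, Matrix.trace_mul_comm]
  exact (hM.mul_mul_conjTranspose_same B).trace_nonneg

theorem abs_det_le_trace_pow {V : Type*} [NormedAddCommGroup V] [InnerProductSpace ℝ V]
    [FiniteDimensional ℝ V] {T : V →ₗ[ℝ] V} (hT : T.IsPositive) :
    |LinearMap.det T| ≤ LinearMap.trace ℝ V T ^ Module.finrank ℝ V := by
  have h0 := hT.nonneg_eigenvalues rfl
  rw [hT.isSymmetric.det_eq_prod_eigenvalues rfl, hT.isSymmetric.trace_eq_sum_eigenvalues rfl]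
  simp only [RCLike.ofReal_real_eq_id, id_eq]
  rw [abs_of_nonneg (Finset.prod_nonneg fun i _ => h0 i)]
  calc ∏ i, hT.isSymmetric.eigenvalues rfl i
      ≤ ∏ _i : Fin (Module.finrank ℝ V), ∑ j, hT.isSymmetric.eigenvalues rfl j :=
        Finset.prod_le_prod (fun i _ => h0 i) fun i _ =>
          Finset.single_le_sum (fun j _ => h0 j) (Finset.mem_univ i)
    _ = _ := by simp

/-- The Euclidean space `ℝⁿ`. -/
abbrev E (n : ℕ) := EuclideanSpace ℝ (Fin n)

variable {n : ℕ} {lam Lam : ℝ}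

/-- The coefficient matrices competing in the definition of the Pucci operators. -/
def IsElliptic (lam Lam : ℝ) (A : Matrix (Fin n) (Fin n) ℝ) : Prop :=
  A.IsSymm ∧ (A - lam • (1 : Matrix (Fin n) (Fin n) ℝ)).PosSemidef ∧
    (Lam • (1 : Matrix (Fin n) (Fin n) ℝ) - A).PosSemidef

/-- The matrix, in the standard basis, of an operator on `ℝⁿ`. -/
noncomputable abbrev matrixOf (T : E n →L[ℝ] E n) : Matrix (Fin n) (Fin n) ℝ :=
  (Matrix.toEuclideanCLM (n := Fin n) (𝕜 := ℝ)).symm T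

/-- The second-order operator `tr(A D²)`, as a function of the Hessian operator. -/
noncomputable def traceMul (A : Matrix (Fin n) (Fin n) ℝ) : (E n →L[ℝ] E n) →ₗ[ℝ] ℝ where
  toFun T := (A * matrixOf T).trace
  map_add' S T := by simp [mul_add]
  map_smul' c T := by simp

theorem matrixOf_apply (T : E n →L[ℝ] E n) (i j : Fin n) :
    matrixOf T i j = T (EuclideanSpace.single j 1) i := by
  obtain ⟨M, rfl⟩ : ∃ M, Matrix.toEuclideanCLM (n := Fin n) (𝕜 := ℝ) M = T :=
    ⟨_, StarAlgEquiv.apply_symm_apply _ T⟩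
  rw [matrixOf, StarAlgEquiv.symm_apply_apply, Matrix.ofLp_toEuclideanCLM]
  simp

theorem matrixOf_posSemidef_iff {T : E n →L[ℝ] E n} :
    (matrixOf T).PosSemidef ↔ T.IsPositive := by
  rw [← Matrix.isPositive_toEuclideanLin_iff, ← Matrix.coe_toEuclideanCLM_eq_toEuclideanLin,
    StarAlgEquiv.apply_symm_apply, ContinuousLinearMap.isPositive_toLinearMap_iff]

theorem trace_matrixOf (T : E n →L[ℝ] E n) :
    (matrixOf T).trace = LinearMap.trace ℝ (E n) T := by
  rw [LinearMap.trace_eq_sum_inner (T : E n →ₗ[ℝ] E n) (EuclideanSpace.basisFun (Fin n) ℝ)]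
  simp [Matrix.trace, matrixOf_apply, EuclideanSpace.inner_single_left]

namespace IsElliptic

theorem smul_one (h : lam ≤ Lam) :
    IsElliptic lam Lam (lam • (1 : Matrix (Fin n) (Fin n) ℝ)) := by
  refine ⟨by simp [Matrix.IsSymm], ?_, ?_⟩
  · rw [sub_self]
    exact Matrix.PosSemidef.zero
  · rw [← sub_smul]
    exact Matrix.PosSemidef.one.smul (by linarith)

variable {A : Matrix (Fin n) (Fin n) ℝ} {T : E n →L[ℝ] E n}

theorem mul_trace_le (hA : IsElliptic lam Lam A) (hT : T.IsPositive) :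
    lam * LinearMap.trace ℝ (E n) T ≤ traceMul A T := by
  have h := trace_mul_nonneg hA.2.1 (matrixOf_posSemidef_iff.2 hT)
  rw [sub_mul, Matrix.trace_sub, smul_mul_assoc, one_mul, Matrix.trace_smul,
    trace_matrixOf, smul_eq_mul] at h
  exact sub_nonneg.1 h

theorem le_mul_trace (hA : IsElliptic lam Lam A) (hT : T.IsPositive) :
    traceMul A T ≤ Lam * LinearMap.trace ℝ (E n) T := by
  have h := trace_mul_nonneg hA.2.2 (matrixOf_posSemidef_iff.2 hT)
  rw [sub_mul, Matrix.trace_sub, smul_mul_assoc, one_mul, Matrix.trace_smul,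
    trace_matrixOf, smul_eq_mul] at h
  exact sub_nonneg.1 h

theorem traceMul_one_le (hA : IsElliptic lam Lam A) : traceMul A 1 ≤ Lam * n := by
  simpa using hA.le_mul_trace ContinuousLinearMap.isPositive_one

theorem mul_norm_sq_le_traceMul_rankOne (hA : IsElliptic lam Lam A) (v : E n) :
    lam * ‖v‖ ^ 2 ≤ traceMul A (InnerProductSpace.rankOne ℝ v v) := by
  have h := hA.mul_trace_le (InnerProductSpace.isPositive_rankOne_self (𝕜 := ℝ) v)
  rwa [InnerProductSpace.trace_rankOne, real_inner_self_eq_norm_sq] at h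

end IsElliptic

theorem mul_trace_sub_le_of_pucciMinus_le (h : lam ≤ Lam) {S T : E n →L[ℝ] E n} {t s : ℝ}
    (hST : (S - T).IsPositive) (hS : pucciMinus n lam Lam (matrixOf S) ≤ t)
    (hT : ∀ A, IsElliptic lam Lam A → -s ≤ traceMul A T) :
    lam * LinearMap.trace ℝ (E n) (S - T) ≤ t + s := by
  apply le_of_forall_pos_le_add
  intro ε hε
  obtain ⟨A₀, hA₀⟩ : ∃ A : Matrix (Fin n) (Fin n) ℝ, IsElliptic lam Lam A :=
    ⟨_, IsElliptic.smul_one h⟩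
  obtain ⟨_, ⟨A, h1, h2, h3, rfl⟩, hlt⟩ := exists_lt_of_csInf_lt
    (by exact ⟨_, A₀, hA₀.1, hA₀.2.1, hA₀.2.2, rfl⟩)
    (show pucciMinus n lam Lam (matrixOf S) < t + ε by linarith)
  have hA : IsElliptic lam Lam A := ⟨h1, h2, h3⟩
  have hS' : traceMul A S < t + ε := hlt
  refine (hA.mul_trace_le hST).trans ?_
  rw [map_sub]
  linarith [hT A hA]

theorem neg_mul_le_pucciMinus (h0 : 0 ≤ lam) (h : lam ≤ Lam) {T : E n →L[ℝ] E n} {a : ℝ}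
    (ha : 0 ≤ a) (hT : (T + a • 1).IsPositive) :
    -(a * Lam * n) ≤ pucciMinus n lam Lam (matrixOf T) := by
  obtain ⟨A₀, hA₀⟩ : ∃ A : Matrix (Fin n) (Fin n) ℝ, IsElliptic lam Lam A :=
    ⟨_, IsElliptic.smul_one h⟩
  refine le_csInf (by exact ⟨_, A₀, hA₀.1, hA₀.2.1, hA₀.2.2, rfl⟩) ?_
  rintro _ ⟨A, h1, h2, h3, rfl⟩
  have hA : IsElliptic lam Lam A := ⟨h1, h2, h3⟩
  have hsum : 0 ≤ traceMul A (T + a • 1) :=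
    (mul_nonneg h0 hT.toLinearMap.trace_nonneg).trans (hA.mul_trace_le hT)
  rw [map_add, map_smul, smul_eq_mul] at hsum
  have hone := mul_le_mul_of_nonneg_left hA.traceMul_one_le ha
  calc -(a * Lam * n) ≤ traceMul A T := by linarith
    _ = (A * matrixOf T).trace := rfl

/-! ### Gradients and Hessians -/

section Hilbert

variable {V : Type*} [NormedAddCommGroup V] [InnerProductSpace ℝ V] [CompleteSpace V]

/-- `w` is twice differentiable on `Ω`, with gradient `g` and Hessian operator `H`. Carrying the
derivatives along explicitly lets barriers be added and rescaled by rewriting. -/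
structure HasHessianOn (w : V → ℝ) (g : V → V) (H : V → V →L[ℝ] V) (Ω : Set V) : Prop where
  hasGradientAt : ∀ x ∈ Ω, HasGradientAt w (g x) x
  hasFDerivAt : ∀ x ∈ Ω, HasFDerivAt g (H x) x

namespace HasHessianOn

variable {w w₁ w₂ : V → ℝ} {g g₁ g₂ : V → V} {H H₁ H₂ : V → V →L[ℝ] V} {Ω U : Set V}

theorem continuousOn (h : HasHessianOn w g H Ω) : ContinuousOn w Ω := fun x hx =>
  (h.hasGradientAt x hx).continuousAt.continuousWithinAt

theorem continuousOn_gradient (h : HasHessianOn w g H Ω) : ContinuousOn g Ω := fun x hx =>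
  (h.hasFDerivAt x hx).continuousAt.continuousWithinAt

theorem add (h₁ : HasHessianOn w₁ g₁ H₁ Ω) (h₂ : HasHessianOn w₂ g₂ H₂ Ω) :
    HasHessianOn (w₁ + w₂) (g₁ + g₂) (H₁ + H₂) Ω where
  hasGradientAt x hx := by
    rw [hasGradientAt_iff_hasFDerivAt, Pi.add_apply, map_add]
    exact (h₁.hasGradientAt x hx).hasFDerivAt.add (h₂.hasGradientAt x hx).hasFDerivAt
  hasFDerivAt x hx := (h₁.hasFDerivAt x hx).add (h₂.hasFDerivAt x hx)

theorem const_smul (h : HasHessianOn w g H Ω) (c : ℝ) :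
    HasHessianOn (c • w) (c • g) (c • H) Ω where
  hasGradientAt x hx := by
    rw [hasGradientAt_iff_hasFDerivAt, Pi.smul_apply, map_smul]
    exact (h.hasGradientAt x hx).hasFDerivAt.const_smul c
  hasFDerivAt x hx := (h.hasFDerivAt x hx).const_smul c

theorem sub (h₁ : HasHessianOn w₁ g₁ H₁ Ω) (h₂ : HasHessianOn w₂ g₂ H₂ Ω) :
    HasHessianOn (w₁ - w₂) (g₁ - g₂) (H₁ - H₂) Ω := by
  simpa [sub_eq_add_neg] using h₁.add (h₂.const_smul (-1))

theorem isSymmetric (h : HasHessianOn w g H Ω) (hΩ : IsOpen Ω) {x : V} (hx : x ∈ Ω) :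
    (H x : V →ₗ[ℝ] V).IsSymmetric := by
  intro v z
  have hg : ∀ᶠ y in 𝓝 x, HasFDerivAt w (InnerProductSpace.toDual ℝ V (g y)) y := by
    filter_upwards [hΩ.mem_nhds hx] with y hy using (h.hasGradientAt y hy).hasFDerivAt
  have hd := second_derivative_symmetric_of_eventually hg
    ((innerSL ℝ : V →L[ℝ] V →L[ℝ] ℝ).hasFDerivAt.comp x (h.hasFDerivAt x hx)) v z
  change inner ℝ (H x v) z = inner ℝ (H x z) v at hd
  exact hd.trans (real_inner_comm _ _)

theorem affine (c : ℝ) (p x₀ : V) (Ω : Set V) :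
    HasHessianOn (fun x => c + inner ℝ p (x - x₀)) (fun _ => p) 0 Ω where
  hasGradientAt x _ := by
    rw [hasGradientAt_iff_hasFDerivAt]
    exact ((innerSL ℝ p).hasFDerivAt.comp x ((hasFDerivAt_id x).sub_const x₀)).const_add c
  hasFDerivAt x _ := hasFDerivAt_const p x

theorem of_contDiffOn {u : V → ℝ} (hΩ : IsOpen Ω) (hu : ContDiffOn ℝ 2 u Ω) :
    HasHessianOn u (gradient u) (fderiv ℝ (gradient u)) Ω where
  hasGradientAt x hx :=
    ((hu.contDiffAt (hΩ.mem_nhds hx)).differentiableAt (by norm_num)).hasGradientAt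
  hasFDerivAt x hx := by
    have hd : DifferentiableAt ℝ (fderiv ℝ u) x :=
      ((hu.contDiffAt (hΩ.mem_nhds hx)).fderiv_right (m := 1) (by norm_num)).differentiableAt
        (by norm_num)
    exact ((InnerProductSpace.toDual ℝ V).symm.toContinuousLinearEquiv.differentiableAt.comp x
      hd).hasFDerivAt

end HasHessianOn

theorem deriv_deriv_nonneg_of_isLocalMin {φ : ℝ → ℝ} {t : ℝ} (hmin : IsLocalMin φ t)
    (hφ : ContinuousAt φ t) : 0 ≤ deriv (deriv φ) t := by
  by_contra! hneg
  have hmax := isLocalMax_of_deriv_deriv_neg hneg hmin.deriv_eq_zero hφ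
  have hconst : φ =ᶠ[𝓝 t] fun _ => φ t := by
    filter_upwards [hmin, hmax] with s h1 h2 using le_antisymm h2 h1
  rw [hconst.deriv.deriv_eq] at hneg
  simp at hneg

theorem HasHessianOn.isPositive_of_isMinOn {w : V → ℝ} {g : V → V} {H : V → V →L[ℝ] V}
    {Ω : Set V} (h : HasHessianOn w g H Ω) (hΩ : IsOpen Ω) {x : V} (hx : x ∈ Ω)
    (hmin : IsMinOn w Ω x) : (H x).IsPositive := by
  refine ContinuousLinearMap.isPositive_def.2 ⟨h.isSymmetric hΩ hx, fun v => ?_⟩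
  set φ : ℝ → ℝ := fun t => w (x + t • v)
  have hline : ∀ t : ℝ, HasDerivAt (fun t : ℝ => x + t • v) v t := fun t => by
    simpa using ((hasDerivAt_id t).smul_const v).const_add x
  have hmem : ∀ᶠ t : ℝ in 𝓝 0, x + t • v ∈ Ω :=
    (hline 0).continuousAt.eventually (hΩ.mem_nhds (by simpa using hx))
  have hφ' : ∀ t : ℝ, x + t • v ∈ Ω → HasDerivAt φ (inner ℝ (g (x + t • v)) v) t := fun t ht => by
    exact (h.hasGradientAt _ ht).hasFDerivAt.comp_hasDerivAt t (hline t)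
  have hφ'' : HasDerivAt (fun t : ℝ => inner ℝ (g (x + t • v)) v) (inner ℝ (H x v) v) 0 := by
    have hg : HasFDerivAt g (H x) (x + (0 : ℝ) • v) := by simpa using h.hasFDerivAt x hx
    simpa using (hg.comp_hasDerivAt (0 : ℝ) (hline 0)).inner ℝ (hasDerivAt_const (0 : ℝ) v)
  have hderiv : deriv φ =ᶠ[𝓝 0] fun t => inner ℝ (g (x + t • v)) v := by
    filter_upwards [hmem] with t ht using (hφ' t ht).deriv
  have hloc : IsLocalMin φ 0 := by
    filter_upwards [hmem] with t ht
    simpa [φ] using hmin ht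
  have := deriv_deriv_nonneg_of_isLocalMin hloc (hφ' 0 (by simpa using hx)).continuousAt
  rwa [hderiv.deriv_eq, hφ''.deriv] at this

end Hilbert

theorem hess_eq_matrixOf {u : E n → ℝ} {Ω : Set (E n)} (hΩ : IsOpen Ω) (hu : ContDiffOn ℝ 2 u Ω)
    {x : E n} (hx : x ∈ Ω) : hess n u x = matrixOf (fderiv ℝ (gradient u) x) := by
  have h := HasHessianOn.of_contDiffOn hΩ hu
  ext i j
  have hpartial : (fun y => fderiv ℝ u y (EuclideanSpace.single j 1)) =
      fun y => inner ℝ (gradient u y) (EuclideanSpace.single j 1) := by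
    ext y
    simp [gradient]
  have hd : HasFDerivAt (fun y => inner ℝ (gradient u y) (EuclideanSpace.single j (1 : ℝ)))
      ((innerSL ℝ (EuclideanSpace.single j (1 : ℝ))) ∘L fderiv ℝ (gradient u) x) x := by
    simp_rw [real_inner_comm]
    exact (innerSL ℝ (EuclideanSpace.single j (1 : ℝ))).hasFDerivAt.comp x (h.hasFDerivAt x hx)
  have hsymm := h.isSymmetric hΩ hx (EuclideanSpace.single i 1) (EuclideanSpace.single j 1)
  rw [hess, hpartial, hd.fderiv, matrixOf_apply]
  simpa [EuclideanSpace.inner_single_left, EuclideanSpace.inner_single_right] using hsymm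

theorem gradNorm_eq_norm_gradient (u : E n → ℝ) (x : E n) : gradNorm n u x = ‖gradient u x‖ := by
  simp [gradNorm, gradient]

/-! ### Touching sets and the Alexandrov–Bakelman–Pucci estimate -/

section Touching

variable {V : Type*} [NormedAddCommGroup V] [InnerProductSpace ℝ V]

/-- The points of `Ω` at which `w` is touched from below, over all of `Ω`, by the concave
paraboloid of opening `a` with slope `g x`, where moreover `‖g x‖ ≤ G`. In use `g` is the gradient
of `w`; for `a = 0` this is the lower contact set of the Alexandrov–Bakelman–Pucci method. -/
def touchSet (w : V → ℝ) (g : V → V) (Ω : Set V) (a G : ℝ) : Set V :=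
  {x ∈ Ω | (∀ z ∈ Ω, w x + inner ℝ (g x) (z - x) - a * ‖z - x‖ ^ 2 ≤ w z) ∧ ‖g x‖ ≤ G}

variable {w : V → ℝ} {g : V → V} {H : V → V →L[ℝ] V} {Ω K : Set V} {a G : ℝ}

theorem touchSet_mono {a' G' : ℝ} (ha : a ≤ a') (hG : G ≤ G') :
    touchSet w g Ω a G ⊆ touchSet w g Ω a' G' := by
  rintro x ⟨hx, htouch, hgx⟩
  refine ⟨hx, fun z hz => le_trans ?_ (htouch z hz), hgx.trans hG⟩
  gcongr

theorem isCompact_touchSet_inter (hK : IsCompact K) (hKΩ : K ⊆ Ω) (hw : ContinuousOn w K)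
    (hg : ContinuousOn g K) (a G : ℝ) : IsCompact (touchSet w g Ω a G ∩ K) := by
  have heq : touchSet w g Ω a G ∩ K =
      (⋂ z ∈ Ω, {x ∈ K | w x + inner ℝ (g x) (z - x) - a * ‖z - x‖ ^ 2 ≤ w z}) ∩
        {x ∈ K | ‖g x‖ ≤ G} := by
    ext x
    simp only [touchSet, Set.mem_ofPred_eq, Set.mem_inter_iff, Set.mem_iInter]
    exact ⟨fun ⟨⟨_, h, hG⟩, hx⟩ => ⟨fun z hz => ⟨hx, h z hz⟩, hx, hG⟩,
      fun ⟨h, hx, hG⟩ => ⟨⟨hKΩ hx, fun z hz => (h z hz).2, hG⟩, hx⟩⟩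
  refine hK.of_isClosed_subset ?_ Set.inter_subset_right
  rw [heq]
  refine (isClosed_biInter fun z _ => hK.isClosed.isClosed_le ?_ continuousOn_const).inter
    (hK.isClosed.isClosed_le hg.norm continuousOn_const)
  exact (hw.add (hg.inner (continuousOn_const.sub continuousOn_id))).sub (by fun_prop)

theorem HasHessianOn.normSq [CompleteSpace V] (x₀ : V) (Ω : Set V) :
    HasHessianOn (fun x => ‖x - x₀‖ ^ 2) (fun x => (2 : ℝ) • (x - x₀))
      (fun _ => (2 : ℝ) • 1) Ω where
  hasGradientAt x _ := by
    rw [hasGradientAt_iff_hasFDerivAt]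
    refine ((hasFDerivAt_id x).sub_const x₀).norm_sq.congr_fderiv ?_
    ext v
    simp [two_smul]
  hasFDerivAt x _ := ((hasFDerivAt_id x).sub_const x₀).const_smul (2 : ℝ)

theorem HasHessianOn.isPositive_of_mem_touchSet [CompleteSpace V] (h : HasHessianOn w g H Ω)
    (hΩ : IsOpen Ω) {x : V} (hx : x ∈ touchSet w g Ω a G) : (H x + (2 * a) • 1).IsPositive := by
  have hp := (h.sub (.affine 0 (g x) x Ω)).add ((HasHessianOn.normSq x Ω).const_smul a)
  have hmin := hp.isPositive_of_isMinOn hΩ hx.1 fun z hz => by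
    have := hx.2.1 z hz
    simp only [Pi.add_apply, Pi.sub_apply, Pi.smul_apply, smul_eq_mul, Set.mem_ofPred_eq, sub_self,
      inner_zero_right, norm_zero]
    linarith
  simpa [smul_smul, mul_comm] using hmin

theorem ball_subset_image_touchSet [CompleteSpace V] (hΩ : IsOpen Ω) (hK : IsCompact K)
    (hKΩ : K ⊆ Ω) (hw : ∀ x ∈ Ω, HasGradientAt w (g x) x) {x₁ : V} (hx₁ : x₁ ∈ K) {η : ℝ}
    (hb : ∀ z ∈ Ω \ K, w x₁ + η * ‖z - x₁‖ < w z) :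
    Metric.ball 0 η ⊆ g '' (touchSet w g Ω 0 η ∩ K) := by
  intro l hl
  have hlη : ‖l‖ < η := by simpa using hl
  obtain ⟨x, hxK, hx⟩ := hK.exists_isMinOn (f := fun z => w z - inner ℝ l (z - x₁)) ⟨x₁, hx₁⟩
    ((HasGradientAt.continuousOn fun z hz => hw z (hKΩ hz)).sub (by fun_prop))
  have hmin : ∀ z ∈ Ω, w x - inner ℝ l (x - x₁) ≤ w z - inner ℝ l (z - x₁) := by
    intro z hz
    by_cases hzK : z ∈ K
    · exact hx hzK
    · have hout := hb z ⟨hz, hzK⟩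
      have hin : w x - inner ℝ l (x - x₁) ≤ w x₁ := by simpa using hx hx₁
      have hcs : inner ℝ l (z - x₁) ≤ η * ‖z - x₁‖ :=
        (real_inner_le_norm _ _).trans (by gcongr)
      linarith
  have hgrad : g x = l := by
    have hloc : IsLocalMin (fun z => w z - inner ℝ l (z - x₁)) x := by
      filter_upwards [hΩ.mem_nhds (hKΩ hxK)] with z hz using hmin z hz
    have hd : HasFDerivAt (fun z => w z - inner ℝ l (z - x₁))
        (InnerProductSpace.toDual ℝ V (g x - l)) x := by
      rw [map_sub]
      exact (hw x (hKΩ hxK)).hasFDerivAt.sub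
        ((innerSL ℝ l).hasFDerivAt.comp x ((hasFDerivAt_id x).sub_const x₁))
    simpa [sub_eq_zero] using hloc.hasFDerivAt_eq_zero hd
  refine ⟨x, ⟨⟨hKΩ hxK, fun z hz => ?_, hgrad ▸ hlη.le⟩, hxK⟩, hgrad⟩
  have hz := hmin z hz
  rw [hgrad, ← sub_sub_sub_cancel_right z x x₁, inner_sub_right]
  linarith

end Touching

/-- The `Lⁿ` norm `|B₁|^(1/n)` of the constant `1` over the unit ball of `ℝⁿ`. -/
noncomputable def unitBallNorm (n : ℕ) : ℝ :=
  (volume (Metric.ball (0 : E n) 1)).toReal ^ (n : ℝ)⁻¹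

theorem unitBallNorm_pos (n : ℕ) : 0 < unitBallNorm n :=
  Real.rpow_pos_of_pos (ENNReal.toReal_pos (Metric.measure_ball_pos _ _ one_pos).ne'
    measure_ball_lt_top.ne) _

theorem volume_ball_eq (x : E n) {r : ℝ} (hr : 0 ≤ r) (hn : n ≠ 0) :
    volume (Metric.ball x r) = ENNReal.ofReal (r * unitBallNorm n) ^ n := by
  have hroot : unitBallNorm n ^ n = (volume (Metric.ball (0 : E n) 1)).toReal :=
    Real.rpow_inv_natCast_pow ENNReal.toReal_nonneg hn
  have : Nonempty (Fin n) := ⟨⟨0, Nat.pos_of_ne_zero hn⟩⟩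
  rw [← ENNReal.ofReal_pow (mul_nonneg hr (unitBallNorm_pos n).le), mul_pow, hroot,
    Measure.addHaar_ball _ _ hr, ENNReal.ofReal_mul (by positivity),
    ENNReal.ofReal_toReal measure_ball_lt_top.ne, finrank_euclideanSpace_fin]

theorem HasHessianOn.mul_unitBallNorm_le_eLpNorm_trace {w : E n → ℝ} {g : E n → E n}
    {H : E n → E n →L[ℝ] E n} {Ω K : Set (E n)} (h : HasHessianOn w g H Ω) (hn : n ≠ 0)
    (hΩ : IsOpen Ω) (hK : IsCompact K) (hKΩ : K ⊆ Ω) {x₁ : E n} (hx₁ : x₁ ∈ K) {η : ℝ}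
    (hη : 0 ≤ η) (hb : ∀ z ∈ Ω \ K, w x₁ + η * ‖z - x₁‖ < w z) :
    ENNReal.ofReal (η * unitBallNorm n) ≤ eLpNorm (fun x => LinearMap.trace ℝ (E n) (H x)) n
      (volume.restrict (touchSet w g Ω 0 η ∩ K)) := by
  set Γ := touchSet w g Ω 0 η ∩ K
  have hΓ : MeasurableSet Γ := (isCompact_touchSet_inter hK hKΩ (h.continuousOn.mono hKΩ)
    (h.continuousOn_gradient.mono hKΩ) 0 η).measurableSet
  have hpos : ∀ x ∈ Γ, (H x).IsPositive := fun x hx => by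
    simpa using h.isPositive_of_mem_touchSet hΩ hx.1
  have hpow : ENNReal.ofReal (η * unitBallNorm n) ^ n ≤
      ∫⁻ x in Γ, ‖LinearMap.trace ℝ (E n) (H x)‖ₑ ^ n :=
    calc ENNReal.ofReal (η * unitBallNorm n) ^ n = volume (Metric.ball (0 : E n) η) :=
          (volume_ball_eq 0 hη hn).symm
      _ ≤ volume (g '' Γ) :=
          measure_mono (ball_subset_image_touchSet hΩ hK hKΩ h.hasGradientAt hx₁ hb)
      _ ≤ ∫⁻ x in Γ, ENNReal.ofReal |(H x).det| :=
          addHaar_image_le_lintegral_abs_det_fderiv volume hΓ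
            fun x hx => (h.hasFDerivAt x (hKΩ hx.2)).hasFDerivWithinAt
      _ ≤ ∫⁻ x in Γ, ‖LinearMap.trace ℝ (E n) (H x)‖ₑ ^ n := by
          refine setLIntegral_mono' hΓ fun x hx => ?_
          have htr := (hpos x hx).toLinearMap.trace_nonneg
          rw [Real.enorm_of_nonneg htr, ← ENNReal.ofReal_pow htr]
          simpa using ENNReal.ofReal_le_ofReal
            (abs_det_le_trace_pow (hpos x hx).toLinearMap)
  have hn' : (0 : ℝ) < n := by exact_mod_cast Nat.pos_of_ne_zero hn
  rw [eLpNorm_eq_lintegral_rpow_enorm_toReal (by simpa) (ENNReal.natCast_ne_top n), one_div,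
    ENNReal.le_rpow_inv_iff (by simpa using hn')]
  simpa using hpow

/-! ### Supersolutions -/

/-- `u` is a nonnegative classical solution of `L⁻[u] ≤ f` in the open set `Ω`, with continuous
data `b ≥ 0` and `f`. -/
structure IsNonnegSupersolution (lam Lam : ℝ) (b f u : E n → ℝ) (Ω : Set (E n)) : Prop where
  isOpen : IsOpen Ω
  continuousOn_coeff : ContinuousOn b Ω
  continuousOn_rhs : ContinuousOn f Ω
  coeff_nonneg : ∀ x ∈ Ω, 0 ≤ b x
  contDiffOn : ContDiffOn ℝ 2 u Ω
  nonneg : ∀ x ∈ Ω, 0 ≤ u x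
  pucciMinus_le : ∀ x ∈ Ω, pucciMinus n lam Lam (hess n u x) - b x * gradNorm n u x ≤ f x

namespace IsNonnegSupersolution

variable {b f u : E n → ℝ} {Ω U : Set (E n)}

theorem mono (hu : IsNonnegSupersolution lam Lam b f u Ω) (hU : IsOpen U) (h : U ⊆ Ω) :
    IsNonnegSupersolution lam Lam b f u U where
  isOpen := hU
  continuousOn_coeff := hu.continuousOn_coeff.mono h
  continuousOn_rhs := hu.continuousOn_rhs.mono h
  coeff_nonneg x hx := hu.coeff_nonneg x (h hx)
  contDiffOn := hu.contDiffOn.mono h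
  nonneg x hx := hu.nonneg x (h hx)
  pucciMinus_le x hx := hu.pucciMinus_le x (h hx)

theorem hasHessianOn (hu : IsNonnegSupersolution lam Lam b f u Ω) :
    HasHessianOn u (gradient u) (fderiv ℝ (gradient u)) Ω :=
  .of_contDiffOn hu.isOpen hu.contDiffOn

theorem pucciMinus_matrixOf_le (hu : IsNonnegSupersolution lam Lam b f u Ω) {x : E n}
    (hx : x ∈ Ω) :
    pucciMinus n lam Lam (matrixOf (fderiv ℝ (gradient u) x)) ≤ f x + b x * ‖gradient u x‖ := by
  have := hu.pucciMinus_le x hx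
  rw [hess_eq_matrixOf hu.isOpen hu.contDiffOn hx, gradNorm_eq_norm_gradient] at this
  linarith

variable {h : E n → ℝ} {gh : E n → E n} {Hh : E n → E n →L[ℝ] E n} {K D : Set (E n)}

theorem mul_trace_le_of_mem_touchSet (hu : IsNonnegSupersolution lam Lam b f u Ω) (hL : lam ≤ Lam)
    (hh : HasHessianOn h gh Hh Ω) {η G s : ℝ} {x : E n}
    (hx : x ∈ touchSet (u - h) (gradient u - gh) Ω 0 η) (hG : ‖gh x‖ ≤ G)
    (hs : ∀ A, IsElliptic lam Lam A → -s ≤ traceMul A (Hh x)) :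
    lam * LinearMap.trace ℝ (E n) (fderiv ℝ (gradient u) x - Hh x) ≤
      f⁺ x + (G + η) * b x + s := by
  have hpos : (fderiv ℝ (gradient u) x - Hh x).IsPositive := by
    simpa using (hu.hasHessianOn.sub hh).isPositive_of_mem_touchSet hu.isOpen hx
  have hgrad : ‖gradient u x‖ ≤ G + η := by
    have hdiff : ‖gradient u x - gh x‖ ≤ η := hx.2.2
    have := norm_add_le (gh x) (gradient u x - gh x)
    rw [add_sub_cancel] at this
    linarith
  have hb := mul_le_mul_of_nonneg_left hgrad (hu.coeff_nonneg x hx.1)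
  have hf : f x ≤ f⁺ x := le_posPart (f x)
  have := mul_trace_sub_le_of_pucciMinus_le hL hpos (hu.pucciMinus_matrixOf_le hx.1) hs
  linarith

theorem mul_unitBallNorm_le (hu : IsNonnegSupersolution lam Lam b f u Ω) (hn : n ≠ 0)
    (h0 : 0 < lam) (hL : lam ≤ Lam) (hh : HasHessianOn h gh Hh Ω) (hK : IsCompact K)
    (hKΩ : K ⊆ Ω) {x₁ : E n} (hx₁ : x₁ ∈ K) {η : ℝ} (hη : 0 ≤ η)
    (hb : ∀ z ∈ Ω \ K, (u - h) x₁ + η * ‖z - x₁‖ < (u - h) z) {G S : ℝ}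
    (hG : ∀ x ∈ K, ‖gh x‖ ≤ G) (hS : 0 ≤ S) (hD : MeasurableSet D)
    (hs : ∀ x ∈ touchSet (u - h) (gradient u - gh) Ω 0 η ∩ K, ∀ A, IsElliptic lam Lam A →
      -D.indicator (fun _ => S) x ≤ traceMul A (Hh x)) :
    ENNReal.ofReal (lam * (η * unitBallNorm n)) ≤
      eLpNorm f⁺ n (volume.restrict K) +
        ENNReal.ofReal (G + η) * eLpNorm b n (volume.restrict K) +
        ENNReal.ofReal S * volume
          (touchSet (u - h) (gradient u - gh) Ω 0 η ∩ K ∩ D) ^ (n : ℝ)⁻¹ := by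
  set Γ := touchSet (u - h) (gradient u - gh) Ω 0 η ∩ K
  have hsub := hu.hasHessianOn.sub hh
  have hΓ : MeasurableSet Γ := (isCompact_touchSet_inter hK hKΩ (hsub.continuousOn.mono hKΩ)
    (hsub.continuousOn_gradient.mono hKΩ) 0 η).measurableSet
  have hΓΩ : Γ ⊆ Ω := Set.inter_subset_right.trans hKΩ
  have hf_meas : AEStronglyMeasurable f⁺ (volume.restrict Γ) :=
    ((hu.continuousOn_rhs.mono hΓΩ).sup continuousOn_const).aestronglyMeasurable hΓ
  have hb_meas : AEStronglyMeasurable b (volume.restrict Γ) :=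
    (hu.continuousOn_coeff.mono hΓΩ).aestronglyMeasurable hΓ
  have hD_norm : eLpNorm (D.indicator fun _ => S) n (volume.restrict Γ) =
      ENNReal.ofReal S * volume (Γ ∩ D) ^ (n : ℝ)⁻¹ := by
    rw [eLpNorm_indicator_const hD (by simpa) (ENNReal.natCast_ne_top n), Real.enorm_of_nonneg hS,
      Measure.restrict_apply hD, Set.inter_comm, ENNReal.toReal_natCast, one_div]
  have h1n : (1 : ℝ≥0∞) ≤ n := by exact_mod_cast Nat.one_le_iff_ne_zero.2 hn
  have hΓK : volume.restrict Γ ≤ volume.restrict K :=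
    Measure.restrict_mono Set.inter_subset_right le_rfl
  calc ENNReal.ofReal (lam * (η * unitBallNorm n))
      ≤ eLpNorm (lam • fun x => LinearMap.trace ℝ (E n) (fderiv ℝ (gradient u) x - Hh x)) n
          (volume.restrict Γ) := by
        rw [eLpNorm_const_smul, Real.enorm_of_nonneg h0.le, ENNReal.ofReal_mul h0.le]
        gcongr
        exact hsub.mul_unitBallNorm_le_eLpNorm_trace hn hu.isOpen hK hKΩ hx₁ hη hb
    _ ≤ eLpNorm (f⁺ + (G + η) • b + D.indicator fun _ => S) n (volume.restrict Γ) := by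
        refine eLpNorm_mono_ae_real ((ae_restrict_iff' hΓ).2 (.of_forall fun x hx => ?_))
        have hpos : (fderiv ℝ (gradient u) x - Hh x).IsPositive := by
          simpa using hsub.isPositive_of_mem_touchSet hu.isOpen hx.1
        have htr : 0 ≤ LinearMap.trace ℝ (E n) (fderiv ℝ (gradient u) x - Hh x) :=
          hpos.toLinearMap.trace_nonneg
        rw [Pi.smul_apply, smul_eq_mul, Real.norm_of_nonneg (mul_nonneg h0.le htr)]
        exact hu.mul_trace_le_of_mem_touchSet hL hh hx.1 (hG x hx.2) (hs x hx)
    _ ≤ eLpNorm f⁺ n (volume.restrict Γ) + eLpNorm ((G + η) • b) n (volume.restrict Γ) +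
          eLpNorm (D.indicator fun _ => S) n (volume.restrict Γ) :=
        (eLpNorm_add_le (hf_meas.add (hb_meas.const_smul _))
          (aestronglyMeasurable_const.indicator hD) h1n).trans
          (by gcongr; exact eLpNorm_add_le hf_meas (hb_meas.const_smul _) h1n)
    _ ≤ _ := by
        have hG0 : 0 ≤ G + η :=
          add_nonneg ((norm_nonneg _).trans (hG x₁ hx₁)) hη
        rw [hD_norm, eLpNorm_const_smul, Real.enorm_of_nonneg hG0]
        gcongr

end IsNonnegSupersolution

/-! ### Test functions -/

section Radial

variable {V : Type*} [NormedAddCommGroup V] [InnerProductSpace ℝ V] [CompleteSpace V]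

theorem HasHessianOn.innerSq (p x₀ : V) (Ω : Set V) :
    HasHessianOn (fun x => inner ℝ p (x - x₀) ^ 2) (fun x => (2 * inner ℝ p (x - x₀)) • p)
      (fun _ => (2 : ℝ) • InnerProductSpace.rankOne ℝ p p) Ω := by
  have hp : ∀ x, HasFDerivAt (fun x => inner ℝ p (x - x₀)) (innerSL ℝ p) x := fun x =>
    (innerSL ℝ p).hasFDerivAt.comp x ((hasFDerivAt_id x).sub_const x₀)
  refine ⟨fun x _ => ?_, fun x _ => ?_⟩
  · rw [hasGradientAt_iff_hasFDerivAt]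
    refine ((hp x).pow 2).congr_fderiv ?_
    ext v
    simp
  · refine (((hp x).const_mul 2).smul_const p).congr_fderiv ?_
    ext v
    simp [smul_smul]

theorem HasHessianOn.radial (y : V) {φ φ' φ'' : ℝ → ℝ} (h : ∀ t, 0 ≤ t → HasDerivAt φ (φ' t) t)
    (h' : ∀ t, 0 ≤ t → HasDerivAt φ' (φ'' t) t) (Ω : Set V) :
    HasHessianOn (fun x => φ (‖x - y‖ ^ 2)) (fun x => (2 * φ' (‖x - y‖ ^ 2)) • (x - y))
      (fun x => (2 * φ' (‖x - y‖ ^ 2)) • 1 +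
        (4 * φ'' (‖x - y‖ ^ 2)) • InnerProductSpace.rankOne ℝ (x - y) (x - y)) Ω := by
  have hsq : ∀ x, HasFDerivAt (fun x : V => ‖x - y‖ ^ 2) (innerSL ℝ ((2 : ℝ) • (x - y))) x :=
    fun x => ((HasHessianOn.normSq y Set.univ).hasGradientAt x trivial).hasFDerivAt
  refine ⟨fun x _ => ?_, fun x _ => ?_⟩
  · rw [hasGradientAt_iff_hasFDerivAt]
    refine ((h _ (by positivity)).comp_hasFDerivAt x (hsq x)).congr_fderiv ?_
    ext v
    simp
    ring
  · refine ((((h' _ (by positivity)).comp_hasFDerivAt x (hsq x)).const_mul 2).smul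
      ((hasFDerivAt_id x).sub_const y)).congr_fderiv ?_
    ext v
    simp
    module

end Radial

-- Bernoulli's inequality for `(b / a) ^ k`, weakened by `b / a - 1 ≥ 1 - a / b`.
theorem inv_pow_sub_le (k : ℕ) {a b : ℝ} (ha : 0 < a) (hb : 0 < b) :
    (b ^ k)⁻¹ - k * (b ^ (k + 1))⁻¹ * (a - b) ≤ (a ^ k)⁻¹ := by
  have hbern : 1 + k * (b / a - 1) ≤ (b / a) ^ k := by
    have hpos : 0 < b / a := by positivity
    simpa using one_add_mul_le_pow (a := b / a - 1) (by linarith) k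
  have hle : 1 - a / b ≤ b / a - 1 := by
    have hsq : b / a - 1 - (1 - a / b) = (b - a) ^ 2 / (a * b) := by field_simp
    have : 0 ≤ (b - a) ^ 2 / (a * b) := by positivity
    linarith
  calc (b ^ k)⁻¹ - k * (b ^ (k + 1))⁻¹ * (a - b) = (b ^ k)⁻¹ * (1 + k * (1 - a / b)) := by
        rw [pow_succ]
        field_simp
        ring
    _ ≤ (b ^ k)⁻¹ * (1 + k * (b / a - 1)) := by gcongr
    _ ≤ (b ^ k)⁻¹ * (b / a) ^ k := by gcongr
    _ = (a ^ k)⁻¹ := by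
        rw [div_pow]
        field_simp

/-- The profile of the radial barriers, as a function of the squared distance to the centre. -/
noncomputable def profile (ρ : ℝ) (k : ℕ) (t : ℝ) : ℝ := ((1 + t / ρ ^ 2) ^ k)⁻¹

section Profile

variable {ρ s t : ℝ}

theorem hasDerivAt_profile (ρ : ℝ) (k : ℕ) (ht : 0 ≤ t) :
    HasDerivAt (profile ρ k) (-(k / ρ ^ 2) * profile ρ (k + 1) t) t := by
  have h0 : 1 + t / ρ ^ 2 ≠ 0 := by positivity
  have h1 : HasDerivAt (fun t : ℝ => 1 + t / ρ ^ 2) (1 / ρ ^ 2) t := by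
    simpa using ((hasDerivAt_id t).div_const (ρ ^ 2)).const_add 1
  refine ((h1.pow k).inv (pow_ne_zero k h0)).congr_deriv ?_
  rcases k with _ | k
  · simp
  · rw [profile, Pi.pow_apply, Nat.add_sub_cancel, ← pow_mul]
    field_simp
    ring

theorem profile_pos (ρ : ℝ) (k : ℕ) (ht : 0 ≤ t) : 0 < profile ρ k t := by
  unfold profile
  positivity

theorem profile_le_one (ρ : ℝ) (k : ℕ) (ht : 0 ≤ t) : profile ρ k t ≤ 1 :=
  inv_le_one_of_one_le₀ (one_le_pow₀ (le_add_of_nonneg_right (by positivity)))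

theorem profile_anti (ρ : ℝ) (k : ℕ) (hs : 0 ≤ s) (hst : s ≤ t) :
    profile ρ k t ≤ profile ρ k s := by
  unfold profile
  gcongr

theorem profile_mul_sq (hρ : ρ ≠ 0) (k : ℕ) (c : ℝ) :
    profile ρ k (c * ρ ^ 2) = ((1 + c) ^ k)⁻¹ := by
  rw [profile, mul_div_assoc, div_self (by positivity), mul_one]

theorem profile_eq_mul_profile_succ (ρ : ℝ) (k : ℕ) (ht : 0 ≤ t) :
    profile ρ k t = (1 + t / ρ ^ 2) * profile ρ (k + 1) t := by
  have h0 : 1 + t / ρ ^ 2 ≠ 0 := by positivity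
  rw [profile, profile, pow_succ _ k, mul_inv, mul_comm, inv_mul_cancel_right₀ h0]

theorem profile_tangent_le (ρ : ℝ) (k : ℕ) (hs : 0 ≤ s) (ht : 0 ≤ t) :
    profile ρ k t - k / ρ ^ 2 * profile ρ (k + 1) t * (s - t) ≤ profile ρ k s := by
  have htan := inv_pow_sub_le k (a := 1 + s / ρ ^ 2) (b := 1 + t / ρ ^ 2)
    (by positivity) (by positivity)
  have heq : k / ρ ^ 2 * profile ρ (k + 1) t * (s - t) =
      k * ((1 + t / ρ ^ 2) ^ (k + 1))⁻¹ * (1 + s / ρ ^ 2 - (1 + t / ρ ^ 2)) := by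
    rw [profile]
    ring
  rw [heq]
  exact htan

end Profile

/-- The barrier `(1 + |x - y|² / ρ²) ^ (-m)` centred at `y`. For large `m` it is a strict
subsolution of the Pucci inequality outside the ball of radius `ρ / 2`. -/
noncomputable def barrier (m : ℕ) (ρ : ℝ) (y x : E n) : ℝ := profile ρ m (‖x - y‖ ^ 2)

/-- The gradient of `barrier m ρ y`. -/
noncomputable def barrierGrad (m : ℕ) (ρ : ℝ) (y x : E n) : E n :=
  (2 * (-(m / ρ ^ 2) * profile ρ (m + 1) (‖x - y‖ ^ 2))) • (x - y)

/-- The Hessian of `barrier m ρ y`. -/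
noncomputable def barrierHess (m : ℕ) (ρ : ℝ) (y x : E n) : E n →L[ℝ] E n :=
  (2 * (-(m / ρ ^ 2) * profile ρ (m + 1) (‖x - y‖ ^ 2))) • 1 +
    (4 * (-(m / ρ ^ 2) * (-((m + 1 : ℕ) / ρ ^ 2) * profile ρ (m + 1 + 1) (‖x - y‖ ^ 2)))) •
      InnerProductSpace.rankOne ℝ (x - y) (x - y)

section Barrier

variable {m : ℕ} {ρ : ℝ} {x y : E n} {A : Matrix (Fin n) (Fin n) ℝ}

theorem hasHessianOn_barrier (m : ℕ) (ρ : ℝ) (y : E n) (Ω : Set (E n)) :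
    HasHessianOn (barrier m ρ y) (barrierGrad m ρ y) (barrierHess m ρ y) Ω :=
  .radial y (fun _ ht => hasDerivAt_profile ρ m ht)
    (fun _ ht => (hasDerivAt_profile ρ (m + 1) ht).const_mul _) Ω

theorem barrier_le_one (m : ℕ) (ρ : ℝ) (y x : E n) : barrier m ρ y x ≤ 1 :=
  profile_le_one ρ m (by positivity)

theorem norm_barrierGrad_le (m : ℕ) (hρ : 0 < ρ) (hx : ‖x - y‖ ≤ 4 * ρ) :
    ‖barrierGrad m ρ y x‖ ≤ 8 * m / ρ := by
  have hJ0 := profile_pos ρ (m + 1) (t := ‖x - y‖ ^ 2) (by positivity)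
  have hJ1 := profile_le_one ρ (m + 1) (t := ‖x - y‖ ^ 2) (by positivity)
  calc ‖barrierGrad m ρ y x‖ = 2 * (m / ρ ^ 2 * profile ρ (m + 1) (‖x - y‖ ^ 2)) * ‖x - y‖ := by
        rw [barrierGrad, norm_smul, neg_mul, mul_neg, norm_neg,
          Real.norm_of_nonneg (by positivity)]
    _ ≤ 2 * (m / ρ ^ 2 * 1) * (4 * ρ) := by gcongr
    _ = 8 * m / ρ := by field_simp; ring

theorem barrier_paraboloid_le (m : ℕ) (ρ : ℝ) (y x z : E n) :
    barrier m ρ y x + inner ℝ (barrierGrad m ρ y x) (z - x) - m / ρ ^ 2 * ‖z - x‖ ^ 2 ≤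
      barrier m ρ y z := by
  have htan := profile_tangent_le ρ m (s := ‖z - y‖ ^ 2) (t := ‖x - y‖ ^ 2)
    (by positivity) (by positivity)
  have hJ0 := profile_pos ρ (m + 1) (t := ‖x - y‖ ^ 2) (by positivity)
  have hJ1 := profile_le_one ρ (m + 1) (t := ‖x - y‖ ^ 2) (by positivity)
  have hsq : ‖z - y‖ ^ 2 - ‖x - y‖ ^ 2 = 2 * inner ℝ (x - y) (z - x) + ‖z - x‖ ^ 2 := by
    rw [← add_sub_cancel x z, add_sub_right_comm, norm_add_sq_real, add_sub_cancel]
    ring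
  have hquad : m / ρ ^ 2 * profile ρ (m + 1) (‖x - y‖ ^ 2) * ‖z - x‖ ^ 2 ≤
      m / ρ ^ 2 * 1 * ‖z - x‖ ^ 2 := by gcongr
  rw [hsq] at htan
  rw [barrier, barrier, barrierGrad, real_inner_smul_left]
  linarith

theorem traceMul_barrierHess (m : ℕ) (ρ : ℝ) (y x : E n) (A : Matrix (Fin n) (Fin n) ℝ) :
    traceMul A (barrierHess m ρ y x) =
      2 * (m / ρ ^ 2) * profile ρ (m + 2) (‖x - y‖ ^ 2) *
        (2 * ((m + 1) / ρ ^ 2) * traceMul A (InnerProductSpace.rankOne ℝ (x - y) (x - y)) -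
          (1 + ‖x - y‖ ^ 2 / ρ ^ 2) * traceMul A 1) := by
  rw [barrierHess, map_add, map_smul, map_smul, smul_eq_mul, smul_eq_mul,
    profile_eq_mul_profile_succ ρ (m + 1) (t := ‖x - y‖ ^ 2) (by positivity)]
  push_cast
  ring

theorem le_traceMul_barrierHess (hL : 0 ≤ Lam) (hm : 5 * Lam * n ≤ (m + 1) * lam) (hρ : 0 < ρ)
    (hx : ρ / 2 ≤ ‖x - y‖) (hx' : ‖x - y‖ ≤ 4 * ρ) (hA : IsElliptic lam Lam A) :
    2 * m * Lam * n * ((17 : ℝ) ^ (m + 2))⁻¹ / ρ ^ 2 ≤ traceMul A (barrierHess m ρ y x) := by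
  rw [traceMul_barrierHess]
  have hone := hA.traceMul_one_le
  have hrank := hA.mul_norm_sq_le_traceMul_rankOne (x - y)
  set t := ‖x - y‖ ^ 2 / ρ ^ 2 with ht
  have ht4 : 1 / 4 ≤ t := by
    rw [ht, le_div_iff₀ (by positivity)]
    nlinarith
  have hJ : ((17 : ℝ) ^ (m + 2))⁻¹ ≤ profile ρ (m + 2) (‖x - y‖ ^ 2) := by
    have hfar : ‖x - y‖ ^ 2 ≤ 16 * ρ ^ 2 := by nlinarith [norm_nonneg (x - y)]
    have := profile_anti ρ (m + 2) (by positivity) hfar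
    rwa [profile_mul_sq hρ.ne', show (1 + 16 : ℝ) = 17 by norm_num] at this
  have hbracket : Lam * n ≤
      2 * ((m + 1) / ρ ^ 2) * traceMul A (InnerProductSpace.rankOne ℝ (x - y) (x - y)) -
        (1 + t) * traceMul A 1 := by
    have h1 : 2 * (5 * Lam * n) * t ≤
        2 * ((m + 1) / ρ ^ 2) * traceMul A (InnerProductSpace.rankOne ℝ (x - y) (x - y)) :=
      calc 2 * (5 * Lam * n) * t ≤ 2 * ((m + 1) * lam) * t := by gcongr
        _ = 2 * ((m + 1) / ρ ^ 2) * (lam * ‖x - y‖ ^ 2) := by rw [ht]; field_simp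
        _ ≤ _ := by gcongr
    have h2 : (1 + t) * traceMul A 1 ≤ (1 + t) * (Lam * n) := by gcongr
    have h3 : 0 ≤ Lam * n := by positivity
    nlinarith
  calc 2 * m * Lam * n * ((17 : ℝ) ^ (m + 2))⁻¹ / ρ ^ 2
      = 2 * (m / ρ ^ 2) * ((17 : ℝ) ^ (m + 2))⁻¹ * (Lam * n) := by ring
    _ ≤ _ := by
      have := profile_pos ρ (m + 2) (t := ‖x - y‖ ^ 2) (by positivity)
      gcongr

theorem neg_le_traceMul_barrierHess (h0 : 0 ≤ lam) (hL : 0 ≤ Lam) (hA : IsElliptic lam Lam A) :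
    -(2 * m * Lam * n / ρ ^ 2) ≤ traceMul A (barrierHess m ρ y x) := by
  rw [barrierHess, map_add, map_smul, map_smul, smul_eq_mul, smul_eq_mul]
  have hone := hA.traceMul_one_le
  have hrank : 0 ≤ traceMul A (InnerProductSpace.rankOne ℝ (x - y) (x - y)) :=
    le_trans (by positivity) (hA.mul_norm_sq_le_traceMul_rankOne (x - y))
  have hJ0 := profile_pos ρ (m + 1) (t := ‖x - y‖ ^ 2) (by positivity)
  have hJ1 := profile_le_one ρ (m + 1) (t := ‖x - y‖ ^ 2) (by positivity)
  have hJ2 := profile_pos ρ (m + 1 + 1) (t := ‖x - y‖ ^ 2) (by positivity)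
  have h1 : 2 * (m / ρ ^ 2) * profile ρ (m + 1) (‖x - y‖ ^ 2) * traceMul A 1 ≤
      2 * m * Lam * n / ρ ^ 2 :=
    calc _ ≤ 2 * (m / ρ ^ 2) * profile ρ (m + 1) (‖x - y‖ ^ 2) * (Lam * n) := by gcongr
      _ ≤ 2 * (m / ρ ^ 2) * 1 * (Lam * n) := by gcongr
      _ = 2 * m * Lam * n / ρ ^ 2 := by ring
  have h2 : 0 ≤ m / ρ ^ 2 * ((m + 1 : ℕ) / ρ ^ 2 * profile ρ (m + 1 + 1) (‖x - y‖ ^ 2)) *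
      traceMul A (InnerProductSpace.rankOne ℝ (x - y) (x - y)) := by positivity
  linarith

end Barrier

/-! ### Comparison -/

/-- `F` bounds the `Lⁿ(U)` norm of the positive part of the right-hand side `f`, and `B` that of
the drift coefficient `b`. -/
structure DataBound (b f : E n → ℝ) (U : Set (E n)) (F B : ℝ) : Prop where
  rhs_nonneg : 0 ≤ F
  coeff_nonneg : 0 ≤ B
  eLpNorm_rhs_le : eLpNorm f⁺ n (volume.restrict U) ≤ ENNReal.ofReal F
  eLpNorm_coeff_le : eLpNorm b n (volume.restrict U) ≤ ENNReal.ofReal B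

theorem DataBound.mono {b f : E n → ℝ} {U : Set (E n)} {F F' B B' : ℝ}
    (h : DataBound b f U F B) (hF : F ≤ F') (hB : B ≤ B') : DataBound b f U F' B' where
  rhs_nonneg := h.rhs_nonneg.trans hF
  coeff_nonneg := h.coeff_nonneg.trans hB
  eLpNorm_rhs_le := h.eLpNorm_rhs_le.trans (ENNReal.ofReal_le_ofReal hF)
  eLpNorm_coeff_le := h.eLpNorm_coeff_le.trans (ENNReal.ofReal_le_ofReal hB)

namespace IsNonnegSupersolution

variable {b f u h : E n → ℝ} {gh : E n → E n} {Hh : E n → E n →L[ℝ] E n} {U K : Set (E n)}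
  {F B Hb η d : ℝ}

theorem mul_slope_le (hu : IsNonnegSupersolution lam Lam b f u U) (hn : n ≠ 0) (h0 : 0 < lam)
    (hL : lam ≤ Lam) (hh : HasHessianOn h gh Hh U) (hgh : ∀ x ∈ U, ‖gh x‖ ≤ Hb)
    (hdata : DataBound b f U F B) (hK : IsCompact K) (hKU : K ⊆ U) {x₁ : E n} (hx₁ : x₁ ∈ K)
    (hη : 0 ≤ η) (hb : ∀ z ∈ U \ K, (u - h) x₁ + η * ‖z - x₁‖ < (u - h) z)
    (htr : ∀ x ∈ touchSet (u - h) (gradient u - gh) U 0 η ∩ K, ∀ A, IsElliptic lam Lam A →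
      0 ≤ traceMul A (Hh x)) :
    lam * (η * unitBallNorm n) ≤ F + (Hb + η) * B := by
  have hHb : 0 ≤ Hb := (norm_nonneg _).trans (hgh x₁ (hKU hx₁))
  have habp := hu.mul_unitBallNorm_le hn h0 hL hh hK hKU hx₁ hη hb
    (fun x hx => hgh x (hKU hx)) le_rfl MeasurableSet.empty (by simpa using htr)
  have := hdata.rhs_nonneg
  have := hdata.coeff_nonneg
  rw [← ENNReal.ofReal_le_ofReal_iff (by positivity)]
  calc ENNReal.ofReal (lam * (η * unitBallNorm n))
      ≤ eLpNorm f⁺ n (volume.restrict K) +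
          ENNReal.ofReal (Hb + η) * eLpNorm b n (volume.restrict K) := by simpa using habp
    _ ≤ ENNReal.ofReal F + ENNReal.ofReal (Hb + η) * ENNReal.ofReal B := by
        gcongr
        · exact (eLpNorm_mono_measure _ (Measure.restrict_mono hKU le_rfl)).trans
            hdata.eLpNorm_rhs_le
        · exact (eLpNorm_mono_measure _ (Measure.restrict_mono hKU le_rfl)).trans
            hdata.eLpNorm_coeff_le
    _ = ENNReal.ofReal (F + (Hb + η) * B) := by
        rw [← ENNReal.ofReal_mul (by positivity), ← ENNReal.ofReal_add (by positivity)
          (by positivity)]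

theorem nonneg_traceMul_of_mem_touchSet (hd : ∀ x ∈ U, ∀ y ∈ U, ‖x - y‖ ≤ d)
    (htr : ∀ x ∈ U, u x < h x → ∀ A, IsElliptic lam Lam A → 0 ≤ traceMul A (Hh x))
    {x x₁ : E n} (hx₁ : x₁ ∈ U) (hη : 0 ≤ η) (hlt : u x₁ + η * d < h x₁)
    (hx : x ∈ touchSet (u - h) (gradient u - gh) U 0 η) :
    ∀ A, IsElliptic lam Lam A → 0 ≤ traceMul A (Hh x) := by
  refine htr x hx.1 ?_
  have htouch := hx.2.1 x₁ hx₁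
  have hslope : ‖(gradient u - gh) x‖ * ‖x₁ - x‖ ≤ η * d :=
    mul_le_mul hx.2.2 (hd x₁ hx₁ x hx.1) (norm_nonneg _) hη
  have hcs := (abs_le.1 (abs_real_inner_le_norm ((gradient u - gh) x) (x₁ - x))).1
  simp only [Pi.sub_apply, zero_mul, sub_zero] at htouch hslope hcs
  linarith

theorem comparison (hu : IsNonnegSupersolution lam Lam b f u U) (hn : n ≠ 0) (h0 : 0 < lam)
    (hL : lam ≤ Lam) (hd0 : 0 < d) (hd : ∀ x ∈ U, ∀ y ∈ U, ‖x - y‖ ≤ d)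
    (hh : HasHessianOn h gh Hh U) (hgh : ∀ x ∈ U, ‖gh x‖ ≤ Hb)
    (htr : ∀ x ∈ U, u x < h x → ∀ A, IsElliptic lam Lam A → 0 ≤ traceMul A (Hh x))
    {φ : E n → ℝ} (hφ : Continuous φ) (hφU : ∀ x ∈ frontier U, φ x ≤ 0)
    (hle : ∀ x ∈ U, h x - u x ≤ φ x) (hdata : DataBound b f U F B)
    (hB : B ≤ lam * unitBallNorm n / 2) :
    ∀ x ∈ U, h x - u x ≤ 4 / (lam * unitBallNorm n) * d * (F + Hb * B) := by
  intro x₁ hx₁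
  have hHb : 0 ≤ Hb := (norm_nonneg _).trans (hgh x₁ hx₁)
  have hF := hdata.rhs_nonneg
  have hB0 := hdata.coeff_nonneg
  have hω := unitBallNorm_pos n
  rcases le_or_gt (h x₁ - u x₁) 0 with hneg | hτ
  · exact hneg.trans (by positivity)
  set τ := h x₁ - u x₁
  set η := τ / (2 * d)
  have hηd : η * d = τ / 2 := by simp only [η]; field_simp
  set K := closure U ∩ {x | τ / 2 ≤ φ x}
  have hKU : K ⊆ U := by
    rintro x ⟨hx, hφx⟩
    by_contra hxU
    have := hφU x (hu.isOpen.frontier_eq ▸ ⟨hx, hxU⟩)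
    exact absurd (hφx.trans this) (by linarith)
  have hUb : Bornology.IsBounded U :=
    Metric.isBounded_iff.2 ⟨d, fun x hx y hy => by rw [dist_eq_norm]; exact hd x hx y hy⟩
  have hK : IsCompact K := Metric.isCompact_of_isClosed_isBounded
    (isClosed_closure.inter (isClosed_le continuous_const hφ)) (hUb.subset hKU)
  have hb : ∀ z ∈ U \ K, (u - h) x₁ + η * ‖z - x₁‖ < (u - h) z := by
    rintro z ⟨hz, hzK⟩
    have hφz : φ z < τ / 2 := not_le.1 fun hφz => hzK ⟨subset_closure hz, hφz⟩
    have hz₁ : η * ‖z - x₁‖ ≤ η * d := by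
      gcongr
      exact hd z hz x₁ hx₁
    simp only [Pi.sub_apply]
    linarith [hle z hz]
  have hx₁K : x₁ ∈ K := ⟨subset_closure hx₁, (half_le_self hτ.le).trans (hle x₁ hx₁)⟩
  have hslope := hu.mul_slope_le hn h0 hL hh hgh hdata hK hKU hx₁K (by positivity) hb
    fun x hx => nonneg_traceMul_of_mem_touchSet hd htr hx₁ (by positivity) (by linarith) hx.1
  have hηB : η * B ≤ η * (lam * unitBallNorm n / 2) := by gcongr
  calc τ = 4 / (lam * unitBallNorm n) * d * (η * (lam * unitBallNorm n / 2)) := by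
        simp only [η]; field_simp; ring
    _ ≤ 4 / (lam * unitBallNorm n) * d * (F + Hb * B) := by
        gcongr
        linarith

end IsNonnegSupersolution

/-! ### Scale-invariant bounds for the data -/

theorem LpNormE_eq_eLpNorm {p : ℝ} (hp : 0 < p) (g : E n → ℝ) (U : Set (E n)) :
    LpNormE n p g U = eLpNorm g (ENNReal.ofReal p) (volume.restrict U) := by
  rw [eLpNorm_eq_eLpNorm' (by simpa using hp) ENNReal.ofReal_ne_top, ENNReal.toReal_ofReal hp.le]
  simp only [LpNormE, eLpNorm', Real.enorm_eq_ofReal_abs,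
    ENNReal.ofReal_rpow_of_nonneg (abs_nonneg _) hp.le]

theorem eLpNorm_le_of_subset_ball (hn : n ≠ 0) {p : ℝ} (hp : n ≤ p) {U : Set (E n)} {x₀ : E n}
    {r : ℝ} (hr : 0 < r) (hU : U ⊆ Metric.ball x₀ r) {g : E n → ℝ}
    (hg : AEStronglyMeasurable g (volume.restrict U)) {k : ℝ} (hk : 0 ≤ k)
    (hgk : eLpNorm g (ENNReal.ofReal p) (volume.restrict U) ≤ ENNReal.ofReal k) :
    eLpNorm g n (volume.restrict U) ≤
      ENNReal.ofReal (k * unitBallNorm n ^ (1 - n / p) * r ^ (1 - n / p)) := by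
  have hn0 : (0 : ℝ) < n := by exact_mod_cast hn.bot_lt
  have hp0 : 0 < p := hn0.trans_le hp
  have hω := unitBallNorm_pos n
  have hexp : 0 ≤ 1 / (n : ℝ) - 1 / p := sub_nonneg.2 (by gcongr)
  have hnp : (n : ℝ≥0∞) ≤ ENNReal.ofReal p := by
    rw [← ENNReal.ofReal_natCast]
    exact ENNReal.ofReal_le_ofReal hp
  calc eLpNorm g n (volume.restrict U)
      ≤ eLpNorm g (ENNReal.ofReal p) (volume.restrict U) *
          volume U ^ (1 / (n : ℝ) - 1 / p) := by
        simpa [ENNReal.toReal_ofReal hp0.le] using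
          eLpNorm_le_eLpNorm_mul_rpow_measure_univ hnp hg
    _ ≤ ENNReal.ofReal k * (ENNReal.ofReal (r * unitBallNorm n) ^ n) ^ (1 / (n : ℝ) - 1 / p) := by
        gcongr
        exact (measure_mono hU).trans (volume_ball_eq x₀ hr.le hn).le
    _ = ENNReal.ofReal k * ENNReal.ofReal (r * unitBallNorm n) ^ (1 - n / p) := by
        rw [← ENNReal.rpow_natCast, ← ENNReal.rpow_mul]
        congr 2
        field_simp
    _ = ENNReal.ofReal (k * unitBallNorm n ^ (1 - n / p) * r ^ (1 - n / p)) := by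
        rw [ENNReal.ofReal_rpow_of_pos (by positivity), ← ENNReal.ofReal_mul hk,
          Real.mul_rpow hr.le hω.le]
        ring_nf

/-- Nonnegative supersolutions on `B₂⁺` whose data are controlled at every scale: the drift has
`Lⁿ` norm at most `Kb * r ^ α` on subsets of balls of radius `r`, and the positive part of the
right-hand side has `Lⁿ` norm at most `N` everywhere and at most `N * r ^ α` in the layer
`x_n < d0`. -/
structure IsHalfBallSupersolution (hn : 1 ≤ n) (lam Lam d0 α Kb N : ℝ) (b f u : E n → ℝ) :
    Prop where
  isSupersolution : IsNonnegSupersolution lam Lam b f u (halfBall n hn 2)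
  dataBound {U : Set (E n)} {x₀ : E n} {r : ℝ} (hU : U ⊆ halfBall n hn 2) (hr : 0 < r)
    (hUr : U ⊆ Metric.ball x₀ r) : DataBound b f U N (Kb * r ^ α)
  dataBound_of_lastC_lt {U : Set (E n)} {x₀ : E n} {r : ℝ} (hU : U ⊆ halfBall n hn 2)
    (hr : 0 < r) (hUr : U ⊆ Metric.ball x₀ r) (hd : ∀ x ∈ U, lastC n hn x < d0) :
    DataBound b f U (N * r ^ α) (Kb * r ^ α)

theorem continuous_lastC (hn : 1 ≤ n) : Continuous (lastC n hn) := by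
  unfold lastC
  fun_prop

theorem isOpen_halfBall (hn : 1 ≤ n) (R : ℝ) : IsOpen (halfBall n hn R) :=
  (isOpen_lt continuous_norm continuous_const).inter (isOpen_lt continuous_const
    (continuous_lastC hn))

theorem halfBall_subset_ball (hn : 1 ≤ n) (R : ℝ) : halfBall n hn R ⊆ Metric.ball 0 R :=
  fun _ hx => mem_ball_zero_iff.2 hx.1

theorem eLpNorm_restrict_le_of_subset {g : E n → ℝ} {U V : Set (E n)} {p : ℝ} (hp : 0 < p)
    (hUV : U ⊆ V) {L : ℝ≥0∞} (hL : LpNormE n p g V ≤ L) :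
    eLpNorm g (ENNReal.ofReal p) (volume.restrict U) ≤ L :=
  (eLpNorm_mono_measure _ (Measure.restrict_mono hUV le_rfl)).trans
    ((LpNormE_eq_eLpNorm hp g V).symm.trans_le hL)

theorem IsNonnegSupersolution.isHalfBallSupersolution {hn : 1 ≤ n} {p q d0 K : ℝ} (hq : n ≤ q)
    (hp : n ≤ p) (hK : 0 ≤ K) {b f u : E n → ℝ}
    (hu : IsNonnegSupersolution lam Lam b f u (halfBall n hn 2))
    (hb : LpNormE n q b (halfBall n hn 2) ≤ ENNReal.ofReal K)
    (hf : LpqNormHB n hn p q d0 2 f⁺ ≠ ∞) :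
    IsHalfBallSupersolution hn lam Lam d0 (1 - n / q) (K * unitBallNorm n ^ (1 - n / q))
      ((unitBallNorm n ^ (1 - n / q) + unitBallNorm n ^ (1 - n / p) * 2 ^ (1 - n / p)) *
        (LpqNormHB n hn p q d0 2 f⁺).toReal) b f u := by
  have hn0 : n ≠ 0 := by omega
  have hn' : (0 : ℝ) < n := by exact_mod_cast hn
  have hω := unitBallNorm_pos n
  set L := LpqNormHB n hn p q d0 2 f⁺
  have hL : ENNReal.ofReal L.toReal = L := ENNReal.ofReal_toReal hf
  have hLnn : 0 ≤ L.toReal := ENNReal.toReal_nonneg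
  have hbm : AEStronglyMeasurable b (volume.restrict (halfBall n hn 2)) :=
    hu.continuousOn_coeff.aestronglyMeasurable (isOpen_halfBall hn 2).measurableSet
  have hfm : AEStronglyMeasurable f⁺ (volume.restrict (halfBall n hn 2)) :=
    (hu.continuousOn_rhs.sup continuousOn_const).aestronglyMeasurable
      (isOpen_halfBall hn 2).measurableSet
  have hcoeff {U : Set (E n)} {x₀ : E n} {r : ℝ} (hU : U ⊆ halfBall n hn 2) (hr : 0 < r)
      (hUr : U ⊆ Metric.ball x₀ r) := eLpNorm_le_of_subset_ball hn0 hq hr hUr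
    (hbm.mono_measure (Measure.restrict_mono hU le_rfl)) hK
    (eLpNorm_restrict_le_of_subset (hn'.trans_le hq) hU hb)
  refine ⟨hu, fun {U x₀ r} hU hr hUr => ⟨by positivity, by positivity, ?_, hcoeff hU hr hUr⟩,
    fun {U x₀ r} hU hr hUr hd => ⟨by positivity, by positivity, ?_, hcoeff hU hr hUr⟩⟩
  · refine (eLpNorm_le_of_subset_ball hn0 hp two_pos (hU.trans (halfBall_subset_ball hn 2))
      (hfm.mono_measure (Measure.restrict_mono hU le_rfl)) hLnn
      (eLpNorm_restrict_le_of_subset (hn'.trans_le hp) hU (le_self_add.trans_eq hL.symm))).trans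
      (ENNReal.ofReal_le_ofReal ?_)
    rw [mul_assoc, mul_comm]
    gcongr
    exact le_add_of_nonneg_left (by positivity)
  · refine (eLpNorm_le_of_subset_ball hn0 hq hr hUr
      (hfm.mono_measure (Measure.restrict_mono hU le_rfl)) hLnn
      (eLpNorm_restrict_le_of_subset (hn'.trans_le hq)
        (show U ⊆ {x ∈ halfBall n hn 2 | lastC n hn x < d0} from fun x hx => ⟨hU hx, hd x hx⟩)
        (le_add_self.trans_eq hL.symm))).trans (ENNReal.ofReal_le_ofReal ?_)
    rw [mul_comm L.toReal]
    gcongr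
    exact le_add_of_nonneg_right (by positivity)

/-! ### Propagation of lower bounds in the interior -/

theorem exists_mul_rpow_le {α β : ℝ} (hα : 0 < α) (hβ : 0 < β) (k : ℝ) :
    ∃ ρ₀ > 0, ∀ ρ, 0 ≤ ρ → ρ ≤ ρ₀ → k * ρ ^ α ≤ β := by
  have hlim : Tendsto (fun ρ : ℝ => k * ρ ^ α) (𝓝 0) (𝓝 0) := by
    have := (Real.continuousAt_rpow_const 0 α (.inr hα.le)).tendsto.const_mul k
    rwa [Real.zero_rpow hα.ne', mul_zero] at this
  obtain ⟨ε, hε, h⟩ := Metric.eventually_nhds_iff.1 (hlim.eventually (gt_mem_nhds hβ))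
  refine ⟨ε / 2, half_pos hε, fun ρ hρ hρε => (h ?_).le⟩
  rw [Real.dist_0_eq_abs, abs_of_nonneg hρ]
  linarith

theorem exists_barrier_exponent (hlam : 0 < lam) (Lam : ℝ) (n : ℕ) :
    ∃ m : ℕ, m ≠ 0 ∧ 5 * Lam * n ≤ (m + 1) * lam := by
  obtain ⟨m, hm⟩ := exists_nat_ge (5 * Lam * n / lam)
  refine ⟨m + 1, m.succ_ne_zero, ((div_le_iff₀ hlam).1 hm).trans ?_⟩
  push_cast
  gcongr
  linarith

theorem hasHessianOn_mul_barrier_sub (T c : ℝ) (m : ℕ) (ρ : ℝ) (y : E n) (Ω : Set (E n)) :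
    HasHessianOn (fun x => T * (barrier m ρ y x - c)) (T • barrierGrad m ρ y)
      (T • barrierHess m ρ y) Ω := by
  convert ((hasHessianOn_barrier m ρ y Ω).const_smul T).add
    (HasHessianOn.affine (-(T * c)) (0 : E n) y Ω) using 1
  · funext x
    simp only [Pi.add_apply, Pi.smul_apply, smul_eq_mul, inner_zero_left]
    ring
  · exact (add_zero _).symm
  · exact (add_zero _).symm

theorem norm_smul_barrierGrad_le {m : ℕ} {ρ T : ℝ} {y x : E n} (hρ : 0 < ρ) (hT : 0 ≤ T)
    (hx : x ∈ Metric.ball y (4 * ρ)) : ‖(T • barrierGrad m ρ y) x‖ ≤ T * (8 * m / ρ) := by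
  rw [Pi.smul_apply, norm_smul, Real.norm_of_nonneg hT]
  gcongr
  exact norm_barrierGrad_le m hρ (mem_ball_iff_norm.1 hx).le

theorem barrier_eq_of_mem_sphere {ρ : ℝ} (hρ : ρ ≠ 0) (m : ℕ) {c : ℝ} {y x : E n}
    (hx : x ∈ Metric.sphere y (c * ρ)) : barrier m ρ y x = ((1 + c ^ 2) ^ m)⁻¹ := by
  rw [barrier, mem_sphere_iff_norm.1 hx, mul_pow, profile_mul_sq hρ]

theorem IsNonnegSupersolution.le_of_le_on_ball {b f u : E n → ℝ} {y : E n} {ρ T F B : ℝ} {m : ℕ}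
    (hu : IsNonnegSupersolution lam Lam b f u (Metric.ball y (4 * ρ))) (hn : n ≠ 0) (h0 : 0 < lam)
    (hL : lam ≤ Lam) (hm : 5 * Lam * n ≤ (m + 1) * lam) (hρ : 0 < ρ) (hT : 0 ≤ T)
    (huT : ∀ x ∈ Metric.ball y ρ, T ≤ u x) (hdata : DataBound b f (Metric.ball y (4 * ρ)) F B)
    (hB : B ≤ lam * unitBallNorm n / 2) :
    ∀ x ∈ Metric.ball y (4 * ρ), T * (barrier m ρ y x - ((17 : ℝ) ^ m)⁻¹) -
      256 * (m + 1) / (lam * unitBallNorm n) * ρ * (F + T / ρ * B) ≤ u x := by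
  have hLam : 0 ≤ Lam := (h0.trans_le hL).le
  have hω := unitBallNorm_pos n
  have hdist : ∀ z ∈ Metric.ball y (4 * ρ), ∀ w ∈ Metric.ball y (4 * ρ), ‖z - w‖ ≤ 8 * ρ := by
    intro z hz w hw
    rw [Metric.mem_ball] at hz hw
    rw [← dist_eq_norm]
    linarith [dist_triangle_right z w y]
  have htrace : ∀ z ∈ Metric.ball y (4 * ρ), u z < T * (barrier m ρ y z - ((17 : ℝ) ^ m)⁻¹) →
      ∀ A, IsElliptic lam Lam A → 0 ≤ traceMul A ((T • barrierHess m ρ y) z) := by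
    intro z hz huz A hA
    have hfar : ρ ≤ ‖z - y‖ := by
      by_contra! hlt
      have hle : barrier m ρ y z - ((17 : ℝ) ^ m)⁻¹ ≤ 1 :=
        (sub_le_self _ (by positivity)).trans (barrier_le_one m ρ y z)
      exact absurd ((huT z (mem_ball_iff_norm.2 hlt)).trans_lt huz)
        (not_lt.2 (mul_le_of_le_one_right hT hle))
    have hbar := le_traceMul_barrierHess hLam hm hρ (by linarith) (mem_ball_iff_norm.1 hz).le hA
    rw [Pi.smul_apply, map_smul, smul_eq_mul]
    exact mul_nonneg hT (le_trans (by positivity) hbar)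
  have hfrontier : ∀ z ∈ frontier (Metric.ball y (4 * ρ)),
      T * (barrier m ρ y z - ((17 : ℝ) ^ m)⁻¹) ≤ 0 := by
    intro z hz
    rw [frontier_ball y (by positivity)] at hz
    rw [barrier_eq_of_mem_sphere hρ.ne' m hz]
    norm_num
  intro x hx
  have hcomp := hu.comparison hn h0 hL (by positivity) hdist
    (hasHessianOn_mul_barrier_sub T _ m ρ y _) (fun z => norm_smul_barrierGrad_le hρ hT) htrace
    (continuousOn_univ.1 (hasHessianOn_mul_barrier_sub T _ m ρ y Set.univ).continuousOn)
    hfrontier (fun z hz => sub_le_self _ (hu.nonneg z hz)) hdata hB x hx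
  have hF := hdata.rhs_nonneg
  have hB0 := hdata.coeff_nonneg
  have hconst : 0 ≤ 256 * (m + 1) / (lam * unitBallNorm n) * ρ * (F + T / ρ * B) -
      4 / (lam * unitBallNorm n) * (8 * ρ) * (F + T * (8 * m / ρ) * B) := by
    calc (0 : ℝ) ≤ 32 / (lam * unitBallNorm n) * ((8 * m + 7) * ρ * F + 8 * T * B) := by
          positivity
      _ = _ := by
          field_simp
          ring
  linarith

/-- The constant `κ` by which a lower bound is multiplied when it is propagated from a ball to the
ball of twice its radius by the barrier of exponent `m`. -/
noncomputable def propagationFactor (m : ℕ) : ℝ := (((5 : ℝ) ^ m)⁻¹ - ((17 : ℝ) ^ m)⁻¹) / 2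

theorem propagationFactor_pos {m : ℕ} (hm : m ≠ 0) : 0 < propagationFactor m := by
  have : ((17 : ℝ) ^ m)⁻¹ < ((5 : ℝ) ^ m)⁻¹ := by
    gcongr
    norm_num
  unfold propagationFactor
  linarith

theorem propagationFactor_lt_one (m : ℕ) : propagationFactor m < 1 := by
  have : ((5 : ℝ) ^ m)⁻¹ ≤ 1 := inv_le_one_of_one_le₀ (one_le_pow₀ (by norm_num))
  have : (0 : ℝ) < ((17 : ℝ) ^ m)⁻¹ := by positivity
  unfold propagationFactor
  linarith

theorem le_barrier_of_mem_ball {ρ : ℝ} (hρ : 0 < ρ) (m : ℕ) {y x : E n}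
    (hx : x ∈ Metric.ball y (2 * ρ)) : ((5 : ℝ) ^ m)⁻¹ ≤ barrier m ρ y x := by
  have hx' := mem_ball_iff_norm.1 hx
  have h := profile_anti ρ m (s := ‖x - y‖ ^ 2) (t := 4 * ρ ^ 2) (by positivity)
    (by nlinarith [norm_nonneg (x - y)])
  rw [profile_mul_sq hρ.ne'] at h
  norm_num at h
  exact h

theorem IsHalfBallSupersolution.exists_propagation_ball (hn : 1 ≤ n) (h0 : 0 < lam)
    (hL : lam ≤ Lam) {α : ℝ} (hα : 0 < α) (d0 Kb : ℝ) :
    ∃ κ C ρ₀ : ℝ, 0 < κ ∧ κ < 1 ∧ 0 ≤ C ∧ 0 < ρ₀ ∧ ∀ {N : ℝ} {b f u : E n → ℝ},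
      IsHalfBallSupersolution hn lam Lam d0 α Kb N b f u → ∀ {y : E n} {ρ T : ℝ}, 0 < ρ → ρ ≤ ρ₀ →
      Metric.ball y (4 * ρ) ⊆ halfBall n hn 2 → (∀ x ∈ Metric.ball y ρ, T ≤ u x) →
      ∀ x ∈ Metric.ball y (2 * ρ), κ * T - C * N ≤ u x := by
  have hn0 : n ≠ 0 := by omega
  have hω := unitBallNorm_pos n
  obtain ⟨m, hm0, hm⟩ := exists_barrier_exponent h0 Lam n
  set κ := propagationFactor m with hκ
  have hκ0 : 0 < κ := propagationFactor_pos hm0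
  set C := 256 * (m + 1) / (lam * unitBallNorm n)
  have hC0 : 0 < C := by positivity
  obtain ⟨ρ₁, hρ₁, hsmall⟩ := exists_mul_rpow_le hα
    (lt_min (by positivity : 0 < lam * unitBallNorm n / 2) (div_pos hκ0 hC0)) Kb
  refine ⟨κ, C, min 1 (ρ₁ / 4), hκ0, propagationFactor_lt_one m, hC0.le, by positivity, ?_⟩
  intro N b f u hu y ρ T hρ hρρ hball huT x hx
  have hx4 : x ∈ Metric.ball y (4 * ρ) := Metric.ball_subset_ball (by linarith) hx
  have hdata := hu.dataBound hball (by positivity) subset_rfl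
  have hN := hdata.rhs_nonneg
  rcases le_or_gt T 0 with hT | hT
  · have := hu.isSupersolution.nonneg x (hball hx4)
    have : κ * T ≤ 0 := mul_nonpos_of_nonneg_of_nonpos hκ0.le hT
    have : 0 ≤ C * N := by positivity
    linarith
  have hB : Kb * (4 * ρ) ^ α ≤ min (lam * unitBallNorm n / 2) (κ / C) :=
    hsmall _ (by positivity) (by linarith [hρρ.trans (min_le_right _ _)])
  have hkey := (hu.isSupersolution.mono Metric.isOpen_ball hball).le_of_le_on_ball hn0 h0 hL hm hρ
    hT.le huT hdata (hB.trans (min_le_left _ _)) x hx4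
  set B := Kb * (4 * ρ) ^ α
  have hCB : C * B ≤ κ := (le_div_iff₀' hC0).1 (hB.trans (min_le_right _ _))
  have hbar : 2 * κ ≤ barrier m ρ y x - ((17 : ℝ) ^ m)⁻¹ := by
    rw [hκ, propagationFactor]
    linarith [le_barrier_of_mem_ball hρ m hx]
  calc κ * T - C * N ≤ T * (2 * κ) - (C * 1 * N + T * (C * B)) := by nlinarith
    _ ≤ T * (barrier m ρ y x - ((17 : ℝ) ^ m)⁻¹) - (C * ρ * N + T * (C * B)) := by
        gcongr
        exact hρρ.trans (min_le_left _ _)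
    _ = T * (barrier m ρ y x - ((17 : ℝ) ^ m)⁻¹) - C * ρ * (N + T / ρ * B) := by
        field_simp
    _ ≤ u x := hkey

theorem convex_halfBall (hn : 1 ≤ n) (R : ℝ) : Convex ℝ (halfBall n hn R) := by
  have hset : halfBall n hn R =
      Metric.ball 0 R ∩ {x | 0 < EuclideanSpace.proj ⟨n - 1, by omega⟩ x} := by
    ext x
    simp [halfBall, lastC]
  rw [hset]
  exact (convex_ball _ _).inter (convex_halfSpace_gt (EuclideanSpace.proj _).isLinear 0)

open scoped Pointwise in
theorem ball_lineMap_subset_of_convex {V : Type*} [NormedAddCommGroup V] [NormedSpace ℝ V]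
    {D : Set V} (hD : Convex ℝ D) {y z : V} {ρ s t : ℝ} (hρ : 0 < ρ) (hs : 0 < s)
    (ht : t ∈ Set.Icc (0 : ℝ) 1) (hy : Metric.ball y ρ ⊆ D) (hz : Metric.ball z s ⊆ D) :
    Metric.ball (AffineMap.lineMap y z t) (AffineMap.lineMap ρ s t) ⊆ D := by
  rcases ht.1.eq_or_lt with rfl | ht0
  · simpa using hy
  rcases ht.2.eq_or_lt with rfl | ht1
  · simpa using hz
  have ht1' : 0 < 1 - t := sub_pos.2 ht1
  calc Metric.ball (AffineMap.lineMap y z t) (AffineMap.lineMap ρ s t)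
      = (1 - t) • Metric.ball y ρ + t • Metric.ball z s := by
        rw [smul_ball ht1'.ne', smul_ball ht0.ne', Real.norm_of_nonneg ht1'.le,
          Real.norm_of_nonneg ht0.le, ball_add_ball (by positivity) (by positivity),
          AffineMap.lineMap_apply_module, AffineMap.lineMap_apply_module]
        rfl
    _ ⊆ (1 - t) • D + t • D := by gcongr
    _ ⊆ D := convex_iff_pointwise_add_subset.1 hD ht1'.le ht0.le (by ring)

/-- The centre of the ball of radius `r` in the family of balls interpolating linearly between
`B_ρ(y)` and `B_s(z)`. -/
noncomputable def chainCenter (y z : E n) (ρ s r : ℝ) : E n :=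
  AffineMap.lineMap y z ((r - ρ) / (s - ρ))

section Chain

variable {y z : E n} {ρ s r r' : ℝ}

theorem ball_chainCenter_subset {D : Set (E n)} (hD : Convex ℝ D) (hρ : 0 < ρ) (hρs : ρ < s)
    (hr : ρ ≤ r) (hrs : r ≤ s) (hy : Metric.ball y (4 * ρ) ⊆ D) (hz : Metric.ball z (4 * s) ⊆ D) :
    Metric.ball (chainCenter y z ρ s r) (4 * r) ⊆ D := by
  have hsρ : 0 < s - ρ := sub_pos.2 hρs
  have hradius : AffineMap.lineMap (4 * ρ) (4 * s) ((r - ρ) / (s - ρ)) = 4 * r := by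
    rw [AffineMap.lineMap_apply, vsub_eq_sub, vadd_eq_add, smul_eq_mul]
    field_simp
    ring
  have hball := ball_lineMap_subset_of_convex hD (by positivity) (by linarith)
    ⟨div_nonneg (sub_nonneg.2 hr) hsρ.le, (div_le_one hsρ).2 (by linarith)⟩ hy hz
  rwa [hradius] at hball

theorem ball_chainCenter_subset_ball (hs : s ≤ 1) (hρs : ρ ≤ s / 2) (hyz : ‖z - y‖ ≤ 4)
    (hs0 : 0 < s) (hr0 : 0 ≤ r) (hrr' : r ≤ r') (hr' : r' ≤ (1 + s / 10) * r) :
    Metric.ball (chainCenter y z ρ s r') r' ⊆ Metric.ball (chainCenter y z ρ s r) (2 * r) := by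
  have : s / 2 ≤ s - ρ := by linarith
  have hsρ0 : 0 < s - ρ := by linarith
  have hcenter : dist (chainCenter y z ρ s r') (chainCenter y z ρ s r) ≤ 4 * (r / 5) := by
    rw [chainCenter, chainCenter, dist_lineMap_lineMap, dist_comm y z, dist_eq_norm z y, mul_comm,
      Real.dist_eq, ← sub_div, sub_sub_sub_cancel_right,
      abs_of_nonneg (div_nonneg (sub_nonneg.2 hrr') hsρ0.le)]
    have : (r' - r) / (s - ρ) ≤ r / 5 := by
      rw [div_le_iff₀ hsρ0]
      nlinarith
    gcongr
  refine Metric.ball_subset_ball' ?_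
  nlinarith

end Chain

theorem IsHalfBallSupersolution.exists_propagation_chain (hn : 1 ≤ n) (h0 : 0 < lam)
    (hL : lam ≤ Lam) {α : ℝ} (hα : 0 < α) (d0 Kb : ℝ) :
    ∃ κ C ρ₀ : ℝ, 0 < κ ∧ 0 ≤ C ∧ 0 < ρ₀ ∧ ∀ {N : ℝ} {b f u : E n → ℝ},
      IsHalfBallSupersolution hn lam Lam d0 α Kb N b f u → ∀ {y z : E n} {ρ s T : ℝ}, 0 < ρ →
      ρ ≤ s / 2 → s ≤ ρ₀ → s ≤ 1 → Metric.ball y (4 * ρ) ⊆ halfBall n hn 2 →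
      Metric.ball z (4 * s) ⊆ halfBall n hn 2 → (∀ x ∈ Metric.ball y ρ, T ≤ u x) →
      ∀ (k : ℕ) {r : ℝ}, ρ ≤ r → r ≤ s → r ≤ ρ * (1 + s / 10) ^ k →
      ∀ x ∈ Metric.ball (chainCenter y z ρ s r) r, κ ^ k * T - C * N ≤ u x := by
  obtain ⟨κ, C, ρ₀, hκ0, hκ1, hC, hρ₀, hball⟩ :=
    exists_propagation_ball hn h0 hL hα d0 Kb
  have hκ1' : 0 < 1 - κ := sub_pos.2 hκ1
  refine ⟨κ, C / (1 - κ), ρ₀, hκ0, by positivity, hρ₀, ?_⟩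
  intro N b f u hu y z ρ s T hρ hρs hs hs1 hy hz huT k
  have hyz : ‖z - y‖ ≤ 4 := by
    have hy2 := (hy (Metric.mem_ball_self (by positivity))).1
    have hz2 := (hz (Metric.mem_ball_self (by linarith))).1
    linarith [norm_sub_le z y]
  have hs0 : 0 < s := by linarith
  have hN : 0 ≤ C / (1 - κ) * N :=
    mul_nonneg (by positivity) (hu.dataBound hy (by positivity) subset_rfl).rhs_nonneg
  induction k with
  | zero =>
    intro r hρr hrs hr x hx
    obtain rfl : ρ = r := le_antisymm hρr (by simpa using hr)
    have hx' : x ∈ Metric.ball y ρ := by simpa [chainCenter] using hx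
    linarith [huT x hx', pow_zero κ]
  | succ k ih =>
    intro r hρr hrs hr x hx
    have hγ : 0 < 1 + s / 10 := by positivity
    set r₀ := max ρ (r / (1 + s / 10))
    have hr₀ρ : ρ ≤ r₀ := le_max_left _ _
    have hr₀r : r₀ ≤ r := max_le hρr (div_le_self (hρ.le.trans hρr) (by linarith))
    have hr₀k : r₀ ≤ ρ * (1 + s / 10) ^ k := by
      refine max_le (le_mul_of_one_le_right hρ.le (one_le_pow₀ (by linarith))) ?_
      rw [div_le_iff₀ hγ, mul_assoc, ← pow_succ]
      exact hr
    have hstep := hball hu (hρ.trans_le hr₀ρ) ((hr₀r.trans hrs).trans hs)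
      (ball_chainCenter_subset (convex_halfBall hn 2) hρ (by linarith) hr₀ρ (hr₀r.trans hrs) hy hz)
      (ih hr₀ρ (hr₀r.trans hrs) hr₀k) x
      (ball_chainCenter_subset_ball hs1 hρs hyz hs0 (hρ.le.trans hr₀ρ) hr₀r
        ((div_le_iff₀' hγ).1 (le_max_right _ _)) hx)
    calc κ ^ (k + 1) * T - C / (1 - κ) * N = κ * (κ ^ k * T - C / (1 - κ) * N) - C * N := by
          field_simp
          ring
      _ ≤ u x := hstep

theorem exists_mul_pow_le_pow {κ s : ℝ} (hκ : 0 < κ) (hs : 0 < s) (hs1 : s ≤ 1) :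
    ∃ (c : ℝ) (M : ℕ), 0 < c ∧ ∀ ρ, 0 < ρ → ρ ≤ s →
      ∃ k : ℕ, s ≤ ρ * (1 + s / 10) ^ k ∧ c * ρ ^ M ≤ κ ^ k := by
  set γ := 1 + s / 10 with hγ
  have hγ1 : 1 < γ := by linarith
  obtain ⟨M, hM⟩ := pow_unbounded_of_one_lt (1 / κ) hγ1
  refine ⟨((2 * s) ^ M)⁻¹, M, by positivity, fun ρ hρ hρs => ?_⟩
  obtain ⟨k, hk, hk'⟩ := exists_nat_pow_near ((one_le_div hρ).2 hρs) hγ1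
  refine ⟨k + 1, ((div_lt_iff₀' hρ).1 hk').le, ?_⟩
  have hκM : (γ ^ M)⁻¹ ≤ κ := inv_le_of_inv_le₀ hκ (by simpa using hM.le)
  have hγk : γ ^ (k + 1) ≤ 2 * s / ρ := by
    calc γ ^ (k + 1) = γ ^ k * γ := pow_succ γ k
      _ ≤ s / ρ * 2 := by
          gcongr
          linarith
      _ = 2 * s / ρ := by ring
  calc ((2 * s) ^ M)⁻¹ * ρ ^ M = ((2 * s / ρ) ^ M)⁻¹ := by
        rw [div_pow]
        field_simp
    _ ≤ ((γ ^ (k + 1)) ^ M)⁻¹ := by gcongr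
    _ = ((γ ^ M)⁻¹) ^ (k + 1) := by rw [inv_pow, ← pow_mul, ← pow_mul, mul_comm]
    _ ≤ κ ^ (k + 1) := by gcongr

theorem IsHalfBallSupersolution.exists_propagation (hn : 1 ≤ n) (h0 : 0 < lam) (hL : lam ≤ Lam)
    {α : ℝ} (hα : 0 < α) (d0 Kb : ℝ) :
    ∃ ρ₀ > 0, ∀ s, 0 < s → s ≤ ρ₀ → s ≤ 1 → ∃ (c C : ℝ) (M : ℕ), 0 < c ∧ 0 ≤ C ∧
      ∀ {N : ℝ} {b f u : E n → ℝ}, IsHalfBallSupersolution hn lam Lam d0 α Kb N b f u →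
      ∀ {y z : E n} {ρ T : ℝ}, 0 < ρ → ρ ≤ s / 2 → 0 ≤ T →
      Metric.ball y (4 * ρ) ⊆ halfBall n hn 2 → Metric.ball z (4 * s) ⊆ halfBall n hn 2 →
      (∀ x ∈ Metric.ball y ρ, T ≤ u x) →
      ∀ x ∈ Metric.ball z s, c * ρ ^ M * T - C * N ≤ u x := by
  obtain ⟨κ, C, ρ₀, hκ0, hC, hρ₀, hchain⟩ :=
    exists_propagation_chain hn h0 hL hα d0 Kb
  refine ⟨ρ₀, hρ₀, fun s hs hsρ₀ hs1 => ?_⟩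
  obtain ⟨c, M, hc, hpow⟩ := exists_mul_pow_le_pow hκ0 hs hs1
  refine ⟨c, C, M, hc, hC, ?_⟩
  intro N b f u hu y z ρ T hρ hρs hT hy hz huT x hx
  obtain ⟨k, hk, hck⟩ := hpow ρ hρ (by linarith)
  have hcenter : chainCenter y z ρ s s = z := by
    rw [chainCenter, div_self (by linarith), AffineMap.lineMap_apply_one]
  have hux := hchain hu hρ hρs hsρ₀ hs1 hy hz huT k (by linarith) le_rfl hk x
    (by rwa [hcenter])
  have : c * ρ ^ M * T ≤ κ ^ k * T := by gcongr
  linarith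

/-! ### Boundary growth -/

section HopfBarrier

variable {V : Type*} [NormedAddCommGroup V] [InnerProductSpace ℝ V]

/-- The half of the ball of radius `r` centred at `x₀` that lies on the side of the unit vector
`e`. -/
def openHalfBall (e x₀ : V) (r : ℝ) : Set V := Metric.ball x₀ r ∩ {z | 0 < inner ℝ e (z - x₀)}

/-- The quadratic lower barrier for the Hopf lemma on `openHalfBall e x₀ r`. On the boundary of that
half-ball it lies below the positive part of `a * s - σ`, where `s` is the height over the flat
part, and it vanishes at `x₀`. -/
noncomputable def hopfBarrier (e x₀ : V) (Q a σ r : ℝ) (z : V) : ℝ :=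
  (a - σ * Q / r) * inner ℝ e (z - x₀) - σ / r ^ 2 * ‖z - x₀‖ ^ 2
    + σ * Q / r ^ 2 * inner ℝ e (z - x₀) ^ 2

variable {e x₀ z : V} {Q a σ r : ℝ}

theorem isOpen_openHalfBall (e x₀ : V) (r : ℝ) : IsOpen (openHalfBall e x₀ r) :=
  Metric.isOpen_ball.inter (isOpen_lt continuous_const (by fun_prop))

theorem inner_le_of_norm_sub_le (he : ‖e‖ = 1) (hz : ‖z - x₀‖ ≤ r) : inner ℝ e (z - x₀) ≤ r :=
  (real_inner_le_norm e (z - x₀)).trans (by rwa [he, one_mul])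

theorem hasHessianOn_hopfBarrier [CompleteSpace V] (e x₀ : V) (Q a σ r : ℝ) (Ω : Set V) :
    HasHessianOn (hopfBarrier e x₀ Q a σ r)
      (fun z => (a - σ * Q / r) • e - (2 * (σ / r ^ 2)) • (z - x₀)
        + (2 * (σ * Q / r ^ 2) * inner ℝ e (z - x₀)) • e)
      (fun _ => (2 * (σ / r ^ 2)) • (Q • InnerProductSpace.rankOne ℝ e e - 1)) Ω := by
  convert ((HasHessianOn.affine 0 ((a - σ * Q / r) • e) x₀ Ω).add
    ((HasHessianOn.normSq x₀ Ω).const_smul (-(σ / r ^ 2)))).add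
    ((HasHessianOn.innerSq e x₀ Ω).const_smul (σ * Q / r ^ 2)) using 1
  · funext z
    simp only [hopfBarrier, Pi.add_apply, Pi.smul_apply, smul_eq_mul, inner_smul_left, conj_trivial]
    ring
  · funext z
    simp only [Pi.add_apply, Pi.smul_apply]
    module
  · funext z
    simp only [Pi.add_apply, Pi.smul_apply, Pi.zero_apply]
    module

theorem norm_gradient_hopfBarrier_le (he : ‖e‖ = 1) (hQ : 1 ≤ Q) (ha : 0 ≤ a) (hσ : 0 ≤ σ)
    (hr : 0 < r) (hz : z ∈ openHalfBall e x₀ r) :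
    ‖(a - σ * Q / r) • e - (2 * (σ / r ^ 2)) • (z - x₀)
      + (2 * (σ * Q / r ^ 2) * inner ℝ e (z - x₀)) • e‖ ≤ a + 5 * Q * σ / r := by
  have hzr := (mem_ball_iff_norm.1 hz.1).le
  have hpos : 0 < inner ℝ e (z - x₀) := hz.2
  have hlin : ‖(a - σ * Q / r) • e‖ ≤ a + σ * Q / r := by
    rw [norm_smul, he, mul_one]
    exact (norm_sub_le _ _).trans_eq (by
      rw [Real.norm_of_nonneg ha, Real.norm_of_nonneg (by positivity)])
  have hball : ‖(2 * (σ / r ^ 2)) • (z - x₀)‖ ≤ 2 * Q * σ / r := by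
    rw [norm_smul, Real.norm_of_nonneg (by positivity)]
    calc 2 * (σ / r ^ 2) * ‖z - x₀‖ ≤ 2 * (σ / r ^ 2) * (Q * r) := by
          gcongr
          nlinarith
      _ = 2 * Q * σ / r := by field_simp
  have hquad : ‖(2 * (σ * Q / r ^ 2) * inner ℝ e (z - x₀)) • e‖ ≤ 2 * Q * σ / r := by
    rw [norm_smul, he, mul_one, Real.norm_of_nonneg (by positivity)]
    calc 2 * (σ * Q / r ^ 2) * inner ℝ e (z - x₀) ≤ 2 * (σ * Q / r ^ 2) * r := by
          gcongr
          exact inner_le_of_norm_sub_le he hzr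
      _ = 2 * Q * σ / r := by field_simp
  have hsum : a + σ * Q / r + 2 * Q * σ / r + 2 * Q * σ / r = a + 5 * Q * σ / r := by ring
  refine (norm_add_le _ _).trans ?_
  linarith [norm_sub_le ((a - σ * Q / r) • e) ((2 * (σ / r ^ 2)) • (z - x₀))]

theorem hopfBarrier_le_of_mem_frontier (he : ‖e‖ = 1) (hQ : 0 ≤ Q) (hσ : 0 ≤ σ) (hr : 0 < r)
    (hz : z ∈ frontier (openHalfBall e x₀ r)) :
    hopfBarrier e x₀ Q a σ r z ≤ max (a * inner ℝ e (z - x₀) - σ) 0 := by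
  have hclosed : IsClosed (Metric.closedBall x₀ r ∩ {z | 0 ≤ inner ℝ e (z - x₀)}) :=
    Metric.isClosed_closedBall.inter (isClosed_le continuous_const (by fun_prop))
  have hsub : openHalfBall e x₀ r ⊆ Metric.closedBall x₀ r ∩ {z | 0 ≤ inner ℝ e (z - x₀)} :=
    Set.inter_subset_inter Metric.ball_subset_closedBall
      (Set.ofPred_subset_ofPred.2 fun _ hw => hw.le)
  obtain ⟨hzr, hz0⟩ := closure_minimal hsub hclosed hz.1
  rw [mem_closedBall_iff_norm] at hzr
  rw [(isOpen_openHalfBall e x₀ r).frontier_eq] at hz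
  rcases hzr.lt_or_eq with hlt | heq
  · have hflat : inner ℝ e (z - x₀) = 0 := le_antisymm
      (not_lt.1 fun hpos => hz.2 ⟨mem_ball_iff_norm.2 hlt, hpos⟩) hz0
    refine le_max_of_le_right ?_
    have : 0 ≤ σ / r ^ 2 * ‖z - x₀‖ ^ 2 := by positivity
    simp only [hopfBarrier, hflat]
    linarith
  · refine le_max_of_le_left ?_
    have hs := mul_nonneg (a := σ * Q / r ^ 2 * inner ℝ e (z - x₀))
      (mul_nonneg (by positivity) hz0) (sub_nonneg.2 (inner_le_of_norm_sub_le he hzr))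
    rw [← sub_nonneg]
    refine hs.trans_eq ?_
    rw [hopfBarrier, heq]
    field_simp
    ring

theorem le_hopfBarrier_add_smul (he : ‖e‖ = 1) (hQ : 0 ≤ Q) (hσ : 0 ≤ σ) {t : ℝ} (ht : 0 ≤ t)
    (htr : t ≤ r) (hr : 0 < r) :
    (a - (Q + 1) * σ / r) * t ≤ hopfBarrier e x₀ Q a σ r (x₀ + t • e) := by
  rw [← sub_nonneg]
  have hsq : 0 ≤ σ / r ^ 2 * (t * (r - t)) + σ * Q / r ^ 2 * t ^ 2 :=
    add_nonneg (mul_nonneg (by positivity) (mul_nonneg ht (sub_nonneg.2 htr))) (by positivity)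
  refine hsq.trans_eq ?_
  rw [hopfBarrier, add_sub_cancel_left, norm_smul, he, mul_one, Real.norm_of_nonneg ht,
    inner_smul_right, real_inner_self_eq_norm_sq, he]
  field_simp
  ring

end HopfBarrier

theorem IsElliptic.nonneg_traceMul_mul_rankOne_sub_one {A : Matrix (Fin n) (Fin n) ℝ}
    (hA : IsElliptic lam Lam A) {Q : ℝ} (hQ0 : 0 ≤ Q) (hQ : Lam * n ≤ Q * lam) {e : E n}
    (he : ‖e‖ = 1) : 0 ≤ traceMul A (Q • InnerProductSpace.rankOne ℝ e e - 1) := by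
  have hrank := mul_le_mul_of_nonneg_left (hA.mul_norm_sq_le_traceMul_rankOne e) hQ0
  rw [he, one_pow, mul_one] at hrank
  rw [map_sub, map_smul, smul_eq_mul]
  linarith [hA.traceMul_one_le]

theorem IsNonnegSupersolution.hopf_improvement {b f u : E n → ℝ} {e x₀ : E n} {Q a σ r F B t : ℝ}
    (hu : IsNonnegSupersolution lam Lam b f u (openHalfBall e x₀ r)) (hn : n ≠ 0) (h0 : 0 < lam)
    (hL : lam ≤ Lam) (he : ‖e‖ = 1) (hQ1 : 1 ≤ Q) (hQ : Lam * n ≤ Q * lam) (ha : 0 ≤ a)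
    (hσ : 0 ≤ σ) (hr : 0 < r) (hau : ∀ x ∈ openHalfBall e x₀ r, a * inner ℝ e (x - x₀) - σ ≤ u x)
    (hdata : DataBound b f (openHalfBall e x₀ r) F B) (hB : B ≤ lam * unitBallNorm n / 2)
    (ht : 0 < t) (htr : t < r) :
    (a - (Q + 1) * σ / r) * t
      - 4 / (lam * unitBallNorm n) * (2 * r) * (F + (a + 5 * Q * σ / r) * B) ≤ u (x₀ + t • e) := by
  have hQ0 : 0 ≤ Q := by linarith
  have hh := hasHessianOn_hopfBarrier e x₀ Q a σ r
  have hcont : Continuous (hopfBarrier e x₀ Q a σ r) := by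
    unfold hopfBarrier
    fun_prop
  have hdist : ∀ x ∈ openHalfBall e x₀ r, ∀ y ∈ openHalfBall e x₀ r, ‖x - y‖ ≤ 2 * r := by
    intro x hx y hy
    have hxb := Metric.mem_ball.1 hx.1
    have hyb := Metric.mem_ball.1 hy.1
    rw [← dist_eq_norm]
    linarith [dist_triangle_right x y x₀]
  have hmem : x₀ + t • e ∈ openHalfBall e x₀ r := by
    refine ⟨mem_ball_iff_norm.2 ?_, ?_⟩
    · rwa [add_sub_cancel_left, norm_smul, he, mul_one, Real.norm_of_nonneg ht.le]
    · change 0 < inner ℝ e (x₀ + t • e - x₀)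
      rwa [add_sub_cancel_left, inner_smul_right, real_inner_self_eq_norm_sq, he, one_pow, mul_one]
  have hcomp := hu.comparison (φ := fun z => hopfBarrier e x₀ Q a σ r z
      - max (a * inner ℝ e (z - x₀) - σ) 0) hn h0 hL (by positivity) hdist (hh _)
    (fun x hx => norm_gradient_hopfBarrier_le he hQ1 ha hσ hr hx)
    (fun x _ _ A hA => by
      rw [map_smul, smul_eq_mul]
      exact mul_nonneg (by positivity) (hA.nonneg_traceMul_mul_rankOne_sub_one hQ0 hQ he))
    (by fun_prop) (fun x hx => sub_nonpos.2 (hopfBarrier_le_of_mem_frontier he hQ0 hσ hr hx))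
    (fun x hx => sub_le_sub_left (max_le (hau x hx) (hu.nonneg x hx)) _) hdata hB _ hmem
  linarith [le_hopfBarrier_add_smul (x₀ := x₀) (a := a) he hQ0 hσ ht.le htr.le hr]

/-- The last vector of the standard basis, normal to the flat boundary. -/
noncomputable def lastVec (hn : 1 ≤ n) : E n :=
  EuclideanSpace.single ⟨n - 1, by omega⟩ (1 : ℝ)

/-- The orthogonal projection onto the hyperplane `x_n = 0`. -/
noncomputable def flatProj (hn : 1 ≤ n) (x : E n) : E n := x - lastC n hn x • lastVec hn

theorem inner_lastVec (hn : 1 ≤ n) (x : E n) : inner ℝ (lastVec hn) x = lastC n hn x := by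
  rw [lastVec, EuclideanSpace.inner_single_left, map_one, one_mul, lastC]

theorem norm_lastVec (hn : 1 ≤ n) : ‖lastVec hn‖ = 1 := by simp [lastVec]

theorem lastC_sub (hn : 1 ≤ n) (x y : E n) : lastC n hn (x - y) = lastC n hn x - lastC n hn y :=
  rfl

theorem lastC_add_smul_lastVec (hn : 1 ≤ n) (x : E n) (t : ℝ) :
    lastC n hn (x + t • lastVec hn) = lastC n hn x + t := by
  simp [lastC, lastVec]

theorem lastC_flatProj (hn : 1 ≤ n) (x : E n) : lastC n hn (flatProj hn x) = 0 := by
  simp [flatProj, lastC, lastVec]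

theorem flatProj_add_lastC_smul (hn : 1 ≤ n) (x : E n) :
    flatProj hn x + lastC n hn x • lastVec hn = x := sub_add_cancel _ _

theorem abs_lastC_le (hn : 1 ≤ n) (x : E n) : |lastC n hn x| ≤ ‖x‖ := by
  simpa only [inner_lastVec, norm_lastVec, one_mul] using abs_real_inner_le_norm (lastVec hn) x

theorem norm_flatProj_le (hn : 1 ≤ n) (x : E n) : ‖flatProj hn x‖ ≤ ‖x‖ := by
  refine le_of_sq_le_sq ?_ (norm_nonneg _)
  rw [flatProj, norm_sub_sq_real, inner_smul_right, real_inner_comm, inner_lastVec, norm_smul,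
    norm_lastVec, mul_one, Real.norm_eq_abs, sq_abs]
  nlinarith [sq_nonneg (lastC n hn x)]

theorem abs_lastC_sub_lt_of_mem_ball (hn : 1 ≤ n) {x y : E n} {r : ℝ} (hx : x ∈ Metric.ball y r) :
    |lastC n hn x - lastC n hn y| < r :=
  (lastC_sub hn x y ▸ abs_lastC_le hn (x - y)).trans_lt (mem_ball_iff_norm.1 hx)

theorem ball_subset_halfBall {hn : 1 ≤ n} {y : E n} {r R : ℝ} (hR : ‖y‖ + r ≤ R)
    (hr : r ≤ lastC n hn y) : Metric.ball y r ⊆ halfBall n hn R := by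
  intro x hx
  refine ⟨?_, ?_⟩
  · linarith [norm_le_norm_add_norm_sub' x y, mem_ball_iff_norm.1 hx]
  · linarith [(abs_lt.1 (abs_lastC_sub_lt_of_mem_ball hn hx)).1]

theorem nonempty_halfBall (hn : 1 ≤ n) {R : ℝ} (hR : 0 < R) : (halfBall n hn R).Nonempty := by
  refine ⟨(R / 2) • lastVec hn, ?_, ?_⟩
  · rw [norm_smul, norm_lastVec, mul_one, Real.norm_of_nonneg (by positivity)]
    linarith
  · simpa [lastC, lastVec] using hR

theorem mem_openHalfBall_lastVec {hn : 1 ≤ n} {x₀ : E n} (hx₀ : lastC n hn x₀ = 0) {r : ℝ}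
    {x : E n} : x ∈ openHalfBall (lastVec hn) x₀ r ↔ ‖x - x₀‖ < r ∧ 0 < lastC n hn x := by
  rw [openHalfBall, Set.mem_inter_iff, mem_ball_iff_norm, Set.mem_ofPred_eq, inner_lastVec,
    lastC_sub, hx₀, sub_zero]

/-- `u` lies above the linear function `a * x_n - τ * r` in the layer `0 < x_n ≤ r`, over the points
of the flat boundary of norm at most `1 + 2 * r`. -/
def AboveLinear (hn : 1 ≤ n) (u : E n → ℝ) (a τ r : ℝ) : Prop :=
  ∀ x, 0 < lastC n hn x → lastC n hn x ≤ r → ‖flatProj hn x‖ ≤ 1 + 2 * r →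
    a * lastC n hn x - τ * r ≤ u x

theorem AboveLinear.mono {hn : 1 ≤ n} {u : E n → ℝ} {a a' τ τ' r : ℝ}
    (h : AboveLinear hn u a τ r) (ha : a' ≤ a) (hτ : τ ≤ τ') (hr : 0 ≤ r) :
    AboveLinear hn u a' τ' r := fun x hx hxr hxn =>
  (sub_le_sub (mul_le_mul_of_nonneg_right ha hx.le) (mul_le_mul_of_nonneg_right hτ hr)).trans
    (h x hx hxr hxn)

theorem half_mul_lastC_le_of_aboveLinear {hn : 1 ≤ n} {u : E n → ℝ} {a τ θ r : ℝ} (hθ : 0 ≤ θ)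
    (hτ : 0 ≤ τ) (hslope : 2 * τ ≤ a / 2)
    (h : ∀ k : ℕ, AboveLinear hn u (a / 2 * (1 + θ ^ k)) (τ * θ ^ k) (r / 2 ^ k)) {x : E n}
    (hx : x ∈ halfBall n hn 1) (hxr : lastC n hn x ≤ r) : a / 2 * lastC n hn x ≤ u x := by
  have hx0 : 0 < lastC n hn x := hx.2
  have hr : 0 < r := hx0.trans_le hxr
  obtain ⟨k, hk, hk'⟩ := exists_nat_pow_near ((one_le_div₀ hx0).2 hxr) (one_lt_two (α := ℝ))
  have hxk : lastC n hn x ≤ r / 2 ^ k := (le_div_comm₀ (by positivity) hx0).1 hk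
  have hkx : r / 2 ^ k ≤ 2 * lastC n hn x := by
    rw [div_lt_iff₀ hx0, pow_succ] at hk'
    rw [div_le_iff₀ (by positivity)]
    linarith
  have hnorm : ‖flatProj hn x‖ ≤ 1 + 2 * (r / 2 ^ k) := by
    have : 0 < r / 2 ^ k := by positivity
    linarith [norm_flatProj_le hn x, hx.1]
  calc a / 2 * lastC n hn x
      ≤ a / 2 * lastC n hn x + (a / 2 - 2 * τ) * θ ^ k * lastC n hn x :=
        le_add_of_nonneg_right (mul_nonneg (mul_nonneg (by linarith) (by positivity)) hx0.le)
    _ = a / 2 * (1 + θ ^ k) * lastC n hn x - τ * θ ^ k * (2 * lastC n hn x) := by ring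
    _ ≤ a / 2 * (1 + θ ^ k) * lastC n hn x - τ * θ ^ k * (r / 2 ^ k) := by gcongr
    _ ≤ u x := h k x hx0 hxk hnorm

theorem le_barrier_sub_of_norm_sub_eq {r t : ℝ} (hr : 0 < r) (ht : 0 ≤ t) (htr : t ≤ r) (m : ℕ)
    {x y : E n} (hxy : ‖x - y‖ = r - t) :
    16 * m * ((17 : ℝ) ^ (m + 1))⁻¹ * (t / r) ≤ barrier m (r / 4) y x - ((17 : ℝ) ^ m)⁻¹ := by
  have htangent := profile_tangent_le (r / 4) m (s := ‖x - y‖ ^ 2) (t := 16 * (r / 4) ^ 2)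
    (by positivity) (by positivity)
  rw [profile_mul_sq (by positivity), profile_mul_sq (by positivity),
    show (1 + 16 : ℝ) = 17 by norm_num] at htangent
  rw [barrier]
  refine le_sub_iff_add_le'.2 (le_trans ?_ htangent)
  have hquot : t / r ≤ (2 * r * t - t ^ 2) / r ^ 2 := by
    rw [div_le_div_iff₀ hr (by positivity)]
    nlinarith [mul_nonneg ht hr.le, mul_nonneg ht (sub_nonneg.2 htr)]
  calc ((17 : ℝ) ^ m)⁻¹ + 16 * m * ((17 : ℝ) ^ (m + 1))⁻¹ * (t / r)
      ≤ ((17 : ℝ) ^ m)⁻¹ + 16 * m * ((17 : ℝ) ^ (m + 1))⁻¹ * ((2 * r * t - t ^ 2) / r ^ 2) := by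
        gcongr
    _ = _ := by
        rw [hxy]
        field_simp
        ring

namespace IsHalfBallSupersolution

variable {hn : 1 ≤ n} {d0 α Kb N : ℝ} {b f u : E n → ℝ}

theorem aboveLinear_of_le_on_ball (hu : IsHalfBallSupersolution hn lam Lam d0 α Kb N b f u)
    (h0 : 0 < lam) (hL : lam ≤ Lam) {m : ℕ} (hm : 5 * Lam * n ≤ (m + 1) * lam) {r T : ℝ}
    (hr : 0 < r) (hr8 : r ≤ 1 / 8) (hrd : 2 * r ≤ d0) (hB : Kb * r ^ α ≤ lam * unitBallNorm n / 2)
    (hT : 0 ≤ T)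
    (huT : ∀ y, lastC n hn y = 0 → ‖y‖ ≤ 1 + 2 * r →
      ∀ x ∈ Metric.ball (y + r • lastVec hn) (r / 4), T ≤ u x) :
    AboveLinear hn u (16 * m * ((17 : ℝ) ^ (m + 1))⁻¹ * T / r)
      (256 * (m + 1) / (lam * unitBallNorm n) * r ^ α * (N + T / r * Kb)) r := by
  intro x hx hxr hxn
  have hω := unitBallNorm_pos n
  set t := lastC n hn x
  set y := flatProj hn x + r • lastVec hn
  have hy : lastC n hn y = r := by rw [lastC_add_smul_lastVec, lastC_flatProj, zero_add]
  have hynorm : ‖y‖ ≤ 1 + 3 * r := by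
    refine (norm_add_le _ _).trans ?_
    rw [norm_smul, norm_lastVec, Real.norm_of_nonneg hr.le]
    linarith
  have hr4 : 4 * (r / 4) = r := by ring
  have hball : Metric.ball y (4 * (r / 4)) ⊆ halfBall n hn 2 :=
    ball_subset_halfBall (by linarith) (by rw [hr4, hy])
  have hxy : ‖x - y‖ = r - t := by
    have : x - y = (t - r) • lastVec hn := by
      simp only [y, flatProj]
      module
    rw [this, norm_smul, norm_lastVec, mul_one, Real.norm_of_nonpos (by linarith), neg_sub]
  have hdata := hu.dataBound_of_lastC_lt hball hr (by rw [hr4]) fun z hz => by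
    rw [hr4] at hz
    linarith [(abs_lt.1 (abs_lastC_sub_lt_of_mem_ball hn hz)).2]
  have hbound := (hu.isSupersolution.mono Metric.isOpen_ball hball).le_of_le_on_ball (by omega) h0
    hL hm (by positivity) hT (huT _ (lastC_flatProj hn x) hxn) hdata hB x
    (mem_ball_iff_norm.2 (by linarith))
  have hN : 0 ≤ N * r ^ α := hdata.rhs_nonneg
  have hgrowth := mul_le_mul_of_nonneg_left (le_barrier_sub_of_norm_sub_eq hr hx.le hxr m hxy) hT
  refine le_trans ?_ hbound
  calc _ = T * (16 * m * ((17 : ℝ) ^ (m + 1))⁻¹ * (t / r)) - 256 * (m + 1) /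
          (lam * unitBallNorm n) * (r / 4) * (4 * (N * r ^ α) + T / (r / 4) * (Kb * r ^ α)) := by
        field_simp
    _ ≤ _ := by
        gcongr ?_ - _ * (?_ + _)
        linarith

theorem aboveLinear_half (hu : IsHalfBallSupersolution hn lam Lam d0 α Kb N b f u)
    (h0 : 0 < lam) (hL : lam ≤ Lam) {Q : ℝ} (hQ1 : 1 ≤ Q) (hQ : Lam * n ≤ Q * lam) {a τ r : ℝ}
    (hr : 0 < r) (hr8 : r ≤ 1 / 8) (hrd : r ≤ d0) (hB : Kb * r ^ α ≤ lam * unitBallNorm n / 2)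
    (ha : 0 ≤ a) (hτ : 0 ≤ τ) (h : AboveLinear hn u a τ r) :
    AboveLinear hn u (a - (Q + 1) * τ)
      (16 / (lam * unitBallNorm n) * r ^ α * (N + (a + 5 * Q * τ) * Kb)) (r / 2) := by
  intro x hx hxr hxn
  set x₀ := flatProj hn x
  have hx₀ : lastC n hn x₀ = 0 := lastC_flatProj hn x
  have hlast : ∀ z ∈ openHalfBall (lastVec hn) x₀ r, lastC n hn z < r := fun z hz => by
    have := (abs_lt.1 (abs_lastC_sub_lt_of_mem_ball hn hz.1)).2
    linarith
  have hU : openHalfBall (lastVec hn) x₀ r ⊆ halfBall n hn 2 := fun z hz => by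
    obtain ⟨hzr, hz0⟩ := (mem_openHalfBall_lastVec hx₀).1 hz
    exact ⟨by linarith [norm_le_norm_add_norm_sub' z x₀], hz0⟩
  have habove : ∀ z ∈ openHalfBall (lastVec hn) x₀ r,
      a * inner ℝ (lastVec hn) (z - x₀) - τ * r ≤ u z := fun z hz => by
    obtain ⟨hzr, hz0⟩ := (mem_openHalfBall_lastVec hx₀).1 hz
    rw [inner_lastVec, lastC_sub, hx₀, sub_zero]
    refine h z hz0 (hlast z hz).le ?_
    have hproj : flatProj hn z = x₀ + flatProj hn (z - x₀) := by
      simp only [flatProj, lastC_sub, hx₀, sub_zero]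
      abel
    rw [hproj]
    linarith [norm_add_le x₀ (flatProj hn (z - x₀)), norm_flatProj_le hn (z - x₀)]
  have hdata := hu.dataBound_of_lastC_lt hU hr Set.inter_subset_left fun z hz =>
    (hlast z hz).trans_le hrd
  have himp := (hu.isSupersolution.mono (isOpen_openHalfBall _ _ _) hU).hopf_improvement (by omega)
    h0 hL (norm_lastVec hn) hQ1 hQ ha (by positivity) hr habove hdata hB hx (by linarith)
  rw [flatProj_add_lastC_smul] at himp
  refine le_of_eq_of_le ?_ himp
  field_simp
  ring

theorem nonneg_rhsBound (hu : IsHalfBallSupersolution hn lam Lam d0 α Kb N b f u) : 0 ≤ N :=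
  (hu.dataBound (Set.empty_subset _) one_pos (Set.empty_subset (Metric.ball 0 1))).rhs_nonneg

theorem nonneg_coeffBound (hu : IsHalfBallSupersolution hn lam Lam d0 α Kb N b f u) :
    0 ≤ Kb := by
  simpa only [Real.one_rpow, mul_one] using
    (hu.dataBound (Set.empty_subset _) one_pos (Set.empty_subset (Metric.ball 0 1))).coeff_nonneg

theorem aboveLinear_iterate (hu : IsHalfBallSupersolution hn lam Lam d0 α Kb N b f u)
    (h0 : 0 < lam) (hL : lam ≤ Lam) {Q : ℝ} (hQ1 : 1 ≤ Q) (hQ : Lam * n ≤ Q * lam) (hα : 0 ≤ α)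
    {a τ r : ℝ} (hr : 0 < r) (hr8 : r ≤ 1 / 8) (hrd : r ≤ d0)
    (hB : Kb * r ^ α ≤ lam * unitBallNorm n / 2) (ha : 0 ≤ a) (hτ : 0 ≤ τ)
    (h : AboveLinear hn u a τ r)
    (hτ' : 16 / (lam * unitBallNorm n) * r ^ α * (N + (a + 5 * Q * τ) * Kb) ≤ (1 / 2) ^ α * τ)
    (hslope : (Q + 1) * τ ≤ a / 2 * (1 - (1 / 2) ^ α)) (k : ℕ) :
    AboveLinear hn u (a / 2 * (1 + ((1 / 2) ^ α) ^ k)) (τ * ((1 / 2) ^ α) ^ k) (r / 2 ^ k) := by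
  have hω := unitBallNorm_pos n
  set θ : ℝ := (1 / 2) ^ α
  have hθ0 : 0 ≤ θ := by positivity
  have hθ1 : θ ≤ 1 := Real.rpow_le_one (by norm_num) (by norm_num) hα
  have hrα : 0 < r ^ α := by positivity
  have : 0 ≤ N := hu.nonneg_rhsBound
  have hKb := hu.nonneg_coeffBound
  induction k with
  | zero => simpa [one_add_one_eq_two] using h
  | succ k ih =>
    have hθk0 : 0 ≤ θ ^ k := by positivity
    have hθk1 : θ ^ k ≤ 1 := pow_le_one₀ hθ0 hθ1
    have hscale : (r / 2 ^ k) ^ α = r ^ α * θ ^ k := by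
      rw [div_eq_mul_inv, ← inv_pow, ← one_div, Real.mul_rpow hr.le (by positivity),
        ← Real.rpow_pow_comm (by norm_num)]
    have hrk : r / 2 ^ k ≤ r := div_le_self hr.le (one_le_pow₀ one_le_two)
    have hdecay : r ^ α * θ ^ k ≤ r ^ α := mul_le_of_le_one_right hrα.le hθk1
    have hhalf := hu.aboveLinear_half h0 hL hQ1 hQ (by positivity) (hrk.trans hr8) (hrk.trans hrd)
      (by rw [hscale]; exact (mul_le_mul_of_nonneg_left hdecay hKb).trans hB) (by positivity)
      (by positivity) ih
    have hradius : r / 2 ^ k / 2 = r / 2 ^ (k + 1) := by rw [pow_succ, div_div]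
    rw [hradius, hscale] at hhalf
    refine hhalf.mono ?_ ?_ (by positivity)
    · have := mul_le_mul_of_nonneg_right hslope hθk0
      rw [pow_succ]
      linarith
    · calc 16 / (lam * unitBallNorm n) * (r ^ α * θ ^ k) *
            (N + (a / 2 * (1 + θ ^ k) + 5 * Q * (τ * θ ^ k)) * Kb)
          ≤ 16 / (lam * unitBallNorm n) * (r ^ α * θ ^ k) * (N + (a + 5 * Q * τ) * Kb) := by
            have hτk : τ * θ ^ k ≤ τ := mul_le_of_le_one_right hτ hθk1
            gcongr
            nlinarith
        _ = 16 / (lam * unitBallNorm n) * r ^ α * (N + (a + 5 * Q * τ) * Kb) * θ ^ k := by ring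
        _ ≤ θ * τ * θ ^ k := by gcongr
        _ = τ * θ ^ (k + 1) := by ring

theorem sub_mul_lastC_le_of_aboveLinear (hu : IsHalfBallSupersolution hn lam Lam d0 α Kb N b f u)
    (h0 : 0 < lam) (hL : lam ≤ Lam) {Q : ℝ} (hQ1 : 1 ≤ Q) (hQ : Lam * n ≤ Q * lam) (hα : 0 < α)
    {a C k r : ℝ} (hr : 0 < r) (hr8 : r ≤ 1 / 8) (hrd : r ≤ d0) (ha : 0 ≤ a) (hk : 1 ≤ k)
    (h : AboveLinear hn u a (C * r ^ α * (N + k * a * Kb)) r)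
    (hC : 2 * (16 / (lam * unitBallNorm n)) ≤ (1 / 2) ^ α * C)
    (hB : Kb * r ^ α ≤ lam * unitBallNorm n / 2) (hBQ : 5 * Q * C * (Kb * r ^ α) ≤ 1)
    (hBk : 4 * (Q + 1) * C * k * (Kb * r ^ α) ≤ 1 - (1 / 2) ^ α) {x : E n}
    (hx : x ∈ halfBall n hn 1) (hxr : lastC n hn x ≤ r) :
    (a / 2 - 2 * (Q + 1) * C / (1 - (1 / 2) ^ α) * r ^ α * N) * lastC n hn x ≤ u x := by
  have hω := unitBallNorm_pos n
  set θ : ℝ := (1 / 2) ^ α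
  have hθ0 : 0 < θ := by positivity
  have hθ1 : 0 < 1 - θ := sub_pos.2 (Real.rpow_lt_one (by norm_num) (by norm_num) hα)
  have : 0 < r ^ α := by positivity
  have : 0 ≤ N := hu.nonneg_rhsBound
  have hKb := hu.nonneg_coeffBound
  have : 0 < C := pos_of_mul_pos_right (lt_of_lt_of_le (by positivity) hC) hθ0.le
  rcases lt_or_ge (a / 2) (2 * (Q + 1) * C / (1 - θ) * r ^ α * N) with hlarge | hsmall
  · exact (mul_nonpos_of_nonpos_of_nonneg (by linarith) hx.2.le).trans
      (hu.isSupersolution.nonneg x ⟨hx.1.trans one_lt_two, hx.2⟩)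
  set G := N + k * a * Kb
  have : 0 ≤ G := by positivity
  have hslope : (Q + 1) * (C * r ^ α * G) ≤ a / 2 * (1 - θ) := by
    have hNa : 2 * (Q + 1) * C * r ^ α * N ≤ a / 2 * (1 - θ) := by
      rw [← div_le_iff₀ hθ1]
      exact le_of_eq_of_le (by ring) hsmall
    have := mul_le_mul_of_nonneg_left hBk ha
    simp only [G]
    linarith
  have hstep : 16 / (lam * unitBallNorm n) * r ^ α * (N + (a + 5 * Q * (C * r ^ α * G)) * Kb) ≤
      θ * (C * r ^ α * G) := by
    have hquad : 5 * Q * C * (Kb * r ^ α) * G ≤ 1 * G := by gcongr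
    have hlin : a * Kb ≤ k * a * Kb := by nlinarith [mul_nonneg ha hKb]
    calc _ ≤ 16 / (lam * unitBallNorm n) * r ^ α * (2 * G) := by
          gcongr
          simp only [G] at hquad ⊢
          linarith
      _ = 2 * (16 / (lam * unitBallNorm n)) * (r ^ α * G) := by ring
      _ ≤ θ * C * (r ^ α * G) := by gcongr
      _ = θ * (C * r ^ α * G) := by ring
  have hτ : 0 ≤ C * r ^ α * G := by positivity
  have hgrowth := half_mul_lastC_le_of_aboveLinear hθ0.le hτ (by nlinarith)
    (hu.aboveLinear_iterate h0 hL hQ1 hQ hα.le hr hr8 hrd hB ha hτ h hstep hslope) hx hxr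
  refine le_trans (mul_le_mul_of_nonneg_right (sub_le_self _ ?_) hx.2.le) hgrowth
  positivity

theorem exists_hopf (hn : 1 ≤ n) (h0 : 0 < lam) (hL : lam ≤ Lam) (hα : 0 < α) (hd0 : 0 < d0)
    (Kb : ℝ) :
    ∃ r₀ > 0, ∀ r, 0 < r → r ≤ r₀ → ∃ c C : ℝ, 0 < c ∧ 0 ≤ C ∧ ∀ {N : ℝ} {b f u : E n → ℝ},
      IsHalfBallSupersolution hn lam Lam d0 α Kb N b f u → ∀ {T : ℝ}, 0 ≤ T →
      (∀ y, lastC n hn y = 0 → ‖y‖ ≤ 1 + 2 * r →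
        ∀ x ∈ Metric.ball (y + r • lastVec hn) (r / 4), T ≤ u x) →
      ∀ x ∈ halfBall n hn 1, lastC n hn x ≤ r → (c * T - C * N) * lastC n hn x ≤ u x := by
  have hω := unitBallNorm_pos n
  have hn1 : (1 : ℝ) ≤ n := by exact_mod_cast hn
  obtain ⟨m, hm0, hm⟩ := exists_barrier_exponent h0 Lam n
  have : (0 : ℝ) < m := by positivity
  set Q := Lam * n / lam
  have hQ : Q * lam = Lam * n := div_mul_cancel₀ _ h0.ne'
  have hQ1 : 1 ≤ Q := by
    rw [one_le_div₀ h0]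
    nlinarith
  set θ : ℝ := (1 / 2) ^ α
  have hθ0 : 0 < θ := by positivity
  have hθ1 : 0 < 1 - θ := sub_pos.2 (Real.rpow_lt_one (by norm_num) (by norm_num) hα)
  set c₁ : ℝ := 16 * m * ((17 : ℝ) ^ (m + 1))⁻¹
  have hc₁ : 0 < c₁ := by positivity
  set k := 1 + 1 / c₁
  set C := 256 * (m + 1) / (lam * unitBallNorm n) + 2 * (16 / (lam * unitBallNorm n)) / θ
  have : 0 < C := by positivity
  have hCθ : 2 * (16 / (lam * unitBallNorm n)) ≤ θ * C := by
    rw [mul_add, mul_div_cancel₀ _ hθ0.ne']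
    exact le_add_of_nonneg_left (by positivity)
  obtain ⟨r₁, hr₁, hsmall⟩ := exists_mul_rpow_le hα (β := min (lam * unitBallNorm n / 2)
    (min (1 / (5 * Q * C)) ((1 - θ) / (4 * (Q + 1) * C * k)))) (by positivity) Kb
  refine ⟨min (min (1 / 8) (d0 / 2)) r₁, by positivity, fun r hr hr₀ => ?_⟩
  obtain ⟨⟨hr8, hrd⟩, hrr₁⟩ := by simpa only [le_min_iff] using hr₀
  obtain ⟨hB, hBQ, hBk⟩ := by simpa only [le_min_iff] using hsmall r hr.le hrr₁
  refine ⟨c₁ / (2 * r), 2 * (Q + 1) * C / (1 - θ) * r ^ α, by positivity, by positivity, ?_⟩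
  intro N b f u hu T hT huT x hx hxr
  have hbase := hu.aboveLinear_of_le_on_ball h0 hL hm hr hr8 (by linarith) hB hT huT
  have hlinear : AboveLinear hn u (c₁ * T / r) (C * r ^ α * (N + k * (c₁ * T / r) * Kb)) r := by
    refine hbase.mono le_rfl ?_ hr.le
    have hN := hu.nonneg_rhsBound
    have hKb := hu.nonneg_coeffBound
    have hT' : T / r ≤ k * (c₁ * T / r) := by
      have : k * (c₁ * T / r) = c₁ * T / r + T / r := by simp only [k]; field_simp
      rw [this]
      exact le_add_of_nonneg_left (by positivity)
    gcongr
    exact le_add_of_nonneg_right (by positivity)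
  have hgrowth := hu.sub_mul_lastC_le_of_aboveLinear h0 hL hQ1 hQ.ge hα hr hr8 (by linarith)
    (by positivity) (le_add_of_nonneg_right (by positivity)) hlinear
    hCθ hB ((le_div_iff₀' (by positivity)).1 hBQ)
    ((le_div_iff₀' (by positivity)).1 hBk) hx hxr
  refine le_of_eq_of_le ?_ hgrowth
  ring

theorem exists_mul_lastC_le (hn : 1 ≤ n) (h0 : 0 < lam) (hL : lam ≤ Lam) (hα : 0 < α)
    (hd0 : 0 < d0) (Kb : ℝ) :
    ∃ (ρ₁ c C : ℝ) (M : ℕ), 0 < ρ₁ ∧ 0 < c ∧ 0 ≤ C ∧ ∀ {N : ℝ} {b f u : E n → ℝ},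
      IsHalfBallSupersolution hn lam Lam d0 α Kb N b f u → ∀ {y : E n} {ρ T : ℝ}, 0 < ρ →
      ρ ≤ ρ₁ → 0 ≤ T → Metric.ball y (4 * ρ) ⊆ halfBall n hn 2 →
      (∀ x ∈ Metric.ball y ρ, T ≤ u x) →
      ∀ x ∈ halfBall n hn 1, (c * ρ ^ M * T - C * N) * lastC n hn x ≤ u x := by
  obtain ⟨r₀, hr₀, hhopf⟩ := exists_hopf hn h0 hL hα hd0 Kb
  obtain ⟨ρ₀, hρ₀, hpropagation⟩ := exists_propagation hn h0 hL hα d0 Kb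
  obtain ⟨r, hr, hr'⟩ : ∃ r > 0, r ≤ min (min r₀ (4 * ρ₀)) (1 / 8) := ⟨_, by positivity, le_rfl⟩
  obtain ⟨⟨hrr₀, hrρ₀⟩, hr8⟩ := by simpa only [le_min_iff] using hr'
  obtain ⟨c₁, C₁, hc₁, hC₁, hbdry⟩ := hhopf r hr hrr₀
  obtain ⟨c₂, C₂, M, hc₂, hC₂, hinterior⟩ :=
    hpropagation (r / 4) (by positivity) (by linarith) (by linarith)
  refine ⟨r / 8, min c₁ 1 * c₂, min c₁ 1 * C₂ + C₁, M, by positivity, by positivity,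
    by positivity, ?_⟩
  intro N b f u hu y ρ T hρ hρr hT hy huT x hx
  have : 0 ≤ N := hu.nonneg_rhsBound
  set T₁ := max (c₂ * ρ ^ M * T - C₂ * N) 0
  have hT₁ : 0 ≤ T₁ := le_max_right _ _
  have hinside : ∀ z, ‖z‖ + r ≤ 2 → r ≤ lastC n hn z → ∀ w ∈ Metric.ball z (r / 4), T₁ ≤ u w := by
    intro z hz hrz w hw
    have hball : Metric.ball z r ⊆ halfBall n hn 2 := ball_subset_halfBall hz hrz
    refine max_le (hinterior hu hρ (by linarith) hT hy ?_ huT w hw) ?_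
    · rwa [mul_div_cancel₀ _ four_ne_zero]
    · exact hu.isSupersolution.nonneg w (hball (Metric.ball_subset_ball (by linarith) hw))
  suffices (min c₁ 1 * T₁ - C₁ * N) * lastC n hn x ≤ u x by
    refine le_trans (mul_le_mul_of_nonneg_right ?_ hx.2.le) this
    have : min c₁ 1 * (c₂ * ρ ^ M * T - C₂ * N) ≤ min c₁ 1 * T₁ := by
      gcongr
      exact le_max_left _ _
    linarith
  rcases le_or_gt (lastC n hn x) r with hxr | hxr
  · refine le_trans (mul_le_mul_of_nonneg_right ?_ hx.2.le) (hbdry hu hT₁ ?_ x hx hxr)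
    · gcongr
      exact min_le_left _ _
    · refine fun z hz hz1 => hinside _ ?_ (by rw [lastC_add_smul_lastVec, hz, zero_add])
      have := norm_add_le z (r • lastVec hn)
      rw [norm_smul, norm_lastVec, mul_one, Real.norm_of_nonneg hr.le] at this
      linarith
  · have hx1 : ‖x‖ < 1 := hx.1
    have hT₁u := hinside x (by linarith) hxr.le x (Metric.mem_ball_self (by positivity))
    have hcT : min c₁ 1 * T₁ - C₁ * N ≤ T₁ := (sub_le_self _ (by positivity)).trans
      (mul_le_of_le_one_left hT₁ (min_le_right _ _))
    calc (min c₁ 1 * T₁ - C₁ * N) * lastC n hn x ≤ T₁ * lastC n hn x := by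
          gcongr
          exact hx.2.le
      _ ≤ T₁ := mul_le_of_le_one_right hT₁
        ((le_abs_self _).trans ((abs_lastC_le hn x).trans hx1.le))
      _ ≤ u x := hT₁u

end IsHalfBallSupersolution

/-! ### Local density of touching points -/

section DataMeasure

variable {b f : E n → ℝ} {U : Set (E n)} {F B s t : ℝ}

/-- The measure whose value on `U` is `s ^ n * ‖f⁺‖ ^ n + t ^ n * ‖b‖ ^ n`, the norms being those
of `Lⁿ(U)`. -/
noncomputable def dataMeasure (b f : E n → ℝ) (s t : ℝ) : Measure (E n) :=
  ENNReal.ofReal s ^ n • volume.withDensity (fun x => ‖f⁺ x‖ₑ ^ n) +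
    ENNReal.ofReal t ^ n • volume.withDensity (fun x => ‖b x‖ₑ ^ n)

theorem withDensity_enorm_pow_apply (g : E n → ℝ) (hn : n ≠ 0) (hU : MeasurableSet U) :
    volume.withDensity (fun x => ‖g x‖ₑ ^ n) U = eLpNorm g n (volume.restrict U) ^ n := by
  rw [withDensity_apply _ hU]
  simpa using (eLpNorm_nnreal_pow_eq_lintegral (f := g) (μ := volume.restrict U) (p := n)
    (by exact_mod_cast hn)).symm

theorem dataMeasure_apply (hn : n ≠ 0) (hU : MeasurableSet U) (s t : ℝ) :
    dataMeasure b f s t U = (ENNReal.ofReal s * eLpNorm f⁺ n (volume.restrict U)) ^ n +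
      (ENNReal.ofReal t * eLpNorm b n (volume.restrict U)) ^ n := by
  simp only [dataMeasure, Measure.add_apply, Measure.smul_apply, smul_eq_mul, mul_pow,
    withDensity_enorm_pow_apply _ hn hU]

theorem DataBound.dataMeasure_le (h : DataBound b f U F B) (hn : n ≠ 0) (hU : MeasurableSet U)
    (hs : 0 ≤ s) (ht : 0 ≤ t) :
    dataMeasure b f s t U ≤ ENNReal.ofReal ((s * F) ^ n + (t * B) ^ n) := by
  have hF := mul_nonneg hs h.rhs_nonneg
  have hB := mul_nonneg ht h.coeff_nonneg
  rw [dataMeasure_apply hn hU, ENNReal.ofReal_add (by positivity) (by positivity),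
    ENNReal.ofReal_pow hF, ENNReal.ofReal_pow hB, ENNReal.ofReal_mul hs, ENNReal.ofReal_mul ht]
  gcongr
  exacts [h.eLpNorm_rhs_le, h.eLpNorm_coeff_le]

theorem dataMeasure_mono_right {t' : ℝ} (h : t ≤ t') :
    dataMeasure b f s t ≤ dataMeasure b f s t' := by
  unfold dataMeasure
  gcongr

end DataMeasure

theorem add_add_pow_le (x y z : ℝ≥0∞) (k : ℕ) :
    (x + y + z) ^ k ≤ 3 ^ k * (x ^ k + y ^ k + z ^ k) := by
  wlog hxy : x ≤ y generalizing x y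
  · simpa only [add_comm x, add_comm (x ^ k)] using this y x (le_of_not_ge hxy)
  have hmax : (y ⊔ z) ^ k ≤ x ^ k + y ^ k + z ^ k := by
    rcases le_total y z with hyz | hyz
    · rw [sup_of_le_right hyz]
      exact le_add_self
    · rw [sup_of_le_left hyz, add_right_comm]
      exact le_add_self
  calc (x + y + z) ^ k ≤ (3 * (y ⊔ z)) ^ k := by
        gcongr
        calc x + y + z ≤ (y ⊔ z) + (y ⊔ z) + (y ⊔ z) := by
              gcongr
              exacts [hxy.trans le_sup_left, le_sup_left, le_sup_right]
          _ = 3 * (y ⊔ z) := by ring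
    _ ≤ 3 ^ k * (x ^ k + y ^ k + z ^ k) := by
        rw [mul_pow]
        gcongr

theorem touchSet_sub_inter_subset {V : Type*} [NormedAddCommGroup V] [InnerProductSpace ℝ V]
    {u h : V → ℝ} {gu gh : V → V} {Ω K : Set V} {a η G : ℝ}
    (hpar : ∀ x z, h x + inner ℝ (gh x) (z - x) - a * ‖z - x‖ ^ 2 ≤ h z)
    (hG : ∀ x ∈ K, ‖gh x‖ ≤ G) :
    touchSet (u - h) (gu - gh) Ω 0 η ∩ K ⊆ touchSet u gu Ω a (G + η) := by
  rintro x ⟨⟨hx, htouch, hslope⟩, hxK⟩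
  refine ⟨hx, fun z hz => ?_, ?_⟩
  · have := htouch z hz
    simp only [Pi.sub_apply, inner_sub_left] at this
    linarith [hpar x z]
  · rw [Pi.sub_apply] at hslope
    linarith [norm_le_norm_add_norm_sub' (gu x) (gh x), hG x hxK]

/-- The concave paraboloid of opening `2 * a` with slope `g` at its base point `x₁`, raised around
`x₀` by `a * r ^ 2 * L` times a barrier. -/
noncomputable def liftedParaboloid (m : ℕ) (L a r c : ℝ) (g x₀ x₁ x : E n) : ℝ :=
  c + inner ℝ g (x - x₁) - 2 * a * ‖x - x₁‖ ^ 2 + a * r ^ 2 * L * barrier m r x₀ x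

/-- The gradient of `liftedParaboloid m L a r c g x₀ x₁`. -/
noncomputable def liftedParaboloidGrad (m : ℕ) (L a r : ℝ) (g x₀ x₁ x : E n) : E n :=
  g - (4 * a) • (x - x₁) + (a * r ^ 2 * L) • barrierGrad m r x₀ x

/-- The Hessian of `liftedParaboloid m L a r c g x₀ x₁`. -/
noncomputable def liftedParaboloidHess (m : ℕ) (L a r : ℝ) (x₀ x : E n) : E n →L[ℝ] E n :=
  (a * r ^ 2 * L) • barrierHess m r x₀ x - (4 * a) • 1

section LiftedParaboloid

variable {m : ℕ} {L a r c : ℝ} {g x₀ x₁ x : E n} {A : Matrix (Fin n) (Fin n) ℝ}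

theorem hasHessianOn_liftedParaboloid (m : ℕ) (L a r c : ℝ) (g x₀ x₁ : E n) (Ω : Set (E n)) :
    HasHessianOn (liftedParaboloid m L a r c g x₀ x₁) (liftedParaboloidGrad m L a r g x₀ x₁)
      (liftedParaboloidHess m L a r x₀) Ω := by
  convert ((HasHessianOn.affine c g x₁ Ω).add
    ((HasHessianOn.normSq x₁ Ω).const_smul (-(2 * a)))).add
    ((hasHessianOn_barrier m r x₀ Ω).const_smul (a * r ^ 2 * L)) using 1
  · funext x
    simp only [liftedParaboloid, Pi.add_apply, Pi.smul_apply, smul_eq_mul]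
    ring
  · funext x
    simp only [liftedParaboloidGrad, Pi.add_apply, Pi.smul_apply]
    module
  · funext x
    simp only [liftedParaboloidHess, Pi.add_apply, Pi.smul_apply, Pi.zero_apply]
    module

theorem norm_liftedParaboloidGrad_le (hL : 0 ≤ L) (ha : 0 ≤ a) (hr : 0 < r)
    (hx₁ : ‖x₁ - x₀‖ ≤ r) (hx : ‖x - x₀‖ ≤ 4 * r) :
    ‖liftedParaboloidGrad m L a r g x₀ x₁ x‖ ≤ ‖g‖ + a * r * (20 + 8 * L * m) := by
  have hdist : ‖x - x₁‖ ≤ 5 * r := by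
    linarith [norm_sub_le_norm_sub_add_norm_sub x x₀ x₁, norm_sub_rev x₀ x₁]
  calc ‖liftedParaboloidGrad m L a r g x₀ x₁ x‖
      ≤ ‖g‖ + 4 * a * ‖x - x₁‖ + a * r ^ 2 * L * ‖barrierGrad m r x₀ x‖ := by
        refine (norm_add_le _ _).trans (add_le_add ((norm_sub_le _ _).trans_eq ?_) (le_of_eq ?_))
        all_goals rw [norm_smul, Real.norm_of_nonneg (by positivity)]
    _ ≤ ‖g‖ + 4 * a * (5 * r) + a * r ^ 2 * L * (8 * m / r) := by
        gcongr
        exact norm_barrierGrad_le m hr hx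
    _ = ‖g‖ + a * r * (20 + 8 * L * m) := by
        field_simp
        ring

theorem liftedParaboloid_paraboloid_le (hL : 0 ≤ L) (ha : 0 ≤ a) (hr : r ≠ 0) (x z : E n) :
    liftedParaboloid m L a r c g x₀ x₁ x +
        inner ℝ (liftedParaboloidGrad m L a r g x₀ x₁ x) (z - x) -
        (2 + L * m) * a * ‖z - x‖ ^ 2 ≤ liftedParaboloid m L a r c g x₀ x₁ z := by
  have hbar := mul_le_mul_of_nonneg_left (barrier_paraboloid_le m r x₀ x z)
    (show 0 ≤ a * r ^ 2 * L by positivity)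
  have hopening : a * r ^ 2 * L * (m / r ^ 2 * ‖z - x‖ ^ 2) = L * m * a * ‖z - x‖ ^ 2 := by
    field_simp
  have hsq : ‖z - x₁‖ ^ 2 = ‖x - x₁‖ ^ 2 + 2 * inner ℝ (x - x₁) (z - x) + ‖z - x‖ ^ 2 := by
    rw [← norm_add_sq_real, add_comm, sub_add_sub_cancel]
  have haff : inner ℝ g (z - x₁) = inner ℝ g (x - x₁) + inner ℝ g (z - x) := by
    rw [← inner_add_right, add_comm, sub_add_sub_cancel]
  simp only [liftedParaboloid, liftedParaboloidGrad, inner_add_left, inner_sub_left,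
    inner_smul_left, conj_trivial, hsq, haff]
  linarith

theorem neg_indicator_le_traceMul_liftedParaboloidHess (h0 : 0 ≤ lam) (hLam : 0 ≤ Lam)
    (hm : m ≠ 0) (hmLam : 5 * Lam * n ≤ (m + 1) * lam) (hL : 2 * 17 ^ (m + 2) ≤ L) (ha : 0 ≤ a)
    (hr : 0 < r) (hx : ‖x - x₀‖ ≤ 4 * r) (hA : IsElliptic lam Lam A) :
    -(Metric.ball x₀ r).indicator (fun _ => a * ((4 + 2 * L * m) * Lam * n)) x ≤
      traceMul A (liftedParaboloidHess m L a r x₀ x) := by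
  have hL0 : 0 ≤ L := le_trans (by positivity) hL
  have hquad : 4 * a * traceMul A 1 ≤ 4 * a * (Lam * n) := by
    gcongr
    exact hA.traceMul_one_le
  simp only [liftedParaboloidHess, map_sub, map_smul, smul_eq_mul]
  by_cases hxr : x ∈ Metric.ball x₀ r
  · have hbar := mul_le_mul_of_nonneg_left
      (neg_le_traceMul_barrierHess (m := m) (ρ := r) (y := x₀) (x := x) h0 hLam hA)
      (show 0 ≤ a * r ^ 2 * L by positivity)
    have hscale : a * r ^ 2 * L * -(2 * m * Lam * n / r ^ 2) = -(a * (2 * L * m * Lam * n)) := by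
      field_simp
    rw [Set.indicator_of_mem hxr]
    linarith
  · have hm1 : (1 : ℝ) ≤ m := by exact_mod_cast Nat.one_le_iff_ne_zero.2 hm
    have hxr' : r ≤ ‖x - x₀‖ := not_lt.1 fun h => hxr (mem_ball_iff_norm.2 h)
    have hbar := mul_le_mul_of_nonneg_left
      (le_traceMul_barrierHess hLam hmLam hr (by linarith) hx hA)
      (show 0 ≤ a * r ^ 2 * L by positivity)
    have hscale : 4 * a * (Lam * n) ≤
        a * r ^ 2 * L * (2 * m * Lam * n * ((17 : ℝ) ^ (m + 2))⁻¹ / r ^ 2) :=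
      calc 4 * a * (Lam * n) ≤ 4 * a * (Lam * n) * m := le_mul_of_one_le_right (by positivity) hm1
        _ = 2 * 17 ^ (m + 2) * (a * (2 * m * Lam * n * ((17 : ℝ) ^ (m + 2))⁻¹)) := by
            field_simp
            ring
        _ ≤ L * (a * (2 * m * Lam * n * ((17 : ℝ) ^ (m + 2))⁻¹)) := by gcongr
        _ = _ := by field_simp
    rw [Set.indicator_of_notMem hxr]
    linarith

theorem sub_liftedParaboloid_lt {u : E n → ℝ} {z : E n} (hL : 0 ≤ L) (ha : 0 < a) (hr : 0 < r)
    (hx₁ : ‖x₁ - x₀‖ ≤ r) (hz : 4 * r < ‖z - x₀‖)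
    (huz : c + inner ℝ g (z - x₁) - a * ‖z - x₁‖ ^ 2 ≤ u z) (hux₁ : u x₁ ≤ c + a * r ^ 2) :
    (u - liftedParaboloid m L a r c g x₀ x₁) x₁ + a * r * ‖z - x₁‖ <
      (u - liftedParaboloid m L a r c g x₀ x₁) z := by
  have hdist : 3 * r < ‖z - x₁‖ := by linarith [norm_sub_le_norm_sub_add_norm_sub z x₁ x₀]
  have hbar : a * r ^ 2 * L * barrier m r x₀ z ≤ a * r ^ 2 * L * barrier m r x₀ x₁ := by
    gcongr
    exact profile_anti r m (by positivity) (by gcongr; linarith)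
  have hquad : a * (r ^ 2 + r * ‖z - x₁‖) < a * ‖z - x₁‖ ^ 2 :=
    mul_lt_mul_of_pos_left (by nlinarith) ha
  simp only [liftedParaboloid, Pi.sub_apply, sub_self, inner_zero_right, norm_zero]
  linarith

end LiftedParaboloid

theorem ofReal_le_of_ofReal_mul_le {κ a r G C S : ℝ} {X Y W : ℝ≥0∞} (hκ : 0 < κ) (ha : 0 < a)
    (hr : 0 ≤ r) (hG : 0 ≤ G) (hC : 1 ≤ C) (hS : 0 ≤ S)
    (h : ENNReal.ofReal (κ * (a * r)) ≤
      X + ENNReal.ofReal (G + a * r * C) * Y + ENNReal.ofReal (a * S) * W) :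
    ENNReal.ofReal r ≤ ENNReal.ofReal (κ⁻¹ * (C + S)) *
      (ENNReal.ofReal a⁻¹ * X + ENNReal.ofReal (G / a + r) * Y + W) := by
  set D := κ⁻¹ * (C + S)
  have hD : 0 ≤ D := by positivity
  have hX : (κ * a)⁻¹ ≤ D * a⁻¹ := by
    rw [mul_inv, mul_assoc, mul_comm (C + S), ← mul_assoc]
    exact le_mul_of_one_le_right (by positivity) (by linarith)
  have hY : (κ * a)⁻¹ * (G + a * r * C) ≤ D * (G / a + r) := by
    have heq : D * (G / a + r) - (κ * a)⁻¹ * (G + a * r * C) =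
        κ⁻¹ * ((C - 1 + S) * (G / a) + S * r) := by
      simp only [D]
      field_simp
      ring
    have : 0 ≤ κ⁻¹ * ((C - 1 + S) * (G / a) + S * r) := by
      have : 0 ≤ C - 1 := by linarith
      positivity
    linarith
  have hW : (κ * a)⁻¹ * (a * S) ≤ D := by
    have : (κ * a)⁻¹ * (a * S) = κ⁻¹ * S := by field_simp
    rw [this]
    exact mul_le_mul_of_nonneg_left (by linarith) (by positivity)
  clear_value D
  calc ENNReal.ofReal r = ENNReal.ofReal (κ * a)⁻¹ * ENNReal.ofReal (κ * (a * r)) := by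
        rw [← ENNReal.ofReal_mul (by positivity)]
        congr 1
        field_simp
    _ ≤ ENNReal.ofReal (κ * a)⁻¹ *
        (X + ENNReal.ofReal (G + a * r * C) * Y + ENNReal.ofReal (a * S) * W) := by gcongr
    _ = ENNReal.ofReal (κ * a)⁻¹ * X + ENNReal.ofReal ((κ * a)⁻¹ * (G + a * r * C)) * Y +
        ENNReal.ofReal ((κ * a)⁻¹ * (a * S)) * W := by
        rw [ENNReal.ofReal_mul (q := G + a * r * C) (by positivity),
          ENNReal.ofReal_mul (q := a * S) (by positivity)]
        ring
    _ ≤ ENNReal.ofReal (D * a⁻¹) * X + ENNReal.ofReal (D * (G / a + r)) * Y +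
        ENNReal.ofReal D * W := by gcongr
    _ = _ := by
        rw [ENNReal.ofReal_mul hD, ENNReal.ofReal_mul hD]
        ring

theorem ofReal_pow_le_of_ofReal_mul_le {κ a r G C S : ℝ} {X Y W : ℝ≥0∞} (hκ : 0 < κ) (ha : 0 < a)
    (hr : 0 ≤ r) (hG : 0 ≤ G) (hC : 1 ≤ C) (hS : 0 ≤ S)
    (h : ENNReal.ofReal (κ * (a * r)) ≤
      X + ENNReal.ofReal (G + a * r * C) * Y + ENNReal.ofReal (a * S) * W) (k : ℕ) :
    ENNReal.ofReal r ^ k ≤ ENNReal.ofReal ((3 * (κ⁻¹ * (C + S))) ^ k) *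
      ((ENNReal.ofReal a⁻¹ * X) ^ k + (ENNReal.ofReal (G / a + r) * Y) ^ k + W ^ k) := by
  have hlin := ofReal_le_of_ofReal_mul_le hκ ha hr hG hC hS h
  have hD : 0 ≤ κ⁻¹ * (C + S) := by positivity
  generalize κ⁻¹ * (C + S) = D at hlin hD ⊢
  calc ENNReal.ofReal r ^ k ≤ (ENNReal.ofReal D *
        (ENNReal.ofReal a⁻¹ * X + ENNReal.ofReal (G / a + r) * Y + W)) ^ k := by gcongr
    _ ≤ ENNReal.ofReal D ^ k * (3 ^ k * ((ENNReal.ofReal a⁻¹ * X) ^ k +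
          (ENNReal.ofReal (G / a + r) * Y) ^ k + W ^ k)) := by
        rw [mul_pow]
        gcongr
        exact add_add_pow_le ..
    _ = _ := by
        rw [ENNReal.ofReal_pow (by positivity), ENNReal.ofReal_mul (by norm_num), mul_pow,
          ENNReal.ofReal_ofNat]
        ring

namespace IsNonnegSupersolution

variable {b f u : E n → ℝ} {Ω : Set (E n)}

theorem mul_unitBallNorm_le_volume_touchSet (hu : IsNonnegSupersolution lam Lam b f u Ω)
    (hn : n ≠ 0) (h0 : 0 < lam) (hLam : lam ≤ Lam) {m : ℕ} (hm : m ≠ 0)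
    (hmLam : 5 * Lam * n ≤ (m + 1) * lam) {L a r G c : ℝ} (hL : 2 * 17 ^ (m + 2) ≤ L)
    (ha : 0 < a) (hr : 0 < r) {g x₀ x₁ : E n} (hg : ‖g‖ ≤ G)
    (hball : Metric.closedBall x₀ (4 * r) ⊆ Ω) (hx₁ : ‖x₁ - x₀‖ ≤ r)
    (hlow : ∀ z ∈ Ω, c + inner ℝ g (z - x₁) - a * ‖z - x₁‖ ^ 2 ≤ u z)
    (hux₁ : u x₁ ≤ c + a * r ^ 2) :
    ENNReal.ofReal (lam * (a * r * unitBallNorm n)) ≤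
      eLpNorm f⁺ n (volume.restrict (Metric.closedBall x₀ (4 * r))) +
        ENNReal.ofReal (G + a * r * (21 + 8 * L * m)) *
          eLpNorm b n (volume.restrict (Metric.closedBall x₀ (4 * r))) +
        ENNReal.ofReal (a * ((4 + 2 * L * m) * Lam * n)) *
          volume (touchSet u (gradient u) Ω ((2 + L * m) * a) (G + a * r * (21 + 8 * L * m)) ∩
            Metric.ball x₀ r) ^ (n : ℝ)⁻¹ := by
  have hL0 : 0 ≤ L := le_trans (by positivity) hL
  have hLam0 : 0 ≤ Lam := h0.le.trans hLam
  have hmem : ∀ x ∈ Metric.closedBall x₀ (4 * r), ‖x - x₀‖ ≤ 4 * r := fun x hx =>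
    mem_closedBall_iff_norm.1 hx
  have hgrad : ∀ x ∈ Metric.closedBall x₀ (4 * r),
      ‖liftedParaboloidGrad m L a r g x₀ x₁ x‖ ≤ G + a * r * (20 + 8 * L * m) := fun x hx =>
    (norm_liftedParaboloidGrad_le hL0 ha.le hr hx₁ (hmem x hx)).trans (by gcongr)
  have hslope : G + a * r * (20 + 8 * L * m) + a * r = G + a * r * (21 + 8 * L * m) := by ring
  have habp := hu.mul_unitBallNorm_le hn h0 hLam
    (hasHessianOn_liftedParaboloid m L a r c g x₀ x₁ Ω) (isCompact_closedBall x₀ (4 * r)) hball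
    (x₁ := x₁) (mem_closedBall_iff_norm.2 (by linarith)) (η := a * r) (by positivity)
    (fun z hz => sub_liftedParaboloid_lt hL0 ha hr hx₁
      (not_le.1 fun h => hz.2 (mem_closedBall_iff_norm.2 h)) (hlow z hz.1) hux₁)
    hgrad (S := a * ((4 + 2 * L * m) * Lam * n)) (by positivity)
    (Metric.isOpen_ball (x := x₀) (ε := r)).measurableSet
    (fun x hx A hA => neg_indicator_le_traceMul_liftedParaboloidHess h0.le hLam0 hm hmLam hL ha.le
      hr (hmem x hx.2) hA)
  rw [hslope] at habp
  refine habp.trans ?_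
  gcongr
  rw [← hslope]
  exact touchSet_sub_inter_subset (liftedParaboloid_paraboloid_le hL0 ha.le hr.ne') hgrad

end IsNonnegSupersolution

/-- With constants `M` and `C`: if a nonnegative supersolution is nearly touched from below near the
centre of a small ball by a global concave paraboloid of opening `a`, then the points touched by
paraboloids of opening `M * a` occupy a fixed fraction of that ball, up to the data. -/
structure TouchingDensity (n : ℕ) (lam Lam M C : ℝ) : Prop where
  four_le : 4 ≤ M
  one_le : 1 ≤ C
  pow_le : ∀ {b f u : E n → ℝ} {Ω : Set (E n)}, IsNonnegSupersolution lam Lam b f u Ω →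
    ∀ {x₀ x₁ g : E n} {a r G c : ℝ}, 0 < a → 0 < r → ‖g‖ ≤ G →
    Metric.closedBall x₀ (4 * r) ⊆ Ω → ‖x₁ - x₀‖ ≤ r →
    (∀ z ∈ Ω, c + inner ℝ g (z - x₁) - a * ‖z - x₁‖ ^ 2 ≤ u z) → u x₁ ≤ c + a * r ^ 2 →
    ENNReal.ofReal r ^ n ≤ ENNReal.ofReal C *
      (dataMeasure b f a⁻¹ (G / a + r) (Metric.closedBall x₀ (4 * r)) +
        volume (touchSet u (gradient u) Ω (M * a) (G + C * a * r) ∩ Metric.ball x₀ r))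

theorem exists_touchingDensity (hn : n ≠ 0) (h0 : 0 < lam) (hLam : lam ≤ Lam) :
    ∃ M C : ℝ, TouchingDensity n lam Lam M C := by
  obtain ⟨m, hm, hmLam⟩ := exists_barrier_exponent h0 Lam n
  set L : ℝ := 2 * 17 ^ (m + 2)
  set C₀ : ℝ := 21 + 8 * L * m
  set S : ℝ := (4 + 2 * L * m) * Lam * n
  set C : ℝ := (3 * ((lam * unitBallNorm n)⁻¹ * (C₀ + S))) ^ n
  have hω := unitBallNorm_pos n
  have hLam0 : 0 ≤ Lam := h0.le.trans hLam
  have hm1 : (1 : ℝ) ≤ m := by exact_mod_cast Nat.one_le_iff_ne_zero.2 hm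
  have hL : 2 ≤ L := le_mul_of_one_le_right (by norm_num) (one_le_pow₀ (by norm_num))
  have hC₀ : 1 ≤ C₀ := by nlinarith
  have hS : 0 ≤ S := by positivity
  have hC : 0 ≤ C := by positivity
  refine ⟨2 + L * m, C₀ + C, by nlinarith, by linarith, ?_⟩
  intro b f u Ω hu x₀ x₁ g a r G c ha hr hg hball hx₁ hlow hux₁
  have habp := hu.mul_unitBallNorm_le_volume_touchSet hn h0 hLam hm hmLam le_rfl ha hr hg hball
    hx₁ hlow hux₁
  rw [show lam * (a * r * unitBallNorm n) = lam * unitBallNorm n * (a * r) by ring] at habp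
  refine (ofReal_pow_le_of_ofReal_mul_le (by positivity) ha hr.le ((norm_nonneg g).trans hg) hC₀ hS
    habp n).trans ?_
  rw [dataMeasure_apply hn Metric.isClosed_closedBall.measurableSet, ← ENNReal.rpow_natCast (_ ^ _),
    ENNReal.rpow_inv_rpow (by exact_mod_cast hn)]
  gcongr
  · linarith
  · refine touchSet_mono le_rfl ?_
    have : 0 ≤ C * (a * r) := by positivity
    linarith

/-! ### Growth of touching sets -/

theorem measure_le_mul_of_forall_exists_closedBall {α : Type*} [PseudoMetricSpace α]
    [TopologicalSpace.SeparableSpace α] [MeasurableSpace α] [OpensMeasurableSpace α]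
    {μ ν : Measure α} {D Ω : Set α} {K : ℝ≥0∞} {R : ℝ}
    (h : ∀ x ∈ D, ∃ c t, 0 < t ∧ t ≤ R ∧ x ∈ Metric.closedBall c t ∧ Metric.closedBall c t ⊆ Ω ∧
      ν (Metric.closedBall c (5 * t)) ≤ K * μ (Metric.closedBall c t)) :
    ν D ≤ K * μ Ω := by
  choose! c t ht0 htR hxc hΩ hle using h
  obtain ⟨v, hvD, hdisj, hcover⟩ :=
    Vitali.exists_disjoint_subfamily_covering_enlargement_closedBall D c t R htR 5 (by norm_num)
  have hvc : v.Countable := hdisj.countable_of_nonempty_interior fun x hx =>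
    (Metric.nonempty_ball.2 (ht0 x (hvD hx))).mono Metric.ball_subset_interior_closedBall
  have hsub : D ⊆ ⋃ z ∈ v, Metric.closedBall (c z) (5 * t z) := fun x hx => by
    obtain ⟨z, hz, hxz⟩ := hcover x hx
    exact Set.mem_biUnion hz (hxz (hxc x hx))
  calc ν D ≤ ∑' z : v, ν (Metric.closedBall (c z) (5 * t z)) :=
        (measure_mono hsub).trans (measure_biUnion_le ν hvc _)
    _ ≤ ∑' z : v, K * μ (Metric.closedBall (c z) (t z)) :=
        ENNReal.tsum_le_tsum fun z => hle z (hvD z.2)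
    _ = K * μ (⋃ z ∈ v, Metric.closedBall (c z) (t z)) := by
        rw [ENNReal.tsum_mul_left, measure_biUnion hvc hdisj fun _ _ => measurableSet_closedBall]
    _ ≤ K * μ Ω := by
        gcongr
        exact Set.iUnion₂_subset fun z hz => hΩ z (hvD hz)

theorem exists_ball_disjoint_of_notMem {V : Type*} [NormedAddCommGroup V] [NormedSpace ℝ V]
    {A : Set V} (hA : IsCompact A) (hne : A.Nonempty) {x y : V} {ρ : ℝ}
    (hAρ : A ⊆ Metric.closedBall y ρ) (hx : x ∈ Metric.ball y ρ) (hxA : x ∉ A) :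
    ∃ c t, 0 < t ∧ ‖c - y‖ + t ≤ ρ ∧ ‖x - c‖ ≤ t ∧ Disjoint (Metric.ball c t) A ∧
      ∃ x₁ ∈ A, ‖x₁ - c‖ ≤ t := by
  have hρ : 0 < ρ := Metric.pos_of_mem_ball hx
  rw [mem_ball_iff_norm] at hx
  set p : ℝ → V := fun t => y + (1 - t / ρ) • (x - y)
  have hp0 : p 0 = x := by simp [p]
  have hpρ : p ρ = y := by simp [p, div_self hρ.ne']
  have hcont : ContinuousOn (fun t => Metric.infDist (p t) A - t) (Set.Icc 0 ρ) :=
    (((Metric.continuous_infDist_pt A).comp (by fun_prop)).sub continuous_id).continuousOn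
  have hstart : 0 < Metric.infDist (p 0) A :=
    hp0 ▸ (hA.isClosed.notMem_iff_infDist_pos hne).1 hxA
  have hend : Metric.infDist (p ρ) A ≤ ρ := by
    obtain ⟨z, hz⟩ := hne
    exact (Metric.infDist_le_dist_of_mem hz).trans (by rw [hpρ, dist_comm]; exact hAρ hz)
  obtain ⟨t, ⟨ht0, htρ⟩, ht⟩ := intermediate_value_Icc' hρ.le hcont
    (show (0 : ℝ) ∈ Set.Icc _ _ from ⟨by linarith, by linarith⟩)
  replace ht : Metric.infDist (p t) A = t := sub_eq_zero.1 ht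
  have htpos : 0 < t := ht0.lt_of_ne fun h => by
    rw [← h] at ht
    exact hstart.ne' ht
  obtain ⟨x₁, hx₁, hdist⟩ := hA.exists_infDist_eq_dist hne (p t)
  refine ⟨p t, t, htpos, ?_, ?_, ?_, x₁, hx₁, ?_⟩
  · have hcoeff : 0 ≤ 1 - t / ρ := sub_nonneg.2 ((div_le_one hρ).2 htρ)
    rw [add_sub_cancel_left, norm_smul, Real.norm_of_nonneg hcoeff]
    have hle : (1 - t / ρ) * ‖x - y‖ ≤ (1 - t / ρ) * ρ := by gcongr
    have heq : (1 - t / ρ) * ρ = ρ - t := by field_simp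
    linarith
  · have hdiff : x - p t = (t / ρ) • (x - y) := by
      simp only [p]
      module
    rw [hdiff, norm_smul, Real.norm_of_nonneg (by positivity), div_mul_eq_mul_div,
      div_le_iff₀ hρ]
    gcongr
  · refine Set.disjoint_left.2 fun z hz hzA => ?_
    have := Metric.infDist_le_dist_of_mem (x := p t) hzA
    rw [Metric.mem_ball'] at hz
    linarith
  · rw [← dist_eq_norm, dist_comm, ← hdist, ht]

theorem measureReal_le_of_le_mul_add_sdiff {α : Type*} [MeasurableSpace α] {μ : Measure α}
    {D D' : Set α} (hD : μ D ≠ ∞) (hsub : D' ⊆ D) (hD' : MeasurableSet D') {k X : ℝ} (hk : 0 ≤ k)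
    (hX : 0 ≤ X) (h : μ D ≤ ENNReal.ofReal k * (ENNReal.ofReal X + μ (D \ D'))) :
    μ.real D' ≤ (1 - 1 / (1 + k)) * μ.real D + X := by
  have hdiff : μ (D \ D') ≠ ∞ := measure_ne_top_of_subset Set.sdiff_subset hD
  have hreal : μ.real D ≤ k * (X + (μ.real D - μ.real D')) := by
    rw [← measureReal_sdiff hsub hD' hD]
    refine ENNReal.toReal_le_of_le_ofReal (by positivity) (h.trans_eq ?_)
    rw [ENNReal.ofReal_mul hk, ENNReal.ofReal_add hX measureReal_nonneg,
      ofReal_measureReal hdiff]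
  have hmono : μ.real D' ≤ μ.real D := measureReal_mono hsub hD
  have hk1 : μ.real D / (1 + k) ≤ X + (μ.real D - μ.real D') := by
    rw [div_le_iff₀ (by positivity)]
    linarith
  linarith [show (1 - 1 / (1 + k)) * μ.real D = μ.real D - μ.real D / (1 + k) by ring]

namespace TouchingDensity

variable {M C : ℝ} {b f u : E n → ℝ} {y : E n} {ρ F B : ℝ}

theorem nonempty_touchSet (h : TouchingDensity n lam Lam M C) (hn : n ≠ 0)
    (hu : IsNonnegSupersolution lam Lam b f u (Metric.ball y (5 * ρ)))
    (hdata : DataBound b f (Metric.ball y (5 * ρ)) F B) (hρ : 0 < ρ) {a : ℝ} (ha : 0 < a)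
    {x₁ : E n} (hx₁ : x₁ ∈ Metric.ball y ρ) (hux₁ : u x₁ ≤ a * ρ ^ 2)
    (hsmall : C * ((a⁻¹ * F) ^ n + (ρ * B) ^ n) < ρ ^ n) :
    (touchSet u (gradient u) (Metric.ball y (5 * ρ)) (M * a) (C * a * ρ) ∩
      Metric.closedBall y ρ).Nonempty := by
  have hC := h.one_le
  have hball : Metric.closedBall y (4 * ρ) ⊆ Metric.ball y (5 * ρ) :=
    Metric.closedBall_subset_ball (by linarith)
  have hdens := h.pow_le hu (g := 0) (G := 0) (c := 0) ha hρ norm_zero.le hball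
    (mem_ball_iff_norm.1 hx₁).le
    (fun z hz => by
      have hquad : 0 ≤ a * ‖z - x₁‖ ^ 2 := by positivity
      rw [inner_zero_left]
      linarith [hu.nonneg z hz]) (by linarith)
  by_contra hempty
  have hnull : touchSet u (gradient u) (Metric.ball y (5 * ρ)) (M * a) (C * a * ρ) ∩
      Metric.ball y ρ = ∅ := Set.subset_empty_iff.1 fun x hx =>
    hempty ⟨x, hx.1, Metric.ball_subset_closedBall hx.2⟩
  rw [zero_div, zero_add, zero_add, hnull, measure_empty, add_zero] at hdens
  have hF := hdata.rhs_nonneg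
  have hB := hdata.coeff_nonneg
  have hle : ENNReal.ofReal (ρ ^ n) ≤ ENNReal.ofReal (C * ((a⁻¹ * F) ^ n + (ρ * B) ^ n)) :=
    calc ENNReal.ofReal (ρ ^ n)
        ≤ ENNReal.ofReal C * dataMeasure b f a⁻¹ ρ (Metric.closedBall y (4 * ρ)) := by
          rwa [ENNReal.ofReal_pow hρ.le]
      _ ≤ ENNReal.ofReal C * ENNReal.ofReal ((a⁻¹ * F) ^ n + (ρ * B) ^ n) := by
          gcongr
          exact (measure_mono hball).trans (hdata.dataMeasure_le hn
            Metric.isOpen_ball.measurableSet (by positivity) hρ.le)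
      _ = _ := (ENNReal.ofReal_mul (by positivity)).symm
  exact absurd ((ENNReal.ofReal_le_ofReal_iff (by positivity)).1 hle) hsmall.not_ge

theorem exists_closedBall_of_notMem_touchSet (h : TouchingDensity n lam Lam M C) (hn : n ≠ 0)
    (hu : IsNonnegSupersolution lam Lam b f u (Metric.ball y (5 * ρ)))
    {a G R : ℝ} (ha : 0 < a) (hR : 0 ≤ R)
    (hne : (touchSet u (gradient u) (Metric.ball y (5 * ρ)) a G ∩
      Metric.closedBall y ρ).Nonempty)
    (hvol : volume.real (Metric.ball y ρ \ touchSet u (gradient u) (Metric.ball y (5 * ρ)) a G) ≤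
      (R * unitBallNorm n) ^ n) {x : E n} (hx : x ∈ Metric.ball y ρ)
    (hxt : x ∉ touchSet u (gradient u) (Metric.ball y (5 * ρ)) a G) :
    ∃ c t, 0 < t ∧ t ≤ R ∧ ‖x - c‖ ≤ t ∧
      Metric.closedBall c (4 * t) ⊆ Metric.ball y (5 * ρ) ∧
      Metric.ball c t ⊆ Metric.ball y ρ \
        touchSet u (gradient u) (Metric.ball y (5 * ρ)) a G ∧
      ENNReal.ofReal t ^ n ≤ ENNReal.ofReal C *
        (dataMeasure b f a⁻¹ (G / a + R) (Metric.closedBall c (4 * t)) +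
          volume (touchSet u (gradient u) (Metric.ball y (5 * ρ)) (M * a) (G + C * a * R) ∩
            Metric.ball c t)) := by
  have hC := h.one_le
  have hρ : 0 < ρ := Metric.pos_of_mem_ball hx
  have hcb : Metric.closedBall y ρ ⊆ Metric.ball y (5 * ρ) :=
    Metric.closedBall_subset_ball (by linarith)
  obtain ⟨c, t, ht, hct, hxc, hdisj, x₁, ⟨⟨_, htouch, hslope⟩, -⟩, hx₁c⟩ :=
    exists_ball_disjoint_of_notMem (isCompact_touchSet_inter (isCompact_closedBall y ρ) hcb
      (hu.hasHessianOn.continuousOn.mono hcb) (hu.hasHessianOn.continuousOn_gradient.mono hcb) a G)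
      hne Set.inter_subset_right hx fun h => hxt h.1
  have hball : Metric.ball c t ⊆ Metric.ball y ρ :=
    Metric.ball_subset_ball' (by rw [dist_eq_norm]; linarith)
  have hballD : Metric.ball c t ⊆
      Metric.ball y ρ \ touchSet u (gradient u) (Metric.ball y (5 * ρ)) a G := fun z hz =>
    ⟨hball hz, fun h => Set.disjoint_left.1 hdisj hz
      ⟨h, Metric.ball_subset_closedBall (hball hz)⟩⟩
  have htR : t ≤ R := by
    have hω := unitBallNorm_pos n
    have hle := (measureReal_mono hballD
      (measure_ne_top_of_subset Set.sdiff_subset measure_ball_lt_top.ne)).trans hvol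
    rw [measureReal_def, volume_ball_eq c ht.le hn, ENNReal.toReal_pow,
      ENNReal.toReal_ofReal (by positivity)] at hle
    exact le_of_mul_le_mul_right (le_of_pow_le_pow_left₀ hn (by positivity) hle) hω
  have hclosed : Metric.closedBall c (4 * t) ⊆ Metric.ball y (5 * ρ) :=
    (Metric.closedBall_subset_closedBall' (ε₂ := 4 * ρ) (y := y)
      (by rw [dist_eq_norm]; linarith [norm_nonneg (c - y)])).trans
        (Metric.closedBall_subset_ball (by linarith))
  refine ⟨c, t, ht, htR, hxc, hclosed, hballD, ?_⟩
  refine (h.pow_le hu ha ht hslope hclosed hx₁c htouch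
    (le_add_of_nonneg_right (by positivity))).trans ?_
  gcongr
  · exact dataMeasure_mono_right (by gcongr)
  · exact touchSet_mono le_rfl (by gcongr)

theorem volume_sdiff_touchSet_le_mul (h : TouchingDensity n lam Lam M C) (hn : n ≠ 0)
    (hu : IsNonnegSupersolution lam Lam b f u (Metric.ball y (5 * ρ)))
    {a G R : ℝ} (ha : 0 < a) (hR : 0 ≤ R)
    (hne : (touchSet u (gradient u) (Metric.ball y (5 * ρ)) a G ∩
      Metric.closedBall y ρ).Nonempty)
    (hvol : volume.real (Metric.ball y ρ \ touchSet u (gradient u) (Metric.ball y (5 * ρ)) a G) ≤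
      (R * unitBallNorm n) ^ n) :
    volume (Metric.ball y ρ \ touchSet u (gradient u) (Metric.ball y (5 * ρ)) a G) ≤
      ENNReal.ofReal ((20 * unitBallNorm n) ^ n * C) *
        (dataMeasure b f a⁻¹ (G / a + R) (Metric.ball y (5 * ρ)) +
          volume ((Metric.ball y ρ \ touchSet u (gradient u) (Metric.ball y (5 * ρ)) a G) \
            (Metric.ball y ρ \
              touchSet u (gradient u) (Metric.ball y (5 * ρ)) (M * a) (G + C * a * R)))) := by
  have := h.one_le
  have hω := unitBallNorm_pos n
  have : Nonempty (Fin n) := ⟨⟨0, Nat.pos_of_ne_zero hn⟩⟩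
  set D := Metric.ball y ρ \ touchSet u (gradient u) (Metric.ball y (5 * ρ)) a G
  set A := touchSet u (gradient u) (Metric.ball y (5 * ρ)) (M * a) (G + C * a * R)
  have hbound : volume D ≤ ENNReal.ofReal ((20 * unitBallNorm n) ^ n * C) *
      (dataMeasure b f a⁻¹ (G / a + R) + volume.restrict (D \ (Metric.ball y ρ \ A)))
        (Metric.ball y (5 * ρ)) := by
    refine measure_le_mul_of_forall_exists_closedBall (R := 4 * R) fun x hx => ?_
    obtain ⟨c, t, ht, htR, hxc, hclosed, hballD, hle⟩ :=
      h.exists_closedBall_of_notMem_touchSet hn hu ha hR hne hvol hx.1 hx.2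
    refine ⟨c, 4 * t, by positivity, by linarith, ?_, hclosed, ?_⟩
    · rw [mem_closedBall_iff_norm]
      linarith
    · have hA : volume (A ∩ Metric.ball c t) ≤
          volume.restrict (D \ (Metric.ball y ρ \ A)) (Metric.closedBall c (4 * t)) := by
        refine (measure_mono fun z hz => ?_).trans (Measure.le_restrict_apply _ _)
        exact ⟨Metric.ball_subset_closedBall.trans
          (Metric.closedBall_subset_closedBall (by linarith)) hz.2,
          hballD hz.2, fun hz' => hz'.2 hz.1⟩
      calc volume (Metric.closedBall c (5 * (4 * t)))
          = ENNReal.ofReal ((20 * unitBallNorm n) ^ n) * ENNReal.ofReal t ^ n := by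
            rw [Measure.addHaar_closedBall_eq_addHaar_ball, volume_ball_eq c (by positivity) hn,
              ENNReal.ofReal_pow (by positivity), ← mul_pow,
              ← ENNReal.ofReal_mul (by positivity)]
            ring_nf
        _ ≤ ENNReal.ofReal ((20 * unitBallNorm n) ^ n) * (ENNReal.ofReal C *
              (dataMeasure b f a⁻¹ (G / a + R) (Metric.closedBall c (4 * t)) +
                volume.restrict (D \ (Metric.ball y ρ \ A)) (Metric.closedBall c (4 * t)))) := by
            gcongr
            exact hle.trans (by gcongr)
        _ = _ := by
            rw [ENNReal.ofReal_mul (by positivity), mul_assoc, Measure.add_apply]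
  refine hbound.trans ?_
  rw [Measure.add_apply]
  exact mul_le_mul_right (add_le_add_right
    ((measure_mono (Set.subset_univ _)).trans_eq (Measure.restrict_apply_univ _)) _) _

theorem volume_sdiff_touchSet_le (h : TouchingDensity n lam Lam M C) (hn : n ≠ 0)
    (hu : IsNonnegSupersolution lam Lam b f u (Metric.ball y (5 * ρ)))
    (hdata : DataBound b f (Metric.ball y (5 * ρ)) F B) {a G R : ℝ} (ha : 0 < a) (hG : 0 ≤ G)
    (hR : 0 ≤ R)
    (hne : (touchSet u (gradient u) (Metric.ball y (5 * ρ)) a G ∩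
      Metric.closedBall y ρ).Nonempty)
    (hvol : volume.real (Metric.ball y ρ \ touchSet u (gradient u) (Metric.ball y (5 * ρ)) a G) ≤
      (R * unitBallNorm n) ^ n) :
    volume.real (Metric.ball y ρ \
        touchSet u (gradient u) (Metric.ball y (5 * ρ)) (M * a) (G + C * a * R)) ≤
      (1 - 1 / (1 + (20 * unitBallNorm n) ^ n * C)) * (R * unitBallNorm n) ^ n +
        ((a⁻¹ * F) ^ n + ((G / a + R) * B) ^ n) := by
  have hC := h.one_le
  have hω := unitBallNorm_pos n
  have hF := hdata.rhs_nonneg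
  have hB := hdata.coeff_nonneg
  have hρ : 0 < ρ := by
    by_contra! hρ
    obtain ⟨x, hx, -⟩ := hne
    exact (Metric.pos_of_mem_ball hx.1).not_ge (by linarith)
  have hcb : Metric.closedBall y ρ ⊆ Metric.ball y (5 * ρ) :=
    Metric.closedBall_subset_ball (by linarith)
  have hmeas : MeasurableSet (Metric.ball y ρ \
      touchSet u (gradient u) (Metric.ball y (5 * ρ)) (M * a) (G + C * a * R)) := by
    have hcompact := isCompact_touchSet_inter (isCompact_closedBall y ρ) hcb
      (hu.hasHessianOn.continuousOn.mono hcb) (hu.hasHessianOn.continuousOn_gradient.mono hcb)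
      (M * a) (G + C * a * R)
    simpa only [Set.sdiff_inter, Set.sdiff_eq_empty.2 Metric.ball_subset_closedBall,
      Set.union_empty] using
        (measurableSet_ball (x := y) (ε := ρ)).diff hcompact.measurableSet
  have hmono : touchSet u (gradient u) (Metric.ball y (5 * ρ)) a G ⊆
      touchSet u (gradient u) (Metric.ball y (5 * ρ)) (M * a) (G + C * a * R) :=
    touchSet_mono (le_mul_of_one_le_left ha.le (by linarith [h.four_le]))
      (le_add_of_nonneg_right (by positivity))
  have hdecay := measureReal_le_of_le_mul_add_sdiff
    (measure_ne_top_of_subset Set.sdiff_subset measure_ball_lt_top.ne)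
    (Set.sdiff_subset_sdiff_right hmono) hmeas (by positivity) (by positivity)
    ((h.volume_sdiff_touchSet_le_mul hn hu ha hR hne hvol).trans (mul_le_mul_right
      (add_le_add_left (hdata.dataMeasure_le hn measurableSet_ball (by positivity)
        (by positivity)) _) _))
  refine hdecay.trans ?_
  gcongr
  rw [sub_nonneg, div_le_one (by positivity)]
  exact le_add_of_nonneg_right (by positivity)

end TouchingDensity

section LayerCake

variable {α : Type*} {g : α → ℝ} {H Q ε : ℝ}

theorem ofReal_rpow_le_tsum_indicator (g : α → ℝ) (hH : 0 < H) (hQ : 1 < Q) (hε : 0 ≤ ε) (x : α) :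
    ENNReal.ofReal (g x) ^ ε ≤ ENNReal.ofReal H ^ ε *
      (1 + ∑' k : ℕ, ENNReal.ofReal (Q ^ ε) ^ (k + 1) *
        Set.indicator {x | H * Q ^ k ≤ g x} 1 x) := by
  rcases le_total (g x) H with hle | hlt
  · exact (ENNReal.rpow_le_rpow (ENNReal.ofReal_le_ofReal hle) hε).trans
      (le_mul_of_one_le_right' le_self_add)
  · obtain ⟨k, hk, hk'⟩ := exists_nat_pow_near ((one_le_div hH).2 hlt) hQ
    have hmem : x ∈ {x | H * Q ^ k ≤ g x} := (le_div_iff₀' hH).1 hk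
    calc ENNReal.ofReal (g x) ^ ε ≤ ENNReal.ofReal (H * Q ^ (k + 1)) ^ ε := by
          gcongr
          exact ((div_lt_iff₀' hH).1 hk').le
      _ = ENNReal.ofReal H ^ ε * (ENNReal.ofReal (Q ^ ε) ^ (k + 1) *
            Set.indicator {x | H * Q ^ k ≤ g x} 1 x) := by
          rw [Set.indicator_of_mem hmem, Pi.one_apply, mul_one, ENNReal.ofReal_mul hH.le,
            ENNReal.mul_rpow_of_nonneg _ _ hε, ENNReal.ofReal_pow (by positivity),
            ← ENNReal.ofReal_rpow_of_pos (by positivity), ← ENNReal.rpow_natCast,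
            ← ENNReal.rpow_natCast, ← ENNReal.rpow_mul, ← ENNReal.rpow_mul, mul_comm ε]
      _ ≤ _ := by
          gcongr
          exact (ENNReal.le_tsum k).trans le_add_self

variable [MeasurableSpace α] {μ : Measure α}

theorem lintegral_ofReal_rpow_le_tsum (hg : AEMeasurable g μ) (hH : 0 < H) (hQ : 1 < Q)
    (hε : 0 ≤ ε) :
    ∫⁻ x, ENNReal.ofReal (g x) ^ ε ∂μ ≤ ENNReal.ofReal H ^ ε *
      (μ Set.univ + ∑' k : ℕ, ENNReal.ofReal (Q ^ ε) ^ (k + 1) * μ {x | H * Q ^ k ≤ g x}) := by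
  have hnull : ∀ k : ℕ, NullMeasurableSet {x | H * Q ^ k ≤ g x} μ := fun k =>
    nullMeasurableSet_le aemeasurable_const hg
  have hmeas : ∀ k : ℕ, AEMeasurable (fun x => ENNReal.ofReal (Q ^ ε) ^ (k + 1) *
      Set.indicator {x | H * Q ^ k ≤ g x} (1 : α → ℝ≥0∞) x) μ := fun k =>
    ((aemeasurable_const (b := 1)).indicator₀ (hnull k)).const_mul _
  refine (lintegral_mono (ofReal_rpow_le_tsum_indicator g hH hQ hε)).trans_eq ?_
  rw [lintegral_const_mul' _ _ (ENNReal.rpow_ne_top_of_nonneg hε ENNReal.ofReal_ne_top),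
    lintegral_add_left measurable_const, lintegral_one, lintegral_tsum hmeas]
  congr! 3
  funext k
  rw [lintegral_const_mul' _ _ (ENNReal.pow_ne_top ENNReal.ofReal_ne_top),
    lintegral_indicator_one₀ (hnull k)]

theorem lintegral_ofReal_rpow_le_of_geometric_decay (hg : AEMeasurable g μ) (hH : 0 < H)
    (hQ : 1 < Q) (hε : 0 ≤ ε) {V κ : ℝ} (hV : 0 ≤ V) (hκ : 0 ≤ κ) (hQκ : Q ^ ε * κ < 1)
    (huniv : μ Set.univ ≤ ENNReal.ofReal V)
    (hdecay : ∀ k : ℕ, μ {x | H * Q ^ k ≤ g x} ≤ ENNReal.ofReal (V * κ ^ k)) :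
    ∫⁻ x, ENNReal.ofReal (g x) ^ ε ∂μ ≤
      ENNReal.ofReal (H ^ ε * (V * (1 + Q ^ ε * (1 - Q ^ ε * κ)⁻¹))) := by
  have hgap : 0 < 1 - Q ^ ε * κ := sub_pos.2 hQκ
  have hsum : ∑' k : ℕ, ENNReal.ofReal (Q ^ ε) ^ (k + 1) * μ {x | H * Q ^ k ≤ g x} ≤
      ENNReal.ofReal (V * (Q ^ ε * (1 - Q ^ ε * κ)⁻¹)) :=
    calc ∑' k : ℕ, ENNReal.ofReal (Q ^ ε) ^ (k + 1) * μ {x | H * Q ^ k ≤ g x}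
        ≤ ∑' k : ℕ, ENNReal.ofReal (V * Q ^ ε) * ENNReal.ofReal (Q ^ ε * κ) ^ k := by
          refine ENNReal.tsum_le_tsum fun k => (mul_le_mul_right (hdecay k) _).trans_eq ?_
          rw [← ENNReal.ofReal_pow (by positivity), ← ENNReal.ofReal_pow (by positivity),
            ← ENNReal.ofReal_mul (by positivity), ← ENNReal.ofReal_mul (by positivity)]
          ring_nf
      _ = _ := by
          rw [ENNReal.tsum_mul_left, ENNReal.tsum_geometric, ← ENNReal.ofReal_one,
            ← ENNReal.ofReal_sub _ (by positivity), ← ENNReal.ofReal_inv_of_pos hgap,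
            ← ENNReal.ofReal_mul (by positivity), mul_assoc]
  refine (lintegral_ofReal_rpow_le_tsum hg hH hQ hε).trans
    ((mul_le_mul_right (add_le_add huniv hsum) _).trans_eq ?_)
  rw [← ENNReal.ofReal_add hV (by positivity), ENNReal.ofReal_rpow_of_pos hH,
    ← ENNReal.ofReal_mul (by positivity), mul_one_add]

end LayerCake

theorem IsNonnegSupersolution.neg_rhs_le_of_mem_touchSet {b f u : E n → ℝ} {Ω : Set (E n)}
    (hu : IsNonnegSupersolution lam Lam b f u Ω) (h0 : 0 ≤ lam) (hL : lam ≤ Lam) {a G : ℝ}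
    (ha : 0 ≤ a) {x : E n} (hx : x ∈ touchSet u (gradient u) Ω a G) :
    -f x ≤ 2 * a * Lam * n + b x * G := by
  have hlower := neg_mul_le_pucciMinus h0 hL (by positivity)
    (hu.hasHessianOn.isPositive_of_mem_touchSet hu.isOpen hx)
  have hupper := hu.pucciMinus_matrixOf_le hx.1
  have hslope : b x * ‖gradient u x‖ ≤ b x * G :=
    mul_le_mul_of_nonneg_left hx.2.2 (hu.coeff_nonneg x hx.1)
  linarith

theorem exists_growth_ratio (hn : n ≠ 0) {k ω : ℝ} (hk : 0 ≤ k) (hω : 0 < ω) (C : ℝ) :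
    ∃ θ δ : ℝ, 1 / 2 ≤ θ ∧ θ < 1 ∧ 0 < δ ∧ C * (δ ^ n + δ ^ n) < 1 ∧
      (1 - 1 / (1 + k)) * ω ^ n + (δ ^ n + ((C + 1) * δ) ^ n) ≤ (θ * ω) ^ n := by
  have hlt : (1 - 1 / (1 + k)) * ω ^ n < (1 * ω) ^ n := by
    rw [one_mul]
    have : 0 < 1 / (1 + k) * ω ^ n := by positivity
    linarith
  have hθ : ∀ᶠ θ in 𝓝[<] (1 : ℝ), 1 / 2 ≤ θ ∧ (1 - 1 / (1 + k)) * ω ^ n < (θ * ω) ^ n :=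
    nhdsWithin_le_nhds ((eventually_ge_nhds (by norm_num)).and
      (((by fun_prop : Continuous fun θ : ℝ => (θ * ω) ^ n).tendsto 1).eventually_const_lt hlt))
  obtain ⟨θ, ⟨hθ2, hθω⟩, hθ1⟩ := (hθ.and self_mem_nhdsWithin).exists
  have hsmall : ∀ᶠ δ in 𝓝[>] (0 : ℝ), C * (δ ^ n + δ ^ n) < 1 ∧
      (1 - 1 / (1 + k)) * ω ^ n + (δ ^ n + ((C + 1) * δ) ^ n) < (θ * ω) ^ n :=
    nhdsWithin_le_nhds
      ((((by fun_prop : Continuous fun δ : ℝ => C * (δ ^ n + δ ^ n)).tendsto 0).eventually_lt_const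
        (by simp [hn])).and
      (((by fun_prop : Continuous fun δ : ℝ => (1 - 1 / (1 + k)) * ω ^ n +
        (δ ^ n + ((C + 1) * δ) ^ n)).tendsto 0).eventually_lt_const (by simpa [hn] using hθω)))
  obtain ⟨δ, ⟨hδ1, hδ2⟩, hδ0⟩ := (hsmall.and self_mem_nhdsWithin).exists
  exact ⟨θ, δ, hθ2, hθ1, hδ0, hδ1, hδ2.le⟩

theorem div_le_div_sq_mul_pow_mul {ρ T M θ : ℝ} (hρ : 0 < ρ) (hT : 0 ≤ T) (hM : 1 ≤ M)
    (hMθ : 1 ≤ M * θ) (k : ℕ) : T / ρ ≤ T / ρ ^ 2 * M ^ (k + 1) * (ρ * θ ^ k) :=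
  calc T / ρ = T / ρ * (1 * 1) := by ring
    _ ≤ T / ρ * (M * (M * θ) ^ k) := by
        gcongr
        exact one_le_pow₀ hMθ
    _ = _ := by
        rw [mul_pow]
        field_simp
        ring

namespace TouchingDensity

variable {M C : ℝ} {b f u : E n → ℝ} {y : E n} {ρ : ℝ}

theorem volume_sdiff_touchSet_le_succ (h : TouchingDensity n lam Lam M C) (hn : n ≠ 0)
    {θ δ s a R : ℝ} (hMθ : 2 ≤ M * θ) (hδ : 0 ≤ δ)
    (hdecay : (1 - 1 / (1 + (20 * unitBallNorm n) ^ n * C)) * unitBallNorm n ^ n +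
      (δ ^ n + ((C + 1) * δ) ^ n) ≤ (θ * unitBallNorm n) ^ n)
    (hu : IsNonnegSupersolution lam Lam b f u (Metric.ball y (5 * ρ)))
    (hdata : DataBound b f (Metric.ball y (5 * ρ)) (δ * s) δ) (ha : 0 < a) (hR : 0 ≤ R)
    (hs : s ≤ a * R)
    (hne : (touchSet u (gradient u) (Metric.ball y (5 * ρ)) a (C * a * R) ∩
      Metric.closedBall y ρ).Nonempty)
    (hvol : volume.real (Metric.ball y ρ \
      touchSet u (gradient u) (Metric.ball y (5 * ρ)) a (C * a * R)) ≤
        (R * unitBallNorm n) ^ n) :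
    volume.real (Metric.ball y ρ \
      touchSet u (gradient u) (Metric.ball y (5 * ρ)) (M * a) (C * (M * a) * (R * θ))) ≤
        (R * θ * unitBallNorm n) ^ n := by
  have hC := h.one_le
  have hslope : C * a * R + C * a * R ≤ C * (M * a) * (R * θ) := by
    have : C * a * R * 2 ≤ C * a * R * (M * θ) := by gcongr
    linarith
  calc volume.real (Metric.ball y ρ \
        touchSet u (gradient u) (Metric.ball y (5 * ρ)) (M * a) (C * (M * a) * (R * θ)))
      ≤ volume.real (Metric.ball y ρ \ touchSet u (gradient u) (Metric.ball y (5 * ρ)) (M * a)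
          (C * a * R + C * a * R)) :=
        measureReal_mono (Set.sdiff_subset_sdiff_right (touchSet_mono le_rfl hslope))
          (measure_ne_top_of_subset Set.sdiff_subset measure_ball_lt_top.ne)
    _ ≤ (1 - 1 / (1 + (20 * unitBallNorm n) ^ n * C)) * (R * unitBallNorm n) ^ n +
          ((a⁻¹ * (δ * s)) ^ n + ((C * a * R / a + R) * δ) ^ n) :=
        h.volume_sdiff_touchSet_le hn hu hdata ha (by positivity) hR hne hvol
    _ ≤ (1 - 1 / (1 + (20 * unitBallNorm n) ^ n * C)) * (R * unitBallNorm n) ^ n +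
          ((a⁻¹ * (δ * (a * R))) ^ n + ((C * a * R / a + R) * δ) ^ n) := by
        have := hdata.rhs_nonneg
        gcongr
    _ = R ^ n * ((1 - 1 / (1 + (20 * unitBallNorm n) ^ n * C)) * unitBallNorm n ^ n +
          (δ ^ n + ((C + 1) * δ) ^ n)) := by
        rw [show a⁻¹ * (δ * (a * R)) = R * δ by field_simp,
          show (C * a * R / a + R) * δ = R * ((C + 1) * δ) by field_simp, mul_pow R, mul_pow R,
          mul_pow R]
        ring
    _ ≤ R ^ n * (θ * unitBallNorm n) ^ n := by gcongr
    _ = (R * θ * unitBallNorm n) ^ n := by rw [← mul_pow, mul_assoc]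

theorem exists_volume_sdiff_touchSet_le (h : TouchingDensity n lam Lam M C) (hn : n ≠ 0) :
    ∃ θ δ : ℝ, 1 / 2 ≤ θ ∧ θ < 1 ∧ 0 < δ ∧ ∀ {b f u : E n → ℝ} {y : E n} {ρ T : ℝ}, 0 < ρ →
      0 < T → IsNonnegSupersolution lam Lam b f u (Metric.ball y (5 * ρ)) →
      DataBound b f (Metric.ball y (5 * ρ)) (δ * (T / ρ)) δ →
      (∃ x₁ ∈ Metric.ball y ρ, u x₁ ≤ T) → ∀ k : ℕ,
      volume.real (Metric.ball y ρ \ touchSet u (gradient u) (Metric.ball y (5 * ρ))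
        (T / ρ ^ 2 * M ^ (k + 1)) (C * (T / ρ ^ 2 * M ^ (k + 1)) * (ρ * θ ^ k))) ≤
          (ρ * θ ^ k * unitBallNorm n) ^ n := by
  have hM := h.four_le
  have hC := h.one_le
  have hω := unitBallNorm_pos n
  obtain ⟨θ, δ, hθ2, hθ1, hδ, hδC, hdecay⟩ := exists_growth_ratio hn
    (k := (20 * unitBallNorm n) ^ n * C) (by positivity) hω C
  have hMθ : 2 ≤ M * θ := by nlinarith
  refine ⟨θ, δ, hθ2, hθ1, hδ, fun {b f u y ρ T} hρ hT hu hdata ⟨x₁, hx₁, hux₁⟩ k => ?_⟩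
  have hinit := h.nonempty_touchSet hn hu hdata hρ (a := T / ρ ^ 2) (by positivity) hx₁
    (by rwa [div_mul_cancel₀ _ (by positivity)]) (by
      rw [show (T / ρ ^ 2)⁻¹ * (δ * (T / ρ)) = ρ * δ by field_simp, mul_pow]
      have : ρ ^ n * (C * (δ ^ n + δ ^ n)) < ρ ^ n * 1 := by gcongr
      linarith)
  have hslope := div_le_div_sq_mul_pow_mul hρ hT.le (show 1 ≤ M by linarith)
    (show 1 ≤ M * θ by linarith)
  have hne : ∀ k : ℕ, (touchSet u (gradient u) (Metric.ball y (5 * ρ))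
      (T / ρ ^ 2 * M ^ (k + 1)) (C * (T / ρ ^ 2 * M ^ (k + 1)) * (ρ * θ ^ k)) ∩
        Metric.closedBall y ρ).Nonempty := by
    refine fun k => hinit.mono (Set.inter_subset_inter_left _ (touchSet_mono ?_ ?_))
    · rw [mul_comm M]
      gcongr
      exact le_self_pow₀ (by linarith) (by omega)
    · calc C * (T / ρ ^ 2) * ρ = C * (T / ρ) := by field_simp
        _ ≤ C * (T / ρ ^ 2 * M ^ (k + 1) * (ρ * θ ^ k)) := by gcongr; exact hslope k
        _ = _ := by ring
  induction k with
  | zero =>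
    rw [pow_zero, mul_one]
    refine (measureReal_mono Set.sdiff_subset measure_ball_lt_top.ne).trans_eq ?_
    rw [measureReal_def, volume_ball_eq y hρ.le hn, ENNReal.toReal_pow,
      ENNReal.toReal_ofReal (by positivity)]
  | succ k ih =>
    have := h.volume_sdiff_touchSet_le_succ hn hMθ hδ.le hdecay hu hdata (by positivity)
      (by positivity) (hslope k) (hne k) ih
    rwa [mul_comm M, mul_assoc (T / ρ ^ 2), ← pow_succ, mul_assoc ρ, ← pow_succ] at this

end TouchingDensity

theorem DataBound.restrict_setOf_le_coeff_le {b f : E n → ℝ} {Ω : Set (E n)} {F B t : ℝ}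
    (hdata : DataBound b f Ω F B) (hn : n ≠ 0)
    (hb : AEStronglyMeasurable b (volume.restrict Ω)) (ht : 0 < t) :
    volume.restrict Ω {x | t ≤ b x} ≤ ENNReal.ofReal ((B / t) ^ n) := by
  have hcheb := meas_ge_le_mul_pow_eLpNorm_enorm (volume.restrict Ω) (p := n) (by simpa using hn)
    (ENNReal.natCast_ne_top n) hb (ε := ENNReal.ofReal t) (by simpa using ht)
    fun h => absurd h ENNReal.ofReal_ne_top
  rw [ENNReal.toReal_natCast, ENNReal.rpow_natCast, ENNReal.rpow_natCast] at hcheb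
  calc volume.restrict Ω {x | t ≤ b x}
      ≤ volume.restrict Ω {x | ENNReal.ofReal t ≤ ‖b x‖ₑ} := by
        refine measure_mono fun x hx => ?_
        rw [Set.mem_ofPred_eq, Real.enorm_eq_ofReal_abs]
        exact ENNReal.ofReal_le_ofReal (hx.trans (le_abs_self _))
    _ ≤ (ENNReal.ofReal t)⁻¹ ^ n * ENNReal.ofReal B ^ n :=
        hcheb.trans (mul_le_mul_right (pow_le_pow_left' hdata.eLpNorm_coeff_le n) _)
    _ = ENNReal.ofReal ((B / t) ^ n) := by
        rw [← mul_pow, ← ENNReal.ofReal_inv_of_pos ht, ← ENNReal.ofReal_mul (by positivity),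
          ← ENNReal.ofReal_pow (mul_nonneg (by positivity) hdata.coeff_nonneg), inv_mul_eq_div]

theorem IsNonnegSupersolution.neg_rhs_lt_of_mem_touchSet {b f u : E n → ℝ} {Ω : Set (E n)}
    (hu : IsNonnegSupersolution lam Lam b f u Ω) (h0 : 0 ≤ lam) (hL : lam ≤ Lam) {a C R m : ℝ}
    (ha : 0 < a) (hC : 0 < C) (hm : 1 ≤ m) {x : E n}
    (hx : x ∈ touchSet u (gradient u) Ω a (C * a * R)) (hb : b x * R < m) :
    -f x < (2 * Lam * n + C) * a * m :=
  calc -f x ≤ 2 * a * Lam * n + b x * (C * a * R) := hu.neg_rhs_le_of_mem_touchSet h0 hL ha.le hx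
    _ = 2 * a * Lam * n * 1 + C * a * (b x * R) := by ring
    _ < 2 * a * Lam * n * m + C * a * m := by
        have : 0 ≤ Lam := h0.trans hL
        exact add_lt_add_of_le_of_lt (by gcongr) (by gcongr)
    _ = _ := by ring

theorem IsNonnegSupersolution.setOf_le_neg_rhs_inter_subset {b f u : E n → ℝ} {Ω U : Set (E n)}
    (hu : IsNonnegSupersolution lam Lam b f u Ω) (h0 : 0 ≤ lam) (hL : lam ≤ Lam)
    {a C R ρ m : ℝ} (ha : 0 < a) (hC : 0 < C) (hm : 1 ≤ m) (hρ : 0 < ρ) (hR : R ≤ ρ)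
    (hU : U ⊆ Ω) :
    {x | (2 * Lam * n + C) * a * m ≤ -f x} ∩ U ⊆
      (U \ touchSet u (gradient u) Ω a (C * a * R)) ∪ ({x | m / ρ ≤ b x} ∩ Ω) := by
  rintro x ⟨hx, hxU⟩
  by_contra hcon
  rw [Set.mem_union, not_or, Set.mem_sdiff, not_and_not_right] at hcon
  have hbx : b x < m / ρ := not_le.1 fun hle => hcon.2 ⟨hle, hU hxU⟩
  have hbR : b x * R < m :=
    (mul_le_mul_of_nonneg_left hR (hu.coeff_nonneg x (hU hxU))).trans_lt ((lt_div_iff₀ hρ).1 hbx)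
  exact hx.not_gt (hu.neg_rhs_lt_of_mem_touchSet h0 hL ha hC hm (hcon.1 hxU) hbR)

theorem TouchingDensity.volume_setOf_le_neg_rhs_le {M C : ℝ} {b f u : E n → ℝ} {y : E n} {ρ : ℝ}
    (h : TouchingDensity n lam Lam M C) (hn : n ≠ 0) (h0 : 0 ≤ lam) (hL : lam ≤ Lam)
    {θ B F s : ℝ} (hθ2 : 1 / 2 ≤ θ) (hθ1 : θ ≤ 1) (hρ : 0 < ρ) (hs : 0 < s)
    (hu : IsNonnegSupersolution lam Lam b f u (Metric.ball y (5 * ρ)))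
    (hdata : DataBound b f (Metric.ball y (5 * ρ)) F B) (k : ℕ)
    (hvol : volume.real (Metric.ball y ρ \ touchSet u (gradient u) (Metric.ball y (5 * ρ))
      (s * M ^ (k + 1)) (C * (s * M ^ (k + 1)) * (ρ * θ ^ k))) ≤
        (ρ * θ ^ k * unitBallNorm n) ^ n) :
    volume.restrict (Metric.ball y ρ) {x | (2 * Lam * n + C) * M * s * (M ^ 2) ^ k ≤ -f x} ≤
      ENNReal.ofReal (((ρ * unitBallNorm n) ^ n + (ρ * B) ^ n) * θ ^ k) := by
  have hM := h.four_le
  have hC := h.one_le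
  have hω := unitBallNorm_pos n
  have hB := hdata.coeff_nonneg
  have hθ : 0 ≤ θ := by linarith
  have hsub := hu.setOf_le_neg_rhs_inter_subset h0 hL (a := s * M ^ (k + 1)) (C := C)
    (R := ρ * θ ^ k) (m := M ^ k) (by positivity) (by linarith) (one_le_pow₀ (by linarith)) hρ
    (mul_le_of_le_one_right hρ.le (pow_le_one₀ hθ hθ1))
    (Metric.ball_subset_ball (show ρ ≤ 5 * ρ by linarith))
  set S := touchSet u (gradient u) (Metric.ball y (5 * ρ)) (s * M ^ (k + 1))
    (C * (s * M ^ (k + 1)) * (ρ * θ ^ k))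
  have hpow : (θ ^ k) ^ n ≤ θ ^ k :=
    pow_le_of_le_one (by positivity) (pow_le_one₀ hθ hθ1) hn
  have hMk : (M ^ k)⁻¹ ≤ θ ^ k := by
    rw [← inv_pow]
    gcongr
    exact (inv_anti₀ two_pos (by linarith)).trans (by linarith)
  have htouch : volume (Metric.ball y ρ \ S) ≤
      ENNReal.ofReal ((ρ * unitBallNorm n) ^ n * θ ^ k) := by
    refine (ENNReal.le_ofReal_iff_toReal_le
      (measure_ne_top_of_subset Set.sdiff_subset measure_ball_lt_top.ne) (by positivity)).2
      (hvol.trans ?_)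
    rw [mul_right_comm, mul_pow _ (θ ^ k)]
    gcongr
  have hcoeff : volume ({x | M ^ k / ρ ≤ b x} ∩ Metric.ball y (5 * ρ)) ≤
      ENNReal.ofReal ((ρ * B) ^ n * θ ^ k) := by
    rw [← Measure.restrict_apply' measurableSet_ball]
    refine (hdata.restrict_setOf_le_coeff_le hn
      (hu.continuousOn_coeff.aestronglyMeasurable measurableSet_ball) (by positivity)).trans
      (ENNReal.ofReal_le_ofReal ?_)
    calc (B / (M ^ k / ρ)) ^ n = (ρ * B) ^ n * ((M ^ k)⁻¹) ^ n := by
          rw [← mul_pow]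
          field_simp
      _ ≤ (ρ * B) ^ n * (θ ^ k) ^ n := by gcongr
      _ ≤ _ := by gcongr
  rw [Measure.restrict_apply' measurableSet_ball, add_mul (_ ^ n),
    ENNReal.ofReal_add (by positivity) (by positivity),
    show (2 * Lam * n + C) * M * s * (M ^ 2) ^ k = (2 * Lam * n + C) * (s * M ^ (k + 1)) * M ^ k by
      ring]
  exact (measure_mono hsub).trans ((measure_union_le _ _).trans (add_le_add htouch hcoeff))

theorem exists_forall_rpow_mul_lt_one {Q θ : ℝ} (hQ : 1 ≤ Q) (hθ0 : 0 ≤ θ) (hθ1 : θ < 1) :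
    ∃ ε₀ > (0 : ℝ), ∀ ε ≤ ε₀, Q ^ ε * θ < 1 := by
  have hcont : ContinuousAt (fun ε : ℝ => Q ^ ε * θ) 0 :=
    (Real.continuousAt_const_rpow (by linarith)).mul_const θ
  have hev : ∀ᶠ ε in 𝓝[>] (0 : ℝ), Q ^ ε * θ < 1 :=
    nhdsWithin_le_nhds (hcont.eventually_lt_const (by simpa using hθ1))
  obtain ⟨ε₀, hε₀, hpos⟩ := (hev.and self_mem_nhdsWithin).exists
  exact ⟨ε₀, hpos, fun ε hε => lt_of_le_of_lt (by gcongr) hε₀⟩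

theorem exists_lintegral_rpow_neg_rhs_le (hn : n ≠ 0) (h0 : 0 < lam) (hL : lam ≤ Lam) :
    ∃ ε₀ δ : ℝ, 0 < ε₀ ∧ 0 < δ ∧ ∀ ε, 0 < ε → ε ≤ ε₀ → ∃ C : ℝ, 0 < C ∧
      ∀ {b f u : E n → ℝ} {y : E n} {ρ T : ℝ}, 0 < ρ → 0 < T →
        IsNonnegSupersolution lam Lam b f u (Metric.ball y (5 * ρ)) →
        DataBound b f (Metric.ball y (5 * ρ)) (δ * (T / ρ)) δ →
        (∃ x₁ ∈ Metric.ball y ρ, u x₁ ≤ T) →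
        ∫⁻ x in Metric.ball y ρ, ENNReal.ofReal (-f x) ^ ε ≤
          ENNReal.ofReal (C * ((T / ρ ^ 2) ^ ε * ρ ^ n)) := by
  obtain ⟨M, C, hMC⟩ := exists_touchingDensity hn h0 hL
  have hM := hMC.four_le
  have hC := hMC.one_le
  have hω := unitBallNorm_pos n
  have hLam : 0 < Lam := h0.trans_le hL
  obtain ⟨θ, δ, hθ2, hθ1, hδ, hdecay⟩ := hMC.exists_volume_sdiff_touchSet_le hn
  have hθ : 0 ≤ θ := by linarith
  have hQ : 1 < M ^ 2 := one_lt_pow₀ (by linarith) two_ne_zero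
  obtain ⟨ε₀, hε₀, hQε⟩ := exists_forall_rpow_mul_lt_one hQ.le hθ hθ1
  refine ⟨ε₀, δ, hε₀, hδ, fun ε hε hεε₀ => ?_⟩
  have hgap : 0 < 1 - (M ^ 2) ^ ε * θ := sub_pos.2 (hQε ε hεε₀)
  refine ⟨((2 * Lam * n + C) * M) ^ ε * ((unitBallNorm n ^ n + δ ^ n) *
    (1 + (M ^ 2) ^ ε * (1 - (M ^ 2) ^ ε * θ)⁻¹)), by positivity,
    fun {b f u y ρ T} hρ hT hu hdata hex => ?_⟩
  have hmeas : AEMeasurable (fun x => -f x) (volume.restrict (Metric.ball y ρ)) :=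
    (hu.continuousOn_rhs.neg.mono (Metric.ball_subset_ball (by linarith))).aemeasurable
      measurableSet_ball
  have huniv : volume.restrict (Metric.ball y ρ) Set.univ ≤
      ENNReal.ofReal ((ρ * unitBallNorm n) ^ n + (ρ * δ) ^ n) := by
    rw [Measure.restrict_apply_univ, volume_ball_eq y hρ.le hn,
      ← ENNReal.ofReal_pow (by positivity)]
    exact ENNReal.ofReal_le_ofReal (le_add_of_nonneg_right (by positivity))
  refine (lintegral_ofReal_rpow_le_of_geometric_decay hmeas
    (H := (2 * Lam * n + C) * M * (T / ρ ^ 2)) (by positivity) hQ hε.le (by positivity) hθ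
    (hQε ε hεε₀) huniv fun k => hMC.volume_setOf_le_neg_rhs_le hn h0.le hL hθ2 hθ1.le hρ
      (by positivity) hu hdata k (hdecay hρ hT hu hdata hex k)).trans_eq ?_
  rw [Real.mul_rpow (by positivity) (by positivity), mul_pow ρ, mul_pow ρ]
  congr 1
  ring

/-! ### Summing local estimates over the half-ball -/

theorem integrableOn_comp_apply {ι : Type*} [Fintype ι] {g : ℝ → ℝ} {R : ℝ} (i : ι)
    (hg : IntegrableOn g (Set.Icc (-R) R)) :
    IntegrableOn (fun x : EuclideanSpace ℝ ι => g (x i)) (Metric.ball 0 R) := by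
  classical
  have hbox : IntegrableOn (fun x : ι → ℝ => g (x i)) (Set.univ.pi fun _ => Set.Icc (-R) R) := by
    rw [IntegrableOn, volume_pi, Measure.restrict_pi_pi]
    refine Integrable.comp_measurable ?_ (measurable_pi_apply i)
    rw [Measure.pi_map_eval]
    exact hg.integrable.smul_measure (ENNReal.prod_ne_top fun j _ => by simp)
  refine ((PiLp.volume_preserving_ofLp ι).integrableOn_comp_preimage
    (MeasurableEquiv.measurableEmbedding (MeasurableEquiv.toLp 2 (ι → ℝ)).symm)).2 hbox
    |>.mono_set fun x hx j _ => ?_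
  exact abs_le.1 ((PiLp.norm_apply_le x j).trans (mem_ball_zero_iff.1 hx).le)

theorem integrableOn_lastC_rpow (hn : 1 ≤ n) {s : ℝ} (hs : -1 < s) {R : ℝ} (hR : 0 ≤ R) :
    IntegrableOn (fun x => lastC n hn x ^ s) (halfBall n hn R) := by
  have hIcc : IntegrableOn (fun t : ℝ => t ^ s) (Set.Icc (-R) R) :=
    (intervalIntegrable_iff_integrableOn_Icc_of_le (by linarith)).1
      (intervalIntegral.intervalIntegrable_rpow' hs)
  exact (integrableOn_comp_apply ⟨n - 1, by omega⟩ hIcc).mono_set (halfBall_subset_ball hn R)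

theorem ofReal_pow_mul_lastC_rpow_le_lintegral (hn : 1 ≤ n) {s : ℝ} (hs : s ≤ 0) {y : E n} {t : ℝ}
    (ht : 0 < t) (hty : t < lastC n hn y) :
    ENNReal.ofReal (t ^ n * lastC n hn y ^ s) ≤ ENNReal.ofReal ((1 / unitBallNorm n) ^ n / 2 ^ s) *
      ∫⁻ x in Metric.closedBall y t, ENNReal.ofReal (lastC n hn x ^ s) := by
  have hω := unitBallNorm_pos n
  have hy : 0 < lastC n hn y := ht.trans hty
  have : Nonempty (Fin n) := ⟨⟨0, hn⟩⟩
  calc ENNReal.ofReal (t ^ n * lastC n hn y ^ s)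
      = ENNReal.ofReal ((1 / unitBallNorm n) ^ n / 2 ^ s) *
          (ENNReal.ofReal ((2 * lastC n hn y) ^ s) * volume (Metric.closedBall y t)) := by
        rw [Measure.addHaar_closedBall_eq_addHaar_ball,
          volume_ball_eq y ht.le (by omega), ← ENNReal.ofReal_pow (by positivity),
          ← ENNReal.ofReal_mul (by positivity), ← ENNReal.ofReal_mul (by positivity),
          Real.mul_rpow zero_le_two hy.le]
        congr 1
        rw [mul_pow, div_pow, one_pow]
        field_simp
    _ ≤ _ := by
        gcongr
        rw [← setLIntegral_const]
        refine setLIntegral_mono' measurableSet_closedBall fun x hx => ENNReal.ofReal_le_ofReal ?_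
        have hx' := abs_lt.1 (abs_lastC_sub_lt_of_mem_ball hn
          (Metric.closedBall_subset_ball hty hx))
        exact Real.rpow_le_rpow_of_nonpos (by linarith) (by linarith) hs

theorem closedBall_mul_lastC_subset_halfBall (hn : 1 ≤ n) {θ : ℝ} (hθ : θ ≤ 1 / 4)
    {y : E n} (hy : y ∈ halfBall n hn (3 / 2)) :
    Metric.closedBall y (θ * lastC n hn y) ⊆ halfBall n hn 2 := by
  have hy0 := hy.2
  have hyn := ((le_abs_self _).trans (abs_lastC_le hn y)).trans_lt hy.1
  have hθy : θ * lastC n hn y ≤ 1 / 4 * lastC n hn y := by gcongr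
  exact (Metric.closedBall_subset_ball (ε₂ := 1 / 3 * lastC n hn y) (by linarith)).trans
    (ball_subset_halfBall (by linarith [hy.1]) (by linarith))

theorem setLIntegral_halfBall_le_mul (hn : 1 ≤ n) {s : ℝ} (hs : s ≤ 0) {g : E n → ℝ≥0∞}
    {θ A : ℝ} (hθ : 0 < θ) (hθ1 : θ ≤ 1) (hA : 0 ≤ A)
    (hlocal : ∀ y ∈ halfBall n hn (3 / 2), ∫⁻ x in Metric.ball y (θ * lastC n hn y), g x ≤
      ENNReal.ofReal (A * ((θ * lastC n hn y) ^ n * lastC n hn y ^ s))) :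
    ∫⁻ x in halfBall n hn (3 / 2), g x ≤
      ENNReal.ofReal (A * 10 ^ n * ((1 / unitBallNorm n) ^ n / 2 ^ s)) *
        ∫⁻ x in halfBall n hn 2, ENNReal.ofReal (lastC n hn x ^ s) := by
  rw [← withDensity_apply g (isOpen_halfBall hn _).measurableSet,
    ← withDensity_apply _ (isOpen_halfBall hn _).measurableSet]
  refine measure_le_mul_of_forall_exists_closedBall (R := 3 / 2) fun y hy => ?_
  have hy0 := hy.2
  have hyn := ((le_abs_self _).trans (abs_lastC_le hn y)).trans_lt hy.1
  have hθy : θ * lastC n hn y ≤ lastC n hn y := mul_le_of_le_one_left hy0.le hθ1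
  have hpos : 0 < θ * lastC n hn y := mul_pos hθ hy0
  refine ⟨y, θ / 10 * lastC n hn y, by positivity, by linarith,
    Metric.mem_closedBall_self (by positivity),
    closedBall_mul_lastC_subset_halfBall hn (by linarith) hy, ?_⟩
  rw [withDensity_apply _ measurableSet_closedBall, withDensity_apply _ measurableSet_closedBall]
  calc ∫⁻ x in Metric.closedBall y (5 * (θ / 10 * lastC n hn y)), g x
      ≤ ∫⁻ x in Metric.ball y (θ * lastC n hn y), g x :=
        lintegral_mono_set (Metric.closedBall_subset_ball (by linarith))
    _ ≤ ENNReal.ofReal (A * ((θ * lastC n hn y) ^ n * lastC n hn y ^ s)) := hlocal y hy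
    _ = ENNReal.ofReal (A * 10 ^ n) *
          ENNReal.ofReal ((θ / 10 * lastC n hn y) ^ n * lastC n hn y ^ s) := by
        rw [← ENNReal.ofReal_mul (by positivity)]
        congr 1
        rw [div_mul_eq_mul_div, div_pow]
        field_simp
    _ ≤ _ := by
        rw [ENNReal.ofReal_mul (p := A * 10 ^ n) (by positivity), mul_assoc]
        gcongr
        exact ofReal_pow_mul_lastC_rpow_le_lintegral hn hs (by positivity) (by linarith)

theorem exists_setLIntegral_halfBall_le (hn : 1 ≤ n) {s : ℝ} (hs : -1 < s) (hs0 : s ≤ 0) :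
    ∃ W : ℝ, 0 < W ∧ ∀ {g : E n → ℝ≥0∞} {θ A : ℝ}, 0 < θ → θ ≤ 1 → 0 ≤ A →
      (∀ y ∈ halfBall n hn (3 / 2), ∫⁻ x in Metric.ball y (θ * lastC n hn y), g x ≤
        ENNReal.ofReal (A * ((θ * lastC n hn y) ^ n * lastC n hn y ^ s))) →
      ∫⁻ x in halfBall n hn (3 / 2), g x ≤ ENNReal.ofReal (A * W) := by
  have hω := unitBallNorm_pos n
  have hfin := (integrableOn_lastC_rpow hn hs zero_le_two).lintegral_lt_top
  set I := ∫⁻ x in halfBall n hn 2, ENNReal.ofReal (lastC n hn x ^ s)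
  refine ⟨10 ^ n * ((1 / unitBallNorm n) ^ n / 2 ^ s) * (I.toReal + 1), by positivity,
    fun {g θ A} hθ hθ1 hA hlocal => ?_⟩
  calc ∫⁻ x in halfBall n hn (3 / 2), g x
      ≤ ENNReal.ofReal (A * 10 ^ n * ((1 / unitBallNorm n) ^ n / 2 ^ s)) * I :=
        setLIntegral_halfBall_le_mul hn hs0 hθ hθ1 hA hlocal
    _ = ENNReal.ofReal (A * 10 ^ n * ((1 / unitBallNorm n) ^ n / 2 ^ s) * I.toReal) := by
        rw [ENNReal.ofReal_mul' ENNReal.toReal_nonneg, ENNReal.ofReal_toReal hfin.ne]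
    _ ≤ _ := by
        rw [mul_assoc, mul_assoc A, mul_assoc (10 ^ n)]
        gcongr
        linarith

/-! ### The quantitative strong maximum principle -/

theorem div_pow_div_sq_rpow_le {J ρ ε : ℝ} {M : ℕ} (hJ : 0 ≤ J) (hρ : 0 < ρ) (hρ1 : ρ ≤ 1)
    (hε : ((M : ℝ) + 2) * ε ≤ 1 / 2) :
    (J / ρ ^ M / ρ ^ 2) ^ ε ≤ J ^ ε * ρ ^ (-(1 / 2) : ℝ) := by
  have hpow : J / ρ ^ M / ρ ^ 2 = J * ρ ^ (-((M : ℝ) + 2)) := by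
    rw [div_div, ← pow_add, Real.rpow_neg hρ.le, div_eq_mul_inv, ← Real.rpow_natCast]
    push_cast
    rfl
  rw [hpow, Real.mul_rpow hJ (by positivity), ← Real.rpow_mul hρ.le]
  gcongr _ * ?_
  exact Real.rpow_le_rpow_of_exponent_ge hρ hρ1 (by linarith)

namespace IsHalfBallSupersolution

variable {d0 α : ℝ}

theorem exists_mem_ball_le_div_pow (hn : 1 ≤ n) (h0 : 0 < lam) (hL : lam ≤ Lam) (hα : 0 < α)
    (hd0 : 0 < d0) (Kb : ℝ) :
    ∃ (ρ₁ c C : ℝ) (M : ℕ), 0 < ρ₁ ∧ 0 < c ∧ 0 ≤ C ∧ ∀ {N I : ℝ} {b f u : E n → ℝ},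
      IsHalfBallSupersolution hn lam Lam d0 α Kb N b f u →
      (∃ x ∈ halfBall n hn 1, u x < I * lastC n hn x) → ∀ {y : E n} {ρ J : ℝ}, 0 < ρ →
      ρ ≤ ρ₁ → Metric.ball y (4 * ρ) ⊆ halfBall n hn 2 → 0 ≤ J → I + C * N ≤ c * J →
      ∃ z ∈ Metric.ball y ρ, u z ≤ J / ρ ^ M := by
  obtain ⟨ρ₁, c, C, M, hρ₁, hc, hC, hlower⟩ := exists_mul_lastC_le hn h0 hL hα hd0 Kb
  refine ⟨ρ₁, c, C, M, hρ₁, hc, hC, ?_⟩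
  rintro N I b f u hu ⟨x, hx, hux⟩ y ρ J hρ hρ' hball hJ hIJ
  by_contra! hcon
  have hux' := hlower hu hρ hρ' (by positivity : 0 ≤ J / ρ ^ M) hball
    (fun z hz => (hcon z hz).le) x hx
  rw [mul_assoc, mul_div_cancel₀ _ (by positivity)] at hux'
  exact (hux'.trans_lt hux).not_ge (mul_le_mul_of_nonneg_right (by linarith) hx.2.le)

theorem exists_setLIntegral_ball_rpow_neg_rhs_le_of_exists_le (hn : 1 ≤ n) (h0 : 0 < lam)
    (hL : lam ≤ Lam) (hα : 0 < α) (d0 Kb : ℝ) :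
    ∃ ε₀ δ ρ₀ : ℝ, 0 < ε₀ ∧ 0 < δ ∧ 0 < ρ₀ ∧ ∀ ε, 0 < ε → ε ≤ ε₀ → ∃ A, 0 < A ∧
      ∀ {N : ℝ} {b f u : E n → ℝ}, IsHalfBallSupersolution hn lam Lam d0 α Kb N b f u →
      ∀ {y : E n} {ρ T : ℝ}, 0 < ρ → ρ ≤ ρ₀ → 0 < T → Metric.ball y (5 * ρ) ⊆ halfBall n hn 2 →
      N ≤ δ * (T / ρ) → (∃ z ∈ Metric.ball y ρ, u z ≤ T) →
      ∫⁻ x in Metric.ball y ρ, ENNReal.ofReal (-f x) ^ ε ≤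
        ENNReal.ofReal (A * ((T / ρ ^ 2) ^ ε * ρ ^ n)) := by
  obtain ⟨ε₀, δ, hε₀, hδ, hlocal⟩ :=
    exists_lintegral_rpow_neg_rhs_le (show n ≠ 0 by omega) h0 hL
  obtain ⟨ρ₀, hρ₀, hsmall⟩ := exists_mul_rpow_le hα hδ Kb
  refine ⟨ε₀, δ, ρ₀ / 5, hε₀, hδ, by positivity, fun ε hε hεε₀ => ?_⟩
  obtain ⟨A, hA, hlocal⟩ := hlocal ε hε hεε₀
  exact ⟨A, hA, fun {_ _ _ _} hu {y ρ T} hρ hρ' hT hball hN hex =>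
    hlocal hρ hT (hu.isSupersolution.mono Metric.isOpen_ball hball)
      ((hu.dataBound hball (by positivity) subset_rfl).mono hN
        (hsmall _ (by positivity) (by linarith))) hex⟩

theorem exists_setLIntegral_ball_rpow_neg_rhs_le (hn : 1 ≤ n) (h0 : 0 < lam) (hL : lam ≤ Lam)
    (hα : 0 < α) (hd0 : 0 < d0) (Kb : ℝ) :
    ∃ ε ρ₀ c D A : ℝ, 0 < ε ∧ 0 < ρ₀ ∧ 0 < c ∧ 0 < D ∧ 0 < A ∧
      ∀ {N I : ℝ} {b f u : E n → ℝ}, IsHalfBallSupersolution hn lam Lam d0 α Kb N b f u →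
      0 < I → (∃ x ∈ halfBall n hn 1, u x < I * lastC n hn x) → ∀ {y : E n} {ρ : ℝ}, 0 < ρ →
      ρ ≤ ρ₀ → Metric.ball y (5 * ρ) ⊆ halfBall n hn 2 →
      ∫⁻ x in Metric.ball y ρ, ENNReal.ofReal (-f x) ^ ε ≤
        ENNReal.ofReal (A * (((I + D * N) / c) ^ ε * ρ ^ (-(1 / 2) : ℝ) * ρ ^ n)) := by
  obtain ⟨ρ₁, c, C, M, hρ₁, hc, hC, hpoint⟩ := exists_mem_ball_le_div_pow hn h0 hL hα hd0 Kb
  obtain ⟨ε₀, δ, ρ₂, hε₀, hδ, hρ₂, hlocal⟩ :=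
    exists_setLIntegral_ball_rpow_neg_rhs_le_of_exists_le hn h0 hL hα d0 Kb
  obtain ⟨ε, hε, hε'⟩ : ∃ ε > 0, ε ≤ min ε₀ (1 / 2 / ((M : ℝ) + 2)) := ⟨_, by positivity, le_rfl⟩
  obtain ⟨hεε₀, hεM⟩ := le_min_iff.1 hε'
  obtain ⟨A, hA, hlocal⟩ := hlocal ε hε hεε₀
  refine ⟨ε, min 1 (min ρ₁ ρ₂), c, C + c / δ, A, hε, by positivity, hc, by positivity, hA,
    fun {N I b f u} hu hI hx {y ρ} hρ hρ' hball => ?_⟩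
  obtain ⟨hρ1, hρρ₁, hρρ₂⟩ := by simpa only [le_min_iff] using hρ'
  have hN := hu.nonneg_rhsBound
  obtain ⟨J, hJ, hJpos⟩ : ∃ J, J = (I + (C + c / δ) * N) / c ∧ 0 < J := ⟨_, rfl, by positivity⟩
  have hcJ : c * J = I + C * N + c * (N / δ) := by
    rw [hJ]
    field_simp
    ring
  have hNJ : N / δ ≤ J := le_of_mul_le_mul_left (by linarith [mul_nonneg hC hN]) hc
  have hNT : N ≤ δ * (J / ρ ^ M / ρ) := by
    rw [← div_le_iff₀' hδ, div_div, ← pow_succ]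
    exact hNJ.trans (le_div_self hJpos.le (by positivity) (pow_le_one₀ hρ.le hρ1))
  obtain ⟨z, hz, huz⟩ := hpoint hu hx hρ hρρ₁ ((Metric.ball_subset_ball (by linarith)).trans hball)
    hJpos.le (by linarith [mul_nonneg hc.le (div_nonneg hN hδ.le)])
  rw [← hJ]
  refine (hlocal hu hρ hρρ₂ (by positivity) hball hNT ⟨z, hz, huz⟩).trans ?_
  gcongr
  exact div_pow_div_sq_rpow_le hJpos.le hρ hρ1 ((le_div_iff₀' (by positivity)).1 hεM)

theorem exists_setLIntegral_halfBall_rpow_neg_rhs_le (hn : 1 ≤ n) (h0 : 0 < lam) (hL : lam ≤ Lam)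
    (hα : 0 < α) (hd0 : 0 < d0) (Kb : ℝ) :
    ∃ ε c D A : ℝ, 0 < ε ∧ 0 < c ∧ 0 < D ∧ 0 < A ∧ ∀ {N I : ℝ} {b f u : E n → ℝ},
      IsHalfBallSupersolution hn lam Lam d0 α Kb N b f u → 0 < I →
      (∃ x ∈ halfBall n hn 1, u x < I * lastC n hn x) →
      ∫⁻ x in halfBall n hn (3 / 2), ENNReal.ofReal (-f x) ^ ε ≤
        ENNReal.ofReal (A * ((I + D * N) / c) ^ ε) := by
  obtain ⟨ε, ρ₀, c, D, A, hε, hρ₀, hc, hD, hA, hlocal⟩ :=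
    exists_setLIntegral_ball_rpow_neg_rhs_le hn h0 hL hα hd0 Kb
  obtain ⟨W, hW, hsum⟩ := exists_setLIntegral_halfBall_le hn (s := -(1 / 2)) (by norm_num)
    (by norm_num)
  obtain ⟨θ, hθ, hθ'⟩ : ∃ θ > 0, θ ≤ min (1 / 20) (ρ₀ / 2) := ⟨_, by positivity, le_rfl⟩
  obtain ⟨hθ20, hθρ₀⟩ := le_min_iff.1 hθ'
  refine ⟨ε, c, D, A * θ ^ (-(1 / 2) : ℝ) * W, hε, hc, hD, by positivity,
    fun {N I b f u} hu hI hx => ?_⟩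
  have hJ : 0 < (I + D * N) / c := by
    have := hu.nonneg_rhsBound
    positivity
  refine (hsum (A := A * θ ^ (-(1 / 2) : ℝ) * ((I + D * N) / c) ^ ε) hθ (by linarith)
    (by positivity) fun y hy => ?_).trans_eq (congrArg _ (by ring))
  have hy0 := hy.2
  have hyn := ((le_abs_self _).trans (abs_lastC_le hn y)).trans_lt hy.1
  have hball : Metric.ball y (5 * (θ * lastC n hn y)) ⊆ halfBall n hn 2 := by
    rw [← mul_assoc]
    exact Metric.ball_subset_closedBall.trans
      (closedBall_mul_lastC_subset_halfBall hn (by linarith) hy)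
  refine (hlocal hu hI hx (by positivity) (by nlinarith) hball).trans_eq (congrArg _ ?_)
  rw [Real.mul_rpow hθ.le hy0.le]
  ring

theorem exists_rpow_lintegral_neg_rhs_le (hn : 1 ≤ n) (h0 : 0 < lam) (hL : lam ≤ Lam)
    (hα : 0 < α) (hd0 : 0 < d0) (Kb : ℝ) :
    ∃ ε c D : ℝ, 0 < ε ∧ 0 < c ∧ 0 < D ∧ ∀ {N I : ℝ} {b f u : E n → ℝ},
      IsHalfBallSupersolution hn lam Lam d0 α Kb N b f u → 0 < I →
      (∃ x ∈ halfBall n hn 1, u x < I * lastC n hn x) →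
      ENNReal.ofReal c *
        (∫⁻ x in halfBall n hn (3 / 2), ENNReal.ofReal (-f x) ^ ε) ^ (1 / ε) ≤
          ENNReal.ofReal (I + D * N) := by
  obtain ⟨ε, c, D, A, hε, hc, hD, hA, hintegral⟩ :=
    exists_setLIntegral_halfBall_rpow_neg_rhs_le hn h0 hL hα hd0 Kb
  refine ⟨ε, c / A ^ (1 / ε), D, hε, by positivity, hD, fun {N I b f u} hu hI hx => ?_⟩
  have hJ : 0 < (I + D * N) / c := by
    have := hu.nonneg_rhsBound
    positivity
  calc ENNReal.ofReal (c / A ^ (1 / ε)) *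
        (∫⁻ x in halfBall n hn (3 / 2), ENNReal.ofReal (-f x) ^ ε) ^ (1 / ε)
      ≤ ENNReal.ofReal (c / A ^ (1 / ε)) *
          ENNReal.ofReal (A * ((I + D * N) / c) ^ ε) ^ (1 / ε) := by
        gcongr
        exact hintegral hu hI hx
    _ = ENNReal.ofReal (c / A ^ (1 / ε) * (A ^ (1 / ε) * ((I + D * N) / c))) := by
        rw [ENNReal.ofReal_rpow_of_pos (by positivity), ← ENNReal.ofReal_mul (by positivity),
          Real.mul_rpow (x := A) (by positivity) (by positivity), ← Real.rpow_mul hJ.le,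
          mul_one_div_cancel hε.ne', Real.rpow_one]
    _ = ENNReal.ofReal (I + D * N) := by
        congr 1
        field_simp

theorem exists_rpow_lintegral_neg_rhs_le_iInf (hn : 1 ≤ n) (h0 : 0 < lam) (hL : lam ≤ Lam)
    (hα : 0 < α) (hd0 : 0 < d0) (Kb : ℝ) :
    ∃ ε c D : ℝ, 0 < ε ∧ 0 < c ∧ 0 < D ∧ ∀ {N : ℝ} {b f u : E n → ℝ},
      IsHalfBallSupersolution hn lam Lam d0 α Kb N b f u →
      ENNReal.ofReal c *
        (∫⁻ x in halfBall n hn (3 / 2), ENNReal.ofReal (-f x) ^ ε) ^ (1 / ε) ≤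
          ENNReal.ofReal (⨅ x : halfBall n hn 1, u x.1 / lastC n hn x.1) +
            ENNReal.ofReal (D * N) := by
  obtain ⟨ε, c, D, hε, hc, hD, hbound⟩ := exists_rpow_lintegral_neg_rhs_le hn h0 hL hα hd0 Kb
  refine ⟨ε, c, D, hε, hc, hD, fun {N b f u} hu => ENNReal.le_of_forall_pos_le_add fun η hη _ => ?_⟩
  have hη : (0 : ℝ) < η := hη
  have : Nonempty (halfBall n hn 1) := (nonempty_halfBall hn one_pos).to_subtype
  set m := ⨅ x : halfBall n hn 1, u x.1 / lastC n hn x.1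
  have hm : 0 ≤ m := Real.iInf_nonneg fun x => div_nonneg
    (hu.isSupersolution.nonneg x.1 ⟨x.2.1.trans one_lt_two, x.2.2⟩) x.2.2.le
  obtain ⟨x, hx⟩ := exists_lt_of_ciInf_lt (lt_add_of_pos_right m hη)
  calc _ ≤ ENNReal.ofReal (m + η + D * N) :=
        hbound hu (by positivity) ⟨x.1, x.2, (div_lt_iff₀ x.2.2).1 hx⟩
    _ = ENNReal.ofReal m + ENNReal.ofReal (D * N) + η := by
        rw [ENNReal.ofReal_add (by positivity) (mul_nonneg hD.le hu.nonneg_rhsBound),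
          ENNReal.ofReal_add hm hη.le, ENNReal.ofReal_coe_nnreal, add_right_comm]

end IsHalfBallSupersolution

end Pucci

open Pucci in
theorem boundary_quantitative_strong_maximum_principle_general
    (n : ℕ) (hn : 1 ≤ n) (lam Lam : ℝ) (hlam : 0 < lam) (hLam : lam ≤ Lam)
    (p q d0 K : ℝ) (hq : (n : ℝ) < q) (hp : (n : ℝ) ≤ p) (hd0 : 0 < d0) (hK : 0 ≤ K) :
    ∃ ε c C : ℝ, 0 < ε ∧ 0 < c ∧ 0 < C ∧
      ∀ b f u : EuclideanSpace ℝ (Fin n) → ℝ,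
        ContinuousOn b (halfBall n hn 2) →
        ContinuousOn f (halfBall n hn 2) →
        (∀ x ∈ halfBall n hn 2, 0 ≤ b x) →
        LpNormE n q b (halfBall n hn 2) ≤ ENNReal.ofReal K →
        ContDiffOn ℝ 2 u (halfBall n hn 2) →
        (∀ x ∈ halfBall n hn 2, 0 ≤ u x) →
        (∀ x ∈ halfBall n hn 2,
          pucciMinus n lam Lam (hess n u x) - b x * gradNorm n u x ≤ f x) →
        ENNReal.ofReal c *
            (∫⁻ x in halfBall n hn (3 / 2), ENNReal.ofReal ((max (-f x) 0) ^ ε)) ^ (1 / ε)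
          ≤ ENNReal.ofReal (⨅ x : halfBall n hn 1, u x.1 / lastC n hn x.1)
            + ENNReal.ofReal C * LpqNormHB n hn p q d0 2 (fun x => max (f x) 0) := by
  have hω := unitBallNorm_pos n
  have hα : 0 < 1 - (n : ℝ) / q :=
    sub_pos.2 ((div_lt_one ((Nat.cast_nonneg n).trans_lt hq)).2 hq)
  obtain ⟨ε, c, D, hε, hc, hD, hbound⟩ :=
    IsHalfBallSupersolution.exists_rpow_lintegral_neg_rhs_le_iInf hn hlam hLam hα hd0
      (K * unitBallNorm n ^ (1 - n / q))
  refine ⟨ε, c, D * (unitBallNorm n ^ (1 - n / q) + unitBallNorm n ^ (1 - n / p) * 2 ^ (1 - n / p)),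
    hε, hc, by positivity, fun b f u hb hf hb0 hbK hu hu0 hle => ?_⟩
  change _ ≤ _ + _ * LpqNormHB n hn p q d0 2 f⁺
  by_cases hfin : LpqNormHB n hn p q d0 2 f⁺ = ∞
  · rw [hfin, ENNReal.mul_top (ENNReal.ofReal_pos.2 (by positivity)).ne', add_top]
    exact le_top
  have hsol : IsNonnegSupersolution lam Lam b f u (halfBall n hn 2) :=
    ⟨isOpen_halfBall hn 2, hb, hf, hb0, hu, hu0, hle⟩
  have h := hbound (hsol.isHalfBallSupersolution hq.le hp hK hbK hfin)
  rw [← mul_assoc, ENNReal.ofReal_mul (by positivity), ENNReal.ofReal_toReal hfin] at h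
  simpa only [← ENNReal.ofReal_rpow_of_nonneg (le_max_right _ (0 : ℝ)) hε.le, ENNReal.ofReal_max,
    ENNReal.ofReal_zero, max_zero] using h

/-- Boundary quantitative strong maximum principle in half-balls. -/
theorem boundary_quantitative_strong_maximum_principle
    (n : ℕ) (hn : 2 ≤ n) (lam Lam : ℝ) (hlam : 0 < lam) (hLam : lam ≤ Lam)
    (p q d0 K : ℝ) (hq : (n : ℝ) < q) (hp : (n : ℝ) ≤ p) (hpq : p ≤ q)
    (hd0 : 0 < d0) (hd0' : d0 ≤ 1 / 4) (hK : 0 < K) :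
    ∃ ε c C : ℝ, 0 < ε ∧ 0 < c ∧ 0 < C ∧
      ∀ b f u : EuclideanSpace ℝ (Fin n) → ℝ,
        ContinuousOn b (halfBall n (by omega) 2) →
        ContinuousOn f (halfBall n (by omega) 2) →
        (∀ x ∈ halfBall n (by omega) 2, 0 ≤ b x) →
        LpNormE n q b (halfBall n (by omega) 2) ≤ ENNReal.ofReal K →
        ContDiffOn ℝ 2 u (halfBall n (by omega) 2) →
        (∀ x ∈ halfBall n (by omega) 2, 0 ≤ u x) →
        (∀ x ∈ halfBall n (by omega) 2,
          pucciMinus n lam Lam (hess n u x) - b x * gradNorm n u x ≤ f x) →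
        ENNReal.ofReal c *
            (∫⁻ x in halfBall n (by omega) (3 / 2),
              ENNReal.ofReal ((max (-f x) 0) ^ ε)) ^ (1 / ε)
          ≤ ENNReal.ofReal (⨅ x : halfBall n (by omega : 1 ≤ n) 1, u x.1 / lastC n (by omega) x.1)
            + ENNReal.ofReal C * LpqNormHB n (by omega) p q d0 2 (fun x => max (f x) 0) :=
  boundary_quantitative_strong_maximum_principle_general n (by omega) lam Lam hlam hLam p q d0 K hq
    hp hd0 hK.le
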